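/- arXiv:2107.06198 — 4 statements merged into one kernel-verified Lean document; each statement's English description precedes it below -/
import Mathlib

section
/- Let G be a finite group, H a normal subgroup of G, and 1 < c ≤ 2 a real constant. If E(H) ≤ c|H| − 1, then E(G) ≤ c|G| − 1, where E(·) is the smallest t such that every sequence of t elements contains a product-one subsequence of length equal to the group order. -/
/-- A multiset `T` over a group is a product-one sequence if its terms can be
ordered so that their product is the identity. -/
def IsProdOne {G : Type*} [Group G] (T : Multiset G) : Prop :=
  ∃ l : List G, (l : Multiset G) = T ∧ l.prod = 1

/-- `S` has a product-one subsequence of length `n`. -/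
def HasProdOneSubseqOfLen {G : Type*} [Group G] (S : Multiset G) (n : ℕ) : Prop :=
  ∃ T ≤ S, Multiset.card T = n ∧ IsProdOne T

/-- `EGZconst G` is the smallest `t` such that every sequence of `t` elements
of `G` has a product-one subsequence of length `|G|`. -/
noncomputable def EGZconst (G : Type*) [Group G] : ℕ :=
  sInf {t | ∀ S : Multiset G, Multiset.card S = t →
    HasProdOneSubseqOfLen S (Nat.card G)}

section Olson

variable {G : Type*} [Group G]

/-- every element of `X` is a product of `i` terms of `T` -/
def Rch (i : ℕ) (T : Multiset G) (X : Finset G) : Prop :=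
  ∀ x ∈ X, ∃ l : List G, (l : Multiset G) ≤ T ∧ l.length = i ∧ l.prod = x

/-- right translate -/
noncomputable def trR (X : Finset G) (u : G) : Finset G :=
  X.map ⟨fun x => x * u, mul_left_injective u⟩

/-- left translate -/
noncomputable def trL (u : G) (X : Finset G) : Finset G :=
  X.map ⟨fun x => u * x, mul_right_injective u⟩

lemma mem_trR {X : Finset G} {u y : G} : y ∈ trR X u ↔ y * u⁻¹ ∈ X := by
  simp only [trR, Finset.mem_map, Function.Embedding.coeFn_mk]
  constructor
  · rintro ⟨x, hx, rfl⟩; simpa using hx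
  · intro h; exact ⟨_, h, by simp⟩

lemma mem_trL {X : Finset G} {u y : G} : y ∈ trL u X ↔ u⁻¹ * y ∈ X := by
  simp only [trL, Finset.mem_map, Function.Embedding.coeFn_mk]
  constructor
  · rintro ⟨x, hx, rfl⟩; simpa using hx
  · intro h; exact ⟨_, h, by simp⟩

lemma card_trR (X : Finset G) (u : G) : (trR X u).card = X.card := Finset.card_map _
lemma card_trL (X : Finset G) (u : G) : (trL u X).card = X.card := Finset.card_map _

lemma rch_zero : Rch 0 (0 : Multiset G) {1} := by
  intro x hx
  rw [Finset.mem_singleton] at hx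
  exact ⟨[], by simp, rfl, by simp [hx]⟩

lemma rch_step {i : ℕ} {T : Multiset G} {X W : Finset G} (h : Rch i T X) (u v : G)
    (hW : ∀ y ∈ W, y ∈ trR X u ∨ y ∈ trR X v ∨ y ∈ trL u X ∨ y ∈ trL v X) :
    Rch (i + 1) (u ::ₘ v ::ₘ T) W := by
  have R : ∀ y u, y ∈ trR X u → ∃ l : List G, (l : Multiset G) ≤ u ::ₘ T ∧
      l.length = i + 1 ∧ l.prod = y := by
    intro y u hy
    obtain ⟨l, h1, h2, h3⟩ := h _ (mem_trR.1 hy)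
    refine ⟨l ++ [u], ?_, by simp [h2], by simp [h3]⟩
    rw [← Multiset.coe_add, add_comm]
    exact Multiset.cons_le_cons u h1
  have L : ∀ y u, y ∈ trL u X → ∃ l : List G, (l : Multiset G) ≤ u ::ₘ T ∧
      l.length = i + 1 ∧ l.prod = y := by
    intro y u hy
    obtain ⟨l, h1, h2, h3⟩ := h _ (mem_trL.1 hy)
    exact ⟨u :: l, Multiset.cons_le_cons u h1, by simp [h2], by simp [h3]⟩
  have e1 : u ::ₘ T ≤ u ::ₘ v ::ₘ T := Multiset.cons_le_cons u (Multiset.le_cons_self _ _)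
  have e2 : v ::ₘ T ≤ u ::ₘ v ::ₘ T := Multiset.le_cons_self _ _
  intro y hy
  rcases hW y hy with h | h | h | h
  · obtain ⟨l, h1, h2⟩ := R y u h; exact ⟨l, h1.trans e1, h2⟩
  · obtain ⟨l, h1, h2⟩ := R y v h; exact ⟨l, h1.trans e2, h2⟩
  · obtain ⟨l, h1, h2⟩ := L y u h; exact ⟨l, h1.trans e1, h2⟩
  · obtain ⟨l, h1, h2⟩ := L y v h; exact ⟨l, h1.trans e2, h2⟩

/-- `d` normalizes `N`. -/
def Nrm (N : Subgroup G) (d : G) : Prop := ∀ g, g ∈ N ↔ d * g * d⁻¹ ∈ N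

/-- all terms of `R` lie in the coset `N d` -/
def InC (N : Subgroup G) (d : G) (R : Multiset G) : Prop := ∀ x ∈ R, x * d⁻¹ ∈ N

lemma Nrm.pow {N : Subgroup G} {d : G} (h : Nrm N d) (i : ℕ) : Nrm N (d ^ i) := by
  induction i with
  | zero => intro g; simp
  | succ i ih =>
    intro g
    rw [h g, ih]
    have : d ^ i * (d * g * d⁻¹) * (d ^ i)⁻¹ = d ^ (i + 1) * g * (d ^ (i + 1))⁻¹ := by
      rw [pow_succ]; group
    rw [this]

lemma list_coset {N : Subgroup G} {d : G} (hd : Nrm N d) (l : List G)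
    (h : ∀ x ∈ l, x * d⁻¹ ∈ N) : l.prod * (d ^ l.length)⁻¹ ∈ N := by
  induction l with
  | nil => simp
  | cons x l ih =>
    have h1 := h x (by simp)
    have h2 := (hd _).1 (ih (fun y hy => h y (by simp [hy])))
    have := N.mul_mem h1 h2
    convert this using 1
    simp only [List.prod_cons, List.length_cons, pow_succ']
    group

lemma rch_coset {N : Subgroup G} {d : G} (hd : Nrm N d) {i T X} (h : Rch i T X)
    (hT : InC N d T) : ∀ x ∈ X, x * (d ^ i)⁻¹ ∈ N := by
  intro x hx
  obtain ⟨l, h1, rfl, rfl⟩ := h x hx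
  exact list_coset hd l (fun y hy => hT y (Multiset.mem_of_le h1 (by simpa using hy)))

/-- coset `N g` as a finset -/
lemma exists_coset [Finite G] (N : Subgroup G) (g : G) : ∃ C : Finset G, (∀ x, x ∈ C ↔ x * g⁻¹ ∈ N) ∧
    C.card = Nat.card N := by
  classical
  haveI := Fintype.ofFinite G
  haveI : Fintype N := Fintype.ofFinite N
  refine ⟨trR (N : Set G).toFinset g, ?_, ?_⟩
  · intro x; rw [mem_trR]; simp
  · rw [card_trR, Set.toFinset_card, Nat.card_eq_fintype_card]
    rfl

lemma card_le_coset [Finite G] {N : Subgroup G} {g : G} {X : Finset G}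
    (h : ∀ x ∈ X, x * g⁻¹ ∈ N) : X.card ≤ Nat.card N := by
  obtain ⟨C, h1, h2⟩ := exists_coset N g
  rw [← h2]
  exact Finset.card_le_card (fun x hx => (h1 x).2 (h x hx))

lemma full_coset [Finite G] {N : Subgroup G} {g : G} {X : Finset G}
    (h : ∀ x ∈ X, x * g⁻¹ ∈ N) (hc : X.card = Nat.card N) : ∀ x, x * g⁻¹ ∈ N → x ∈ X := by
  obtain ⟨C, h1, h2⟩ := exists_coset N g
  have : X = C := Finset.eq_of_subset_of_card_le (fun x hx => (h1 x).2 (h x hx)) (by omega)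
  intro x hx
  rw [this]; exact (h1 x).2 hx

/-- stabilizer lemma -/
lemma stab_lemma [Finite G] {N : Subgroup G} {g : G} (hg : Nrm N g) {X : Finset G} (hX : X.Nonempty)
    (h : ∀ x ∈ X, x * g⁻¹ ∈ N) (hlt : X.card < Nat.card N) {a : G} (ha : trL a X = trR X a) :
    ∃ N' : Subgroup G, N' ≤ N ∧ Nrm N' a ∧ Nat.card N' + X.card ≤ Nat.card N ∧
      ∀ w, trR X w = trR X a → w * a⁻¹ ∈ N' := by
  classical
  let N' : Subgroup G :=
    { carrier := {t | ∀ x, x ∈ X ↔ x * t ∈ X}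
      mul_mem' := by
        intro s t hs ht x
        rw [hs x, ht (x * s), mul_assoc]
      one_mem' := by intro x; simp
      inv_mem' := by
        intro t ht x
        rw [ht (x * t⁻¹)]; simp }
  have mem : ∀ t, t ∈ N' ↔ ∀ x, x ∈ X ↔ x * t ∈ X := fun t => Iff.rfl
  have conj : ∀ x, x ∈ X ↔ a * x * a⁻¹ ∈ X := by
    intro x
    have := Finset.ext_iff.1 ha (a * x)
    rw [mem_trL, mem_trR] at this
    simpa using this
  have inN : ∀ t, t ∈ N → ∀ y, y * g⁻¹ ∈ N → (y * t) * g⁻¹ ∈ N := by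
    intro t ht y hy
    have := N.mul_mem hy ((hg t).1 ht)
    convert this using 1
    group
  have hle : N' ≤ N := by
    intro t ht
    obtain ⟨x, hx⟩ := hX
    have h1 := h _ hx
    have h2 := h _ ((((mem t).1 ht) x).1 hx)
    rw [hg]
    have := N.mul_mem (N.inv_mem h1) h2
    convert this using 1
    group
  refine ⟨N', hle, ?_, ?_, ?_⟩
  · intro t
    rw [mem, mem]
    constructor
    · intro ht x
      rw [conj (x * _), ← not_iff_not]
      have e : x = a * (a⁻¹ * x * a) * a⁻¹ := by group
      rw [← conj]
      conv_lhs => rw [e, ← conj, ht]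
      rw [conj (a⁻¹ * x * a * t)]
      have : a * (a⁻¹ * x * a * t) * a⁻¹ = x * (a * t * a⁻¹) := by group
      rw [this]
    · intro ht x
      rw [conj x, ht, conj (x * t)]
      have : a * x * a⁻¹ * (a * t * a⁻¹) = a * (x * t) * a⁻¹ := by group
      rw [this]
  · obtain ⟨C, h1, h2⟩ := exists_coset N g
    have hsub : X ⊆ C := fun x hx => (h1 x).2 (h x hx)
    obtain ⟨y, hyC, hyX⟩ : ∃ y ∈ C, y ∉ X := by
      by_contra hcon
      push Not at hcon
      have := Finset.card_le_card hcon
      omega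
    obtain ⟨D, d1, d2⟩ := exists_coset N' 1
    have hdisj : Disjoint (trL y D) X := by
      rw [Finset.disjoint_left]
      intro z hz hzX
      rw [mem_trL, d1] at hz
      apply hyX
      have := (((mem _).1 hz) y)
      rw [this]
      simpa using hzX
    have hsub2 : trL y D ⊆ C := by
      intro z hz
      rw [mem_trL, d1] at hz
      rw [h1]
      have := inN _ (hle hz) y ((h1 y).1 hyC)
      simpa using this
    have := Finset.card_le_card (Finset.union_subset hsub2 hsub)
    rw [Finset.card_union_of_disjoint hdisj, card_trL] at this
    omega
  · intro w hw
    rw [mem]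
    intro x
    have := Finset.ext_iff.1 hw (x * w)
    rw [mem_trR, mem_trR] at this
    simpa [mul_assoc] using this

/-- stuck or growth -/
lemma stuck_or_grow [DecidableEq G] (X : Finset G) (R : Multiset G) (hR : 2 ≤ R.card) {a : G} (ha : a ∈ R) :
    (∃ w R', R = a ::ₘ w ::ₘ R' ∧ ∃ W : Finset G, X.card < W.card ∧
      ∀ y ∈ W, y ∈ trR X a ∨ y ∈ trR X w ∨ y ∈ trL a X ∨ y ∈ trL w X) ∨
    (trL a X = trR X a ∧ ∀ w ∈ R, trR X w = trR X a) := by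
  obtain ⟨R1, rfl⟩ := Multiset.exists_cons_of_mem ha
  by_cases hg : ∃ w ∈ R1, X.card < (trR X a ∪ (trR X w ∪ (trL a X ∪ trL w X))).card
  · obtain ⟨w, hw, hlt⟩ := hg
    obtain ⟨R', rfl⟩ := Multiset.exists_cons_of_mem hw
    refine Or.inl ⟨w, R', rfl, _, hlt, ?_⟩
    intro y hy
    simpa only [Finset.mem_union] using hy
  · right
    push Not at hg
    have key : ∀ w ∈ R1, trR X w = trR X a ∧ trL a X = trR X a := by
      intro w hw
      have h1 := hg w hw
      set W := (trR X a ∪ (trR X w ∪ (trL a X ∪ trL w X))) with hWdef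
      have e1 : trR X a = W := Finset.eq_of_subset_of_card_le
        (by intro y hy; simp [hWdef, hy]) (by rw [card_trR]; exact h1)
      have e2 : trR X w = W := Finset.eq_of_subset_of_card_le
        (by intro y hy; simp [hWdef, hy]) (by rw [card_trR]; exact h1)
      have e3 : trL a X = W := Finset.eq_of_subset_of_card_le
        (by intro y hy; simp [hWdef, hy]) (by rw [card_trL]; exact h1)
      exact ⟨by rw [e1, e2], by rw [e1, e3]⟩
    obtain ⟨w0, hw0⟩ : ∃ w, w ∈ R1 := by
      apply Multiset.exists_mem_of_ne_zero
      rintro rfl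
      simp at hR
    refine ⟨(key w0 hw0).2, ?_⟩
    intro w hw
    rcases Multiset.mem_cons.1 hw with rfl | hw
    · rfl
    · exact (key w hw).1

/-- majority condition -/
def Maj [DecidableEq G] (R : Multiset G) (E : ℕ) : Prop := ∀ x, 2 * R.count x ≤ R.card + E

lemma Maj.single [DecidableEq G] {R : Multiset G} {E : ℕ} (h : Maj R E) {d : G}
    (hN : InC ⊥ d R) : R.card ≤ E := by
  have : R.count d = R.card := by
    rw [Multiset.count_eq_card]
    intro x hx
    have := hN x hx
    rw [Subgroup.mem_bot, mul_inv_eq_one] at this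
    exact this.symm
  have := h d
  omega

lemma maj_step [DecidableEq G] {R : Multiset G} {E : ℕ} (hE : 2 ≤ E) {a w : G} (h : Maj (a ::ₘ w ::ₘ R) E)
    (ha : ∀ x, (a ::ₘ w ::ₘ R).card < 2 * (a ::ₘ w ::ₘ R).count x → x = a) : Maj R E := by
  intro x
  have h1 := h x
  have h2 := ha x
  by_cases hx : x = a
  · subst hx
    simp only [Multiset.count_cons_self, Multiset.card_cons] at h1
    rw [Multiset.count_cons] at h1
    omega
  · have h3 : ¬ _ := fun hh => hx (h2 hh)
    have := Multiset.count_le_count_cons x w R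
    have := Multiset.count_le_count_cons x a (w ::ₘ R)
    simp only [Multiset.card_cons] at h3
    omega

lemma exists_maj [DecidableEq G] (R : Multiset G) (hR : 0 < R.card) :
    ∃ a ∈ R, ∀ x, R.card < 2 * R.count x → x = a := by
  by_cases h : ∃ a, R.card < 2 * R.count a
  · obtain ⟨a, ha⟩ := h
    have ham : a ∈ R := by
      rw [← Multiset.count_pos]; omega
    refine ⟨a, ham, ?_⟩
    intro x hx
    by_contra hne
    have h1 : R.count a + R.count x ≤ R.card := by
      have : Multiset.replicate (R.count a) a + Multiset.replicate (R.count x) x ≤ R := by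
        rw [Multiset.le_iff_count]
        intro y
        rw [Multiset.count_add, Multiset.count_replicate, Multiset.count_replicate]
        by_cases h1 : a = y
        · subst h1; simp [hne]
        · by_cases h2 : x = y
          · subst h2; simp [h1]
          · simp [h1, h2]
      simpa using Multiset.card_le_card this
    omega
  · push Not at h
    obtain ⟨a, ha⟩ := Multiset.card_pos_iff_exists_mem.1 hR
    exact ⟨a, ha, fun x hx => absurd hx (by have := h x; omega)⟩

/-- the basic run -/
lemma run_lemma [Finite G] [DecidableEq G] {N : Subgroup G} {d : G} (hd : Nrm N d) {E : ℕ} (hE : 2 ≤ E) (s : ℕ) :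
    ∀ (i : ℕ) (T R : Multiset G) (X : Finset G), Nat.card N = X.card + s → X.Nonempty → Rch i T X →
    InC N d T → InC N d R → 2 * s + 1 ≤ R.card → Maj R E →
    (∃ j ≤ s, ∃ P ≤ R, P.card = 2 * j ∧ ∃ Y : Finset G, Rch (i + j) (T + P) Y ∧ Y.card = Nat.card N) ∨
    (∃ (N' : Subgroup G) (d' : G) (R' : Multiset G), N' ≤ N ∧ Nat.card N' < Nat.card N ∧ Nrm N' d' ∧
      R' ≤ R ∧ InC N' d' R' ∧ R.card + 2 * Nat.card N' ≤ R'.card + 2 * s ∧ Maj R' E) := by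
  induction s using Nat.strong_induction_on with
  | _ s ih =>
  intro i T R X hs hX hT hTC hRC hcard hmaj
  rcases Nat.eq_zero_or_pos s with rfl | hpos
  · left
    exact ⟨0, le_rfl, 0, by simp, by simp, X, by simpa using hT, by omega⟩
  obtain ⟨a, haR, hamaj⟩ := exists_maj R (by omega)
  rcases stuck_or_grow X R (by omega) haR with ⟨w, R', rfl, W, hW1, hW2⟩ | ⟨h1, h2⟩
  · have hT' := rch_step hT a w hW2
    have hTC' : InC N d (a ::ₘ w ::ₘ T) := by
      intro x hx
      simp only [Multiset.mem_cons] at hx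
      rcases hx with rfl | rfl | hx
      · exact hRC _ (by simp)
      · exact hRC _ (by simp)
      · exact hTC _ hx
    have hWle := card_le_coset (rch_coset hd hT' hTC')
    have hR'C : InC N d R' := fun x hx => hRC x (by simp [hx])
    simp only [Multiset.card_cons] at hcard
    rcases ih (Nat.card N - W.card) (by omega) (i + 1) (a ::ₘ w ::ₘ T) R' W (by omega)
      (Finset.card_pos.1 (by omega)) hT' hTC' hR'C (by omega) (maj_step hE hmaj hamaj) with
      ⟨j, hj, P, hP, hPc, Y, hY, hYc⟩ | ⟨N', d', R'', k1, k2, k3, k4, k5, k6, k7⟩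
    · left
      refine ⟨j + 1, by omega, a ::ₘ w ::ₘ P, ?_, by simp [hPc]; ring, Y, ?_, hYc⟩
      · exact Multiset.cons_le_cons a (Multiset.cons_le_cons w hP)
      · convert hY using 1
        · ring
        · simp [Multiset.add_cons]
    · right
      refine ⟨N', d', R'', k1, k2, k3, k4.trans ?_, k5, ?_, k7⟩
      · exact (Multiset.le_cons_self _ _).trans (Multiset.le_cons_self _ _)
      · simp only [Multiset.card_cons]; omega
  · right
    obtain ⟨N', k1, k2, k3, k4⟩ := stab_lemma (hd.pow i) hX (rch_coset hd hT hTC) (by omega) h1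
    refine ⟨N', a, R, k1, ?_, k2, le_rfl, fun x hx => k4 x (h2 x hx), by omega, hmaj⟩
    have := Finset.card_pos.2 hX
    omega

/-- The coset `M b` can be filled by pairs from `T`. -/
def Fills (M : Subgroup G) (b : G) (q : ℕ) (T : Multiset G) : Prop :=
  q + 1 ≤ Nat.card M ∧ T.card = 2 * q ∧ InC M b T ∧
    ∃ Y : Finset G, Rch q T Y ∧ Y.card = Nat.card M

lemma fill_lemma [Finite G] [DecidableEq G] {E x : ℕ} (hE : 2 ≤ E) (hx : E < x + 4) (k : ℕ) :
    ∀ (N : Subgroup G) (d : G) (R : Multiset G), Nat.card N = k → 2 ≤ k → Nrm N d → InC N d R →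
    2 * k + x ≤ R.card → Maj R E →
    ∃ (M : Subgroup G) (b : G) (R' : Multiset G) (q : ℕ) (T : Multiset G), M ≤ N ∧ 2 ≤ Nat.card M ∧
      Nrm M b ∧ R' ≤ R ∧ InC M b R' ∧ 2 * Nat.card M + x ≤ R'.card ∧ T ≤ R' ∧ Fills M b q T := by
  induction k using Nat.strong_induction_on with
  | _ k ih =>
  intro N d R hk hk2 hd hRC hcard hmaj
  rcases run_lemma hd hE (k - 1) 0 0 R {1} (by simp; omega) (by simp) rch_zero
    (by intro x hx; simp at hx) hRC (by omega) hmaj with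
    ⟨j, hj, P, hP, hPc, Y, hY, hYc⟩ | ⟨N', d', R', k1, k2, k3, k4, k5, k6, k7⟩
  · exact ⟨N, d, R, j, P, le_rfl, by omega, hd, le_rfl, hRC, by omega, hP, by omega, hPc,
      fun x hx => hRC x (Multiset.mem_of_le hP hx), Y, by simpa using hY, hYc⟩
  · have hpos : 0 < Nat.card N' := Nat.card_pos
    by_cases h1 : Nat.card N' = 1
    · rw [Subgroup.card_eq_one] at h1
      subst h1
      have := k7.single k5
      simp at k6
      omega
    · obtain ⟨M, b, R'', q, T, m1, m2, m3, m4, m5, m6, m7, m8⟩ :=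
        ih (Nat.card N') (by omega) N' d' R' rfl (by omega) k3 k5 (by omega) k7
      exact ⟨M, b, R'', q, T, m1.trans k1, m2, m3, m4.trans k4, m5, m6, m7, m8⟩

lemma grow_m [Finite G] {M : Subgroup G} {A W : Finset G} (hAW : A ⊆ W) (hlt : A.card < W.card)
    (hA : ∀ h ∈ M, ∀ z ∈ A, h * z ∈ A) (hW : ∀ h ∈ M, ∀ z ∈ W, h * z ∈ W) :
    A.card + Nat.card M ≤ W.card := by
  classical
  obtain ⟨y, hyW, hyA⟩ : ∃ y ∈ W, y ∉ A := by
    by_contra hcon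
    push Not at hcon
    have := Finset.card_le_card hcon
    omega
  obtain ⟨D, d1, d2⟩ := exists_coset M y
  have hdisj : Disjoint A D := by
    rw [Finset.disjoint_left]
    intro z hz hzD
    rw [d1] at hzD
    apply hyA
    have := hA _ (M.inv_mem hzD) z hz
    simpa using this
  have hsub : D ⊆ W := by
    intro z hz
    rw [d1] at hz
    have := hW _ hz y hyW
    simpa using this
  have := Finset.card_le_card (Finset.union_subset hAW hsub)
  rw [Finset.card_union_of_disjoint hdisj] at this
  omega

/-- minimality hypothesis on the coset `K c` -/
def MinC (n : ℕ) (K : Subgroup G) (R0 : Multiset G) : Prop :=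
  ∀ (N : Subgroup G) (d : G) (R' : Multiset G), N ≤ K → Nat.card N < Nat.card K → Nrm N d →
    R' ≤ R0 → InC N d R' → R'.card + 2 ≤ n + Nat.card N

/-- the coset of `K` can be filled from `R0` -/
def Full (K : Subgroup G) (R0 : Multiset G) : Prop :=
  ∃ q P, q + 1 ≤ Nat.card K ∧ P ≤ R0 ∧ P.card = 2 * q ∧
    ∃ Y : Finset G, Rch q P Y ∧ Y.card = Nat.card K

lemma cross_lemma [Finite G] [DecidableEq G] {n : ℕ} {K : Subgroup G} {c : G} (hc : Nrm K c)
    {R0 : Multiset G} (hR0 : InC K c R0) (hcard : R0.card + 1 = n + Nat.card K)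
    (hmin : MinC n K R0) {M : Subgroup G} {b : G} (hm2 : 2 ≤ Nat.card M)
    (hMK : Nat.card M < Nat.card K) (hb : Nrm M b)
    {T rs ts : Multiset G} {q : ℕ} (hfill : Fills M b q T) (hsum : T + rs + ts = R0)
    (hrs : InC M b rs) (hts : ∀ t ∈ ts, t * b⁻¹ ∉ M)
    (htc : Nat.card K + 1 ≤ ts.card + Nat.card M) (j : ℕ) (hj : j ≤ rs.card) :
    Full K R0 ∨ ∃ (P R T' : Multiset G) (Z : Finset G), P + R + T' = R0 ∧ P.card = 2 * (q + j) ∧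
      R ≤ rs ∧ T' ≤ ts ∧ R.card + j = rs.card ∧ T'.card + j = ts.card ∧
      Rch (q + j) P Z ∧ Nat.card M * (j + 1) ≤ Z.card ∧ (∀ h ∈ M, ∀ z ∈ Z, h * z ∈ Z) ∧
      (j = 0 → ∀ z ∈ Z, z * (b ^ q)⁻¹ ∈ M) := by
  obtain ⟨hq, hTc, hTC, Y, hY, hYc⟩ := hfill
  induction j with
  | zero =>
    right
    have hYM := rch_coset hb hY hTC
    refine ⟨T, rs, ts, Y, hsum, by simpa using hTc, le_rfl, le_rfl, rfl, rfl, hY, by omega, ?_, fun _ => hYM⟩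
    intro h hh z hz
    apply full_coset hYM hYc
    rw [mul_assoc]
    exact M.mul_mem hh (hYM z hz)
  | succ j ih =>
    rcases ih (by omega) with h | ⟨P, R, T', Z, h1, h2, h3, h4, h5, h6, h7, h8, h9, h10⟩
    · exact Or.inl h
    have hPC : InC K c P := fun x hx => hR0 x (by rw [← h1]; simp [hx])
    have hmj : Nat.card M + j ≤ Nat.card M * (j + 1) := by nlinarith
    have hZK := card_le_coset (rch_coset hc h7 hPC)
    have hPle : P ≤ R0 := by
      rw [← h1, add_assoc]; exact Multiset.le_add_right _ _
    by_cases hfull : Z.card = Nat.card K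
    · exact Or.inl ⟨q + j, P, by omega, hPle, h2, Z, h7, hfull⟩
    right
    have hZne : Z.Nonempty := Finset.card_pos.1 (by omega)
    by_cases hgrow : ∃ r ∈ R, ∃ t ∈ T', Z.card < (trR Z r ∪ (trR Z t ∪ trL r Z)).card
    · obtain ⟨r, hr, t, ht, hlt⟩ := hgrow
      have hrM : r * b⁻¹ ∈ M := hrs r (Multiset.mem_of_le h3 hr)
      obtain ⟨R1, rfl⟩ := Multiset.exists_cons_of_mem hr
      obtain ⟨T1, rfl⟩ := Multiset.exists_cons_of_mem ht
      have sR : ∀ u : G, ∀ h ∈ M, ∀ z ∈ trR Z u, h * z ∈ trR Z u := by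
        intro u h hh z hz
        rw [mem_trR] at hz ⊢
        rw [mul_assoc]; exact h9 h hh _ hz
      have sL : ∀ h ∈ M, ∀ z ∈ trL r Z, h * z ∈ trL r Z := by
        intro h hh z hz
        rw [mem_trL] at hz ⊢
        have e : r⁻¹ * (h * z) = (r⁻¹ * h * r) * (r⁻¹ * z) := by group
        rw [e]
        refine h9 _ ?_ _ hz
        have e2 : b * (r⁻¹ * h * r) * b⁻¹ = (r * b⁻¹)⁻¹ * h * (r * b⁻¹) := by group
        rw [hb, e2]
        exact M.mul_mem (M.mul_mem (M.inv_mem hrM) hh) hrM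
      refine ⟨r ::ₘ t ::ₘ P, R1, T1, trR Z r ∪ (trR Z t ∪ trL r Z), ?_, by simp [h2]; ring,
        (Multiset.le_cons_self _ _).trans h3, (Multiset.le_cons_self _ _).trans h4, ?_, ?_, ?_, ?_, ?_, ?_⟩
      · rw [← h1]
        simp only [Multiset.cons_add, Multiset.add_cons]
        rw [Multiset.cons_swap]
      · simp at h5; omega
      · simp at h6; omega
      · refine rch_step h7 r t ?_
        intro y hy
        simp only [Finset.mem_union] at hy
        tauto
      · have := grow_m (M := M) (A := trR Z r) (W := trR Z r ∪ (trR Z t ∪ trL r Z))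
          Finset.subset_union_left (by rw [card_trR]; exact hlt) (sR r) (by
            intro h hh z hz
            simp only [Finset.mem_union] at hz ⊢
            rcases hz with hz | hz | hz
            · exact Or.inl (sR r h hh z hz)
            · exact Or.inr (Or.inl (sR t h hh z hz))
            · exact Or.inr (Or.inr (sL h hh z hz)))
        rw [card_trR] at this
        nlinarith
      · intro h hh z hz
        simp only [Finset.mem_union] at hz ⊢
        rcases hz with hz | hz | hz
        · exact Or.inl (sR r h hh z hz)
        · exact Or.inr (Or.inl (sR t h hh z hz))
        · exact Or.inr (Or.inr (sL h hh z hz))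
      · intro h; omega
    · exfalso
      push Not at hgrow
      obtain ⟨r, hr⟩ := Multiset.card_pos_iff_exists_mem.1 (show 0 < R.card by omega)
      obtain ⟨t, ht⟩ := Multiset.card_pos_iff_exists_mem.1 (show 0 < T'.card by omega)
      have key : ∀ r ∈ R, ∀ t ∈ T', trR Z r = trR Z t ∧ trL r Z = trR Z r := by
        intro r hr t ht
        have hle := hgrow r hr t ht
        set W := trR Z r ∪ (trR Z t ∪ trL r Z) with hWdef
        have e1 : trR Z r = W := Finset.eq_of_subset_of_card_le
          (by intro y hy; simp [hWdef, hy]) (by rw [card_trR]; exact hle)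
        have e2 : trR Z t = W := Finset.eq_of_subset_of_card_le
          (by intro y hy; simp [hWdef, hy]) (by rw [card_trR]; exact hle)
        have e3 : trL r Z = W := Finset.eq_of_subset_of_card_le
          (by intro y hy; simp [hWdef, hy]) (by rw [card_trL]; exact hle)
        exact ⟨by rw [e1, e2], by rw [e1, e3]⟩
      rcases Nat.eq_zero_or_pos j with hj0 | hjpos
      · obtain ⟨z, hz⟩ := hZne
        have hz1 := h10 hj0 z hz
        have hz2 : z * r * t⁻¹ ∈ Z := by
          rw [← mem_trR, ← (key r hr t ht).1, mem_trR]
          simpa using hz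
        have hz3 := h10 hj0 _ hz2
        have hrt : r * t⁻¹ ∈ M := by
          rw [hb.pow q]
          have := M.mul_mem (M.inv_mem hz1) hz3
          convert this using 1
          group
        apply hts t (Multiset.mem_of_le h4 ht)
        have := M.mul_mem (M.inv_mem hrt) (hrs r (Multiset.mem_of_le h3 hr))
        convert this using 1
        group
      · obtain ⟨N', k1, k2, k3, k4⟩ := stab_lemma (hc.pow (q + j)) hZne (rch_coset hc h7 hPC)
          (by omega) (key r hr t ht).2
        have := hmin N' r (R + T') k1 (by have := Finset.card_pos.2 hZne; omega) k2
          (by rw [← h1, add_assoc]; exact Multiset.le_add_left _ _) (by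
            intro x hx
            apply k4
            rcases Multiset.mem_add.1 hx with hx | hx
            · rw [(key x hx t ht).1, (key r hr t ht).1]
            · rw [(key r hr x hx).1])
        have hc2 : P.card + R.card + T'.card = R0.card := by rw [← h1]; simp
        rw [Multiset.card_add] at this
        have hin : 2 * Nat.card M + 2 * j ≤ Nat.card M * (j + 1) + 2 := by
          obtain ⟨m', hm'⟩ := Nat.exists_eq_add_of_le hm2
          obtain ⟨j', rfl⟩ := Nat.exists_eq_add_of_le hjpos
          rw [hm']; nlinarith [Nat.zero_le (m' * j')]
        omega

lemma exists_max {P : ℕ → Prop} (B : ℕ) (hB : ∀ C, P C → C ≤ B) {C0 : ℕ} (h0 : P C0) :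
    ∃ C, P C ∧ C0 ≤ C ∧ ∀ C', P C' → C' ≤ C := by
  classical
  refine ⟨Nat.findGreatest P B, Nat.findGreatest_spec (hB _ h0) h0,
    Nat.le_findGreatest (hB _ h0) h0, fun C' h' => Nat.le_findGreatest (hB _ h') h'⟩

lemma fill_K [Finite G] [DecidableEq G] {n : ℕ} {K : Subgroup G} {c : G} (hc : Nrm K c)
    (hnk : Nat.card K ≤ n) (hk2 : 2 ≤ Nat.card K)
    {R0 : Multiset G} (hR0 : InC K c R0) (hcard : R0.card + 1 = n + Nat.card K)
    (hmin : MinC n K R0) : Full K R0 := by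
  obtain ⟨δ, hδ⟩ := Nat.exists_eq_add_of_le hnk
  have hcount : ∀ x, R0.count x + 1 ≤ n := by
    intro x
    have := hmin ⊥ x (Multiset.replicate (R0.count x) x) bot_le (by simp; omega)
      (by intro g; simp [mul_inv_eq_one])
      (Multiset.le_count_iff_replicate_le.1 le_rfl)
      (by intro y hy; rw [Multiset.eq_of_mem_replicate hy]; simp)
    simp at this
    omega
  let PP : ℕ → Prop := fun C => ∃ (M : Subgroup G) (b : G) (R' : Multiset G) (q : ℕ) (T : Multiset G),
    M ≤ K ∧ Nat.card M < Nat.card K ∧ 2 ≤ Nat.card M ∧ Nrm M b ∧ R' ≤ R0 ∧ InC M b R' ∧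
    2 * Nat.card M + C ≤ R'.card ∧ T ≤ R' ∧ Fills M b q T
  -- initial run
  rcases run_lemma hc (E := δ + 2) (by omega) (Nat.card K - 1) 0 0 R0 {1} (by simp; omega) (by simp) rch_zero
    (by intro x hx; simp at hx) hR0 (by omega) (by intro x; have := hcount x; omega) with
    ⟨j, hj, P, hP, hPc, Y, hY, hYc⟩ | ⟨N', d', R', k1, k2, k3, k4, k5, k6, k7⟩
  · exact ⟨j, P, by omega, hP, hPc, Y, by simpa using hY, hYc⟩
  have hN2 : 2 ≤ Nat.card N' := by
    have hpos : 0 < Nat.card N' := Nat.card_pos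
    by_contra hcon
    have h1 : Nat.card N' = 1 := by omega
    rw [Subgroup.card_eq_one] at h1
    subst h1
    have := k7.single k5
    simp at k6
    omega
  obtain ⟨M, b, R'', q, T, m1, m2, m3, m4, m5, m6, m7, m8⟩ :=
    fill_lemma (E := δ + 2) (x := δ + 1) (by omega) (by omega) _ N' d' R' rfl hN2 k3 k5 (by omega) k7
  have hPP0 : PP (δ + 1) := ⟨M, b, R'', q, T, m1.trans k1,
    (Subgroup.card_le_of_le m1).trans_lt k2, m2, m3, m4.trans k4, m5, m6, m7, m8⟩
  clear! M b R'' q T N' d' R'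
  obtain ⟨C, ⟨M, b, R', q, T, m1, m2, m3, m4, m5, m6, m7, m8, m9⟩, hC0, hCmax⟩ := exists_max R0.card (by
    rintro C ⟨M, b, R', q, T, m1, m2, m3, m4, m5, m6, m7, m8⟩
    have := Multiset.card_le_card m5
    omega) hPP0
  have hfill := m9
  obtain ⟨hq, hTc, hTC, -⟩ := m9
  classical
  obtain ⟨V, rfl⟩ := Multiset.le_iff_exists_add.1 m8
  obtain ⟨U, hU⟩ := Multiset.le_iff_exists_add.1 (m8.trans m5)
  have hVU : V ≤ U := by
    rw [hU] at m5; exact (add_le_add_iff_left T).1 m5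
  set rs := U.filter (fun x => x * b⁻¹ ∈ M) with hrsdef
  set ts := U.filter (fun x => ¬ x * b⁻¹ ∈ M) with htsdef
  have hsum : T + rs + ts = R0 := by
    rw [add_assoc, Multiset.filter_add_not, hU]
  have hrs : InC M b rs := fun x hx => (Multiset.mem_filter.1 hx).2
  have hVrs : V ≤ rs := Multiset.le_filter.2 ⟨hVU, fun x hx => m6 x (by simp [hx])⟩
  have hrsc : C + 2 ≤ rs.card := by
    have := Multiset.card_le_card hVrs
    rw [Multiset.card_add] at m7
    omega
  have hcs : T.card + rs.card + ts.card = R0.card := by rw [← hsum]; simp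
  have htc : Nat.card K + 1 ≤ ts.card + Nat.card M := by
    have := hmin M b (T + rs) m1 m2 m4 (by rw [← hsum]; exact Multiset.le_add_right _ _) (by
      intro x hx
      rcases Multiset.mem_add.1 hx with hx | hx
      · exact hTC x hx
      · exact hrs x hx)
    rw [Multiset.card_add] at this
    omega
  rcases cross_lemma hc hR0 hcard hmin m3 m2 m4 hfill hsum hrs
    (fun t ht => (Multiset.mem_filter.1 ht).2) htc (C + 2) hrsc with
    h | ⟨P, R, T', Z, h1, h2, h3, h4, h5, h6, h7, h8, h9, -⟩
  · exact h
  have hPC : InC K c P := fun x hx => hR0 x (by rw [← h1]; simp [hx])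
  have hPle : P ≤ R0 := by
    rw [← h1, add_assoc]; exact Multiset.le_add_right _ _
  have hRle : R + T' ≤ R0 := by
    rw [← h1, add_assoc]; exact Multiset.le_add_left _ _
  have hRc : P.card + (R + T').card = R0.card := by rw [← h1]; simp [add_assoc]
  have hZK := card_le_coset (rch_coset hc h7 hPC)
  obtain ⟨u, hu⟩ := Nat.exists_eq_add_of_le m3
  set p := (u + 1) * (C + 2) with hp
  have hp1 : Nat.card M * (C + 2 + 1) = p + (u + 1) + (C + 3) := by rw [hu, hp]; ring
  have hp2 : u + 1 + (C + 2) ≤ p + 1 := by rw [hp]; nlinarith [Nat.zero_le (u * C)]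
  set E := δ + 2 * u + 1 + 2 * (C + 2) with hEdef
  rcases run_lemma hc (E := E) (by omega) (Nat.card K - Z.card) (q + (C + 2)) P (R + T') Z
    (by omega) (Finset.card_pos.1 (by omega)) h7 hPC (fun x hx => hR0 x (Multiset.mem_of_le hRle hx))
    (by omega) (by
      intro x
      have := hcount x
      have := Multiset.count_le_of_le x hRle
      omega) with
    ⟨j, hj, Q, hQ, hQc, Y, hY, hYc⟩ | ⟨N', d', R', k1, k2, k3, k4, k5, k6, k7⟩
  · refine ⟨q + (C + 2) + j, P + Q, by omega, ?_, by rw [Multiset.card_add]; omega, Y, hY, hYc⟩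
    rw [← h1, add_assoc]
    exact add_le_add_right hQ P
  exfalso
  have hN2 : 2 ≤ Nat.card N' := by
    have hpos : 0 < Nat.card N' := Nat.card_pos
    by_contra hcon
    have h1 : Nat.card N' = 1 := by omega
    rw [Subgroup.card_eq_one] at h1
    subst h1
    have := k7.single k5
    simp only [Subgroup.card_bot] at k6
    omega
  obtain ⟨M', b', R'', q', T'', n1, n2, n3, n4, n5, n6, n7, n8⟩ :=
    fill_lemma (E := E) (x := δ + 1 + 2 * p) (by omega) (by omega) _ N' d' R' rfl hN2 k3 k5 (by omega) k7
  have := hCmax (δ + 1 + 2 * p) ⟨M', b', R'', q', T'', n1.trans k1,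
    (Subgroup.card_le_of_le n1).trans_lt k2, n2, n3, n4.trans (k4.trans hRle), n5, n6, n7, n8⟩
  omega

lemma exists_le_card {α : Type*} {R : Multiset α} {k : ℕ} (h : k ≤ R.card) :
    ∃ R' ≤ R, R'.card = k := by
  obtain ⟨l, rfl⟩ := Quot.exists_rep R
  refine ⟨(l.take k : List α), (List.take_sublist k l).subperm, ?_⟩
  have : k ≤ l.length := h
  simp [this]

theorem olson [Finite G] (S : Multiset G) (hS : 2 * Nat.card G ≤ S.card + 1) :
    ∃ l : List G, (l : Multiset G) ≤ S ∧ l.length = Nat.card G ∧ l.prod = 1 := by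
  classical
  set n := Nat.card G with hn
  have hnpos : 0 < n := Nat.card_pos
  -- minimal coset
  let Q : ℕ → Prop := fun k => ∃ (K : Subgroup G) (c : G) (R : Multiset G), Nat.card K = k ∧ Nrm K c ∧
    R ≤ S ∧ InC K c R ∧ n + k ≤ R.card + 1
  have hQ : ∃ k, Q k := ⟨n, ⊤, 1, S, by simp [hn], by intro g; simp, le_rfl, by intro x _; simp, by omega⟩
  obtain ⟨K, c, R1, hK, hc, hR1, hRC1, hcard1⟩ := Nat.find_spec hQ
  have hminQ : ∀ k, k < Nat.find hQ → ¬ Q k := fun k hk => Nat.find_min hQ hk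
  rw [← hK] at hcard1 hminQ
  have hKpos : 0 < Nat.card K := Nat.card_pos
  obtain ⟨R0, hR0le, hR0c⟩ := exists_le_card
    (show n + Nat.card K - 1 ≤ R1.card by omega)
  have hRC : InC K c R0 := fun x hx => hRC1 x (Multiset.mem_of_le hR0le hx)
  have hfull : Full K R0 := by
    by_cases h1 : Nat.card K = 1
    · exact ⟨0, 0, by omega, by simp, by simp, {1}, rch_zero, by simp [h1]⟩
    · refine fill_K hc (Subgroup.card_le_card_group K) (by omega) hRC (by omega) ?_
      intro N d R' hN hlt hd hR' hR'C
      by_contra hcon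
      exact hminQ _ hlt ⟨N, d, R', rfl, hd, hR'.trans (hR0le.trans hR1), hR'C, by omega⟩
  obtain ⟨q, P, hq, hP, hPc, Y, hY, hYc⟩ := hfull
  obtain ⟨U, rfl⟩ := Multiset.le_iff_exists_add.1 hP
  have hKn : Nat.card K ≤ n := Subgroup.card_le_card_group K
  rw [Multiset.card_add] at hR0c
  obtain ⟨F, hFU, hFc⟩ := exists_le_card (show n - q ≤ U.card by omega)
  obtain ⟨lf, rfl⟩ := Quot.exists_rep F
  have hlf : lf.length = n - q := hFc
  have h1 := list_coset hc lf (fun x hx => hRC x (Multiset.mem_add.2 (Or.inr (Multiset.mem_of_le hFU hx))))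
  have hYM := rch_coset hc hY (fun x hx => hRC x (Multiset.mem_add.2 (Or.inl hx)))
  have hy : lf.prod⁻¹ ∈ Y := by
    apply full_coset hYM hYc
    have e : c ^ q * c ^ (n - q) = 1 := by
      rw [← pow_add, show q + (n - q) = n by omega, hn, pow_card_eq_one']
    have e2 : (c ^ q)⁻¹ = c ^ (n - q) := inv_eq_of_mul_eq_one_right e
    rw [hlf, ← e2, inv_inv] at h1
    have h2 := (hc.pow q _).1 (K.inv_mem h1)
    convert h2 using 1
    group
  obtain ⟨l, l1, l2, l3⟩ := hY _ hy
  refine ⟨l ++ lf, ?_, by simp [l2, hlf]; omega, by simp [l3]⟩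
  rw [← Multiset.coe_add]
  exact (add_le_add l1 hFU).trans (hR0le.trans hR1)

end Olson

lemma lift_list {α β : Type*} (f : α → β) (l : List β) : ∀ (S : Multiset α),
    (l : Multiset β) ≤ S.map f → ∃ l' : List α, (l' : Multiset α) ≤ S ∧ l'.map f = l := by
  induction l with
  | nil => intro S _; exact ⟨[], by simp, rfl⟩
  | cons b l ih =>
    intro S h
    have hb : b ∈ S.map f := Multiset.mem_of_le h (by simp)
    obtain ⟨a, ha, rfl⟩ := Multiset.mem_map.1 hb
    obtain ⟨S', rfl⟩ := Multiset.exists_cons_of_mem ha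
    rw [Multiset.map_cons, ← Multiset.cons_coe, Multiset.cons_le_cons_iff] at h
    obtain ⟨l', h1, h2⟩ := ih S' h
    exact ⟨a :: l', by rw [← Multiset.cons_coe]; exact Multiset.cons_le_cons a h1, by simp [h2]⟩

lemma extract_blocks {G : Type*} [Group G] [Finite G] (H : Subgroup G) [H.Normal] (k : ℕ) :
    ∀ S : Multiset G, (k + 1) * Nat.card (G ⧸ H) ≤ S.card + 1 →
    ∃ B : Multiset (List G), B.card = k ∧ (B.map Multiset.ofList).sum ≤ S ∧
      ∀ l ∈ B, l.length = Nat.card (G ⧸ H) ∧ l.prod ∈ H := by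
  classical
  induction k with
  | zero => intro S _; exact ⟨0, by simp, by simp, by simp⟩
  | succ k ih =>
    intro S hS
    obtain ⟨l, l1, l2, l3⟩ := olson (S.map (QuotientGroup.mk' H)) (by
      rw [Multiset.card_map]; nlinarith [Nat.zero_le (k * Nat.card (G ⧸ H))])
    obtain ⟨l', h1, h2⟩ := lift_list _ l S l1
    have hlen : l'.length = Nat.card (G ⧸ H) := by rw [← l2, ← h2, List.length_map]
    have hprod : l'.prod ∈ H := by
      rw [← QuotientGroup.eq_one_iff, ← QuotientGroup.mk'_apply, map_list_prod, h2, l3]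
    obtain ⟨U, rfl⟩ := Multiset.le_iff_exists_add.1 h1
    obtain ⟨B, b1, b2, b3⟩ := ih U (by
      rw [Multiset.card_add, Multiset.coe_card, hlen] at hS
      nlinarith)
    refine ⟨l' ::ₘ B, by simp [b1], ?_, ?_⟩
    · rw [Multiset.map_cons, Multiset.sum_cons]
      exact add_le_add_right b2 _
    · intro l hl
      rcases Multiset.mem_cons.1 hl with rfl | hl
      · exact ⟨hlen, hprod⟩
      · exact b3 l hl

lemma coe_flatten {α : Type*} (L : List (List α)) :
    ((L.flatten : List α) : Multiset α) = ((L : Multiset (List α)).map Multiset.ofList).sum := by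
  induction L with
  | nil => simp
  | cons l L ih => simp [← Multiset.coe_add] at ih ⊢; rw [ih]

lemma EGZconst_spec (H : Type*) [Group H] [Finite H] (S : Multiset H) (hS : EGZconst H ≤ S.card) :
    HasProdOneSubseqOfLen S (Nat.card H) := by
  have hne : {t | ∀ S : Multiset H, Multiset.card S = t →
      HasProdOneSubseqOfLen S (Nat.card H)}.Nonempty := by
    refine ⟨2 * Nat.card H, fun S hS => ?_⟩
    obtain ⟨l, l1, l2, l3⟩ := olson S (by omega)
    exact ⟨l, l1, l2, l, rfl, l3⟩
  obtain ⟨S', h1, h2⟩ := exists_le_card hS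
  obtain ⟨T, t1, t2⟩ := Nat.sInf_mem hne S' h2
  exact ⟨T, t1.trans h1, t2⟩

lemma EGZconst_le_nat {G : Type*} [Group G] [Finite G] (H : Subgroup G) [H.Normal] (t : ℕ)
    (ht : (EGZconst H + 1) * Nat.card (G ⧸ H) ≤ t + 1) : EGZconst G ≤ t := by
  classical
  apply Nat.sInf_le
  intro S hS
  obtain ⟨B, b1, b2, b3⟩ := extract_blocks H (EGZconst H) S (by omega)
  let f : {l : List G // l ∈ B} → H := fun l => ⟨l.1.prod, (b3 l.1 l.2).2⟩
  obtain ⟨T, t1, t2, l, rfl, l3⟩ := EGZconst_spec H (B.attach.map f) (by simp [b1])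
  obtain ⟨L, L1, L2⟩ := lift_list f l _ t1
  let L' : List (List G) := L.map Subtype.val
  have hL'B : (L' : Multiset (List G)) ≤ B := by
    have := Multiset.map_le_map (f := Subtype.val) L1
    rwa [Multiset.attach_map_val, Multiset.map_coe] at this
  have hlen : L'.length = Nat.card H := by
    rw [← t2, ← L2]; simp [L']
  have hmem : ∀ x ∈ L', x.length = Nat.card (G ⧸ H) := fun x hx =>
    (b3 x (Multiset.mem_of_le hL'B (by simpa using hx))).1
  refine ⟨(L'.flatten : List G), ?_, ?_, L'.flatten, rfl, ?_⟩
  · rw [coe_flatten]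
    obtain ⟨U, hU⟩ := Multiset.le_iff_exists_add.1 hL'B
    refine le_trans ?_ b2
    rw [hU, Multiset.map_add, Multiset.sum_add]
    exact Multiset.le_add_right _ _
  · rw [Multiset.coe_card, List.length_flatten, List.map_congr_left hmem, List.map_const', List.sum_replicate,
      hlen, smul_eq_mul, mul_comm, ← Subgroup.card_eq_card_quotient_mul_card_subgroup]
  · have h1 : (l.map H.subtype).prod = 1 := by rw [← map_list_prod, l3, map_one]
    rw [List.prod_flatten, ← h1, ← L2]
    simp [L', f, Function.comp_def]

/-- If `H ⊴ G` and `E(H) ≤ c|H| - 1` for a constant `1 < c ≤ 2`, then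
`E(G) ≤ c|G| - 1`. -/
theorem EGZconst_le_of_normal (G : Type*) [Group G] [Finite G]
    (H : Subgroup G) (hH : H.Normal) (c : ℝ) (hc1 : 1 < c) (hc2 : c ≤ 2)
    (hEH : (EGZconst H : ℝ) ≤ c * (Nat.card H : ℝ) - 1) :
    (EGZconst G : ℝ) ≤ c * (Nat.card G : ℝ) - 1 := by
  have hQ : 0 < Nat.card (G ⧸ H) := Nat.card_pos
  have hpos : 0 < (EGZconst H + 1) * Nat.card (G ⧸ H) := by positivity
  have h := EGZconst_le_nat H ((EGZconst H + 1) * Nat.card (G ⧸ H) - 1) (by omega)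
  have h2 : EGZconst G + 1 ≤ (EGZconst H + 1) * Nat.card (G ⧸ H) := by omega
  have h3 : (EGZconst G : ℝ) + 1 ≤ (EGZconst H + 1) * (Nat.card (G ⧸ H) : ℝ) := by exact_mod_cast h2
  have h4 : (Nat.card G : ℝ) = Nat.card (G ⧸ H) * Nat.card H := by
    exact_mod_cast Subgroup.card_eq_card_quotient_mul_card_subgroup H
  have h5 : ((EGZconst H : ℝ) + 1) * (Nat.card (G ⧸ H) : ℝ) ≤ c * Nat.card H * (Nat.card (G ⧸ H) : ℝ) := by
    apply mul_le_mul_of_nonneg_right _ (by positivity)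
    linarith
  rw [h4]
  nlinarith
end

section
/- Let G be cyclic of order n ≥ 4 and S a sequence over G of length 2n−3 that has no product-one subsequence of length n. Then S = a^{[n-1]} · b^{[n-2]} or S = a^{[n-1]} · b^{[n-3]} · (b^2 a^{-1}) for some a, b ∈ G with ord(a b^{-1}) = n. -/
open scoped Pointwise

theorem ks_aux {G : Type*} [AddCommGroup G] [DecidableEq G] (m : ℕ) :
    ∀ (A B : Finset G), B.card = m → 0 ∈ A → 0 ∈ B →
    (∀ a ∈ A, ∀ b ∈ B, a + b = 0 → b = 0) →
    A.card + B.card ≤ (A + B).card + 1 := by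
  induction m using Nat.strong_induction_on with
  | _ m ih =>
    intro A B hm hA hB h
    by_cases hex : ∃ e ∈ A, ∃ b ∈ B, b + e ∉ A
    · obtain ⟨e, he, b, hb, hbe⟩ := hex
      set B1 := B.filter (fun y => y + e ∈ A) with hB1
      set B2 := B.filter (fun y => y + e ∉ A) with hB2
      set A1 := A ∪ B2.image (· + e) with hA1
      have hlt : B1.card < m := by
        rw [← hm]
        apply Finset.card_lt_card
        refine Finset.filter_ssubset.2 ⟨b, hb, hbe⟩
      have hc : B1.card + B2.card = B.card := Finset.card_filter_add_card_filter_not _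
      have hdis : Disjoint A (B2.image (· + e)) := by
        rw [Finset.disjoint_right]
        intro x hx
        obtain ⟨y, hy, rfl⟩ := Finset.mem_image.1 hx
        exact (Finset.mem_filter.1 hy).2
      have hA1c : A1.card = A.card + B2.card := by
        rw [hA1, Finset.card_union_of_disjoint hdis,
          Finset.card_image_of_injective _ (add_left_injective e)]
      have key := ih B1.card hlt A1 B1 rfl (Finset.mem_union_left _ hA)
        (Finset.mem_filter.2 ⟨hB, by simpa using he⟩) (by
          intro x hx y hy hxy
          obtain ⟨hy1, hy2⟩ := Finset.mem_filter.1 hy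
          rcases Finset.mem_union.1 hx with hx | hx
          · exact h x hx y hy1 hxy
          · obtain ⟨z, hz, rfl⟩ := Finset.mem_image.1 hx
            have hz1 := (Finset.mem_filter.1 hz).1
            have hz0 : z = 0 := h (y + e) hy2 z hz1 (by rw [← hxy]; abel)
            subst hz0
            exfalso
            exact (Finset.mem_filter.1 hz).2 (by simpa using he))
      have hsub : A1 + B1 ⊆ A + B := by
        intro x hx
        obtain ⟨p, hp, q, hq, rfl⟩ := Finset.mem_add.1 hx
        obtain ⟨hq1, hq2⟩ := Finset.mem_filter.1 hq
        rcases Finset.mem_union.1 hp with hp | hp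
        · exact Finset.add_mem_add hp hq1
        · obtain ⟨z, hz, rfl⟩ := Finset.mem_image.1 hp
          have hz1 := (Finset.mem_filter.1 hz).1
          exact Finset.mem_add.2 ⟨q + e, hq2, z, hz1, by abel⟩
      have := Finset.card_le_card hsub
      omega
    · push Not at hex
      have hB0 : B = {0} := by
        ext b
        constructor
        · intro hb
          have himg : A.image (· + b) = A := by
            apply Finset.eq_of_subset_of_card_le
            · intro x hx
              obtain ⟨y, hy, rfl⟩ := Finset.mem_image.1 hx
              simpa [add_comm] using hex y hy b hb
            · rw [Finset.card_image_of_injective _ (add_left_injective b)]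
          rw [← himg] at hA
          obtain ⟨y, hy, hy0⟩ := Finset.mem_image.1 hA
          simpa using h y hy b hb hy0
        · intro hb
          rw [Finset.mem_singleton.1 hb]; exact hB
      subst hB0
      simp

theorem ks {G : Type*} [AddCommGroup G] [DecidableEq G]
    (A B : Finset G) (hA : 0 ∈ A) (hB : 0 ∈ B)
    (h : ∀ a ∈ A, ∀ b ∈ B, a + b = 0 → b = 0) :
    A.card + B.card ≤ (A + B).card + 1 :=
  ks_aux B.card A B rfl hA hB h

open Classical in
/-- sums of at most `r` terms of `T` -/
noncomputable def bsums {G : Type*} [AddCommGroup G] [Fintype G] (r : ℕ) (T : Multiset G) :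
    Finset G :=
  Finset.univ.filter (fun s => ∃ W ≤ T, W.card ≤ r ∧ W.sum = s)

theorem mem_bsums {G : Type*} [AddCommGroup G] [Fintype G] {r : ℕ} {T : Multiset G} {s : G} :
    s ∈ bsums r T ↔ ∃ W ≤ T, W.card ≤ r ∧ W.sum = s := by
  simp [bsums]

theorem zero_mem_bsums {G : Type*} [AddCommGroup G] [Fintype G] {r : ℕ} {T : Multiset G} :
    (0 : G) ∈ bsums r T := mem_bsums.2 ⟨0, Multiset.zero_le _, by simp, by simp⟩

theorem card_bsums {G : Type*} [AddCommGroup G] [Fintype G] [DecidableEq G] (r : ℕ) :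
    ∀ (T : Multiset G), (∀ x, T.count x ≤ r) →
    (∀ W ≤ T, 1 ≤ W.card → W.card ≤ r → W.sum ≠ 0) →
    T.card + 1 ≤ (bsums r T).card := by
  induction r with
  | zero =>
    intro T hT _
    have : T = 0 := by
      ext x; simpa using hT x
    subst this
    simpa using Finset.card_pos.2 ⟨0, zero_mem_bsums⟩
  | succ r ih =>
    intro T hT hz
    have hle : T.dedup ≤ T := Multiset.dedup_le T
    set R := T - T.dedup with hR
    have hRT : R + T.dedup = T := tsub_add_cancel_of_le hle
    have hRle : R ≤ T := Multiset.sub_le_self _ _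
    have h0 : (0 : G) ∉ T := by
      intro h0
      exact hz {0} (by simpa using h0) (by simp) (by simp) (by simp)
    have h1 := ih R (by
      intro x
      have := hT x
      rw [hR, Multiset.count_sub, Multiset.count_dedup]
      split_ifs with hx
      · omega
      · rw [Multiset.count_eq_zero_of_notMem hx]; omega) (by
      intro W hW h1 h2
      exact hz W (hW.trans hRle) h1 (by omega))
    have h2 := ks (bsums r R) (insert 0 T.toFinset) zero_mem_bsums (by simp) (by
      intro a ha b hb hab
      by_contra hb0
      obtain ⟨W, hW, hWc, rfl⟩ := mem_bsums.1 ha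
      have hb : b ∈ T := by simpa [hb0] using hb
      refine hz (W + {b}) ?_ (by simp) (by simpa using hWc) (by simpa using hab)
      rw [← hRT]
      exact add_le_add hW (by simpa using hb))
    have h3 : bsums r R + insert 0 T.toFinset ⊆ bsums (r+1) T := by
      intro x hx
      obtain ⟨a, ha, b, hb, rfl⟩ := Finset.mem_add.1 hx
      obtain ⟨W, hW, hWc, rfl⟩ := mem_bsums.1 ha
      rcases Finset.mem_insert.1 hb with rfl | hb
      · exact mem_bsums.2 ⟨W, hW.trans hRle, by omega, by simp⟩
      · refine mem_bsums.2 ⟨W + {b}, ?_, by simpa using hWc, by simp⟩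
        rw [← hRT]
        exact add_le_add hW (by simpa using hb)
    have h4 := Finset.card_le_card h3
    rw [Finset.card_insert_of_notMem (by simpa using h0)] at h2
    have h5 : R.card + T.dedup.card = T.card := by rw [← Multiset.card_add, hRT]
    have h6 : T.toFinset.card = T.dedup.card := rfl
    omega



section cyc
variable {G : Type*} [AddCommGroup G] [Fintype G] [DecidableEq G]

theorem invol_unique [IsAddCyclic G] {x y : G} (hx : x ≠ 0) (hy : y ≠ 0) (h2x : x + x = 0)
    (h2y : y + y = 0) : x = y := by
  by_contra hne
  have h := IsAddCyclic.card_nsmul_eq_zero_le (α := G) (n := 2) (by norm_num)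
  have hs : ({0, x, y} : Finset G) ⊆ Finset.univ.filter (fun a : G => 2 • a = 0) := by
    intro z hz
    simp only [Finset.mem_insert, Finset.mem_singleton] at hz
    rcases hz with rfl | rfl | rfl <;> simp [two_nsmul, *]
  have := Finset.card_le_card hs
  rw [Finset.card_eq_three.2 ⟨0, x, y, hx.symm, hy.symm, hne, rfl⟩] at this
  omega

theorem gain_le (T : Multiset G) (hT : T.card + 2 = Fintype.card G) (r : ℕ)
    (hz : ∀ W ≤ T, 1 ≤ W.card → W.card ≤ r + 2 → W.sum ≠ 0)
    (A : Finset G) (hA : A.val ≤ T) (hc : ∀ x, (T - A.val).count x ≤ r)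
    (C : Finset G) (hC : ∀ c ∈ C, -c ∉ bsums r (T - A.val)) : C.card ≤ A.card + 1 := by
  have h1 := card_bsums r (T - A.val) hc
    (fun W hW h1 h2 => hz W (hW.trans (Multiset.sub_le_self _ _)) h1 (by omega))
  have h2 : (T - A.val).card + A.val.card = T.card := by
    rw [← Multiset.card_add, tsub_add_cancel_of_le hA]
  have h3 : Disjoint (bsums r (T - A.val)) (C.image (fun c => -c)) := by
    rw [Finset.disjoint_right]
    intro x hx
    obtain ⟨c, hc, rfl⟩ := Finset.mem_image.1 hx
    exact hC c hc
  have h4 := Finset.card_le_univ (bsums r (T - A.val) ∪ C.image (fun c => -c))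
  rw [Finset.card_union_of_disjoint h3, Finset.card_image_of_injective _ neg_injective] at h4
  have h5 : A.val.card = A.card := rfl
  omega

theorem val_le_of {H : Type*} {T : Multiset H} {A : Finset H} (h : ∀ x ∈ A, x ∈ T) : A.val ≤ T :=
  (Multiset.le_iff_subset A.nodup).2 h

theorem three_values [IsAddCyclic G] (T : Multiset G) (hT : T.card + 2 = Fintype.card G) (r : ℕ)
    (hr : 1 ≤ r) (hcount : ∀ x, T.count x ≤ r + 1)
    (hz : ∀ W ≤ T, 1 ≤ W.card → W.card ≤ r + 2 → W.sum ≠ 0)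
    (B : Finset G) (hB : ∀ x ∈ B, x ∈ T ∧ x + x ≠ 0) (hB3 : 3 ≤ B.card) : False := by
  have h0 : (0 : G) ∉ T := by
    intro h0
    exact hz {0} (by simpa using h0) (by simp) (by simp) (by simp)
  set M := T.toFinset.filter (fun x => T.count x = r + 1) with hM
  have hMT : ∀ x ∈ M, x ∈ T := fun x hx => by simpa using (Finset.mem_filter.1 hx).1
  have hMc : ∀ x ∈ M, T.count x = r + 1 := fun x hx => (Finset.mem_filter.1 hx).2
  have hM2 : ∀ x ∈ M, x + x ≠ 0 := by
    intro x hx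
    have := hz (Multiset.replicate 2 x) (Multiset.le_count_iff_replicate_le.1
      (by rw [hMc x hx]; omega)) (by simp) (by simp)
    simpa [two_nsmul] using this
  have hcnt : ∀ A : Finset G, M ⊆ A → ∀ x, (T - A.val).count x ≤ r := by
    intro A hMA x
    rw [Multiset.count_sub]
    by_cases hx : x ∈ M
    · have : 1 ≤ A.val.count x := Multiset.one_le_count_iff_mem.2 (hMA hx)
      have := hMc x hx
      omega
    · have h1 := hcount x
      have : T.count x ≠ r + 1 := by
        intro h
        apply hx
        refine Finset.mem_filter.2 ⟨?_, h⟩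
        rw [Multiset.mem_toFinset, ← Multiset.one_le_count_iff_mem]; omega
      omega
  -- sums of one or two distinct terms of `A` are forbidden
  have hforb : ∀ A : Finset G, A.val ≤ T → ∀ Y ≤ A.val, 1 ≤ Y.card → Y.card ≤ 2 →
      -Y.sum ∉ bsums r (T - A.val) := by
    intro A hA Y hY h1 h2 hmem
    obtain ⟨W, hW, hWc, hs⟩ := mem_bsums.1 hmem
    refine hz (W + Y) ?_ (by rw [Multiset.card_add]; omega) (by rw [Multiset.card_add]; omega)
      (by rw [Multiset.sum_add, hs]; simp)
    calc W + Y ≤ (T - A.val) + A.val := add_le_add hW hY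
      _ = T := tsub_add_cancel_of_le hA
  by_cases hM4 : M.card ≤ 3
  · obtain ⟨A, hMA, hAB, hA3⟩ := Finset.exists_subsuperset_card_eq
      (Finset.subset_union_left (s₁ := M) (s₂ := B)) hM4
      (hB3.trans (Finset.card_le_card Finset.subset_union_right))
    have hAT : ∀ x ∈ A, x ∈ T ∧ x + x ≠ 0 := by
      intro x hx
      rcases Finset.mem_union.1 (hAB hx) with h | h
      · exact ⟨hMT x h, hM2 x h⟩
      · exact hB x h
    have hAle : A.val ≤ T := val_le_of fun x hx => (hAT x hx).1
    have hg := gain_le T hT r hz A hAle (hcnt A hMA)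
    have hf := hforb A hAle
    have hne : ∀ x ∈ A, x ≠ 0 := fun x hx h => h0 (h ▸ (hAT x hx).1)
    have hpair : ∀ x ∈ A, ∀ y ∈ A, x ≠ y → ({x, y} : Multiset G) ≤ A.val := by
      intro x hx y hy hxy
      have : ({x, y} : Finset G).val ≤ A.val := Finset.val_le_iff.2 (by
        intro z hz; simp only [Finset.mem_insert, Finset.mem_singleton] at hz
        rcases hz with rfl | rfl <;> assumption)
      rwa [Finset.insert_val_of_notMem (by simpa using hxy)] at this
    have hpz : ∀ x ∈ A, ∀ y ∈ A, x ≠ y → x + y ≠ 0 := by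
      intro x hx y hy hxy
      have := hz {x, y} ((hpair x hx y hy hxy).trans hAle) (by simp) (by simp)
      simpa using this
    -- generic contradiction
    have gen : ∀ x ∈ A, ∀ y ∈ A, ∀ z ∈ A, x ≠ y → x ≠ z → y ≠ z → ∀ p ∈ A, ∀ q ∈ A, p ≠ q →
        ∀ s ∈ A, ∀ t ∈ A, s ≠ t → p + q ≠ s + t → p + q ∉ ({x, y, z} : Finset G) →
        s + t ∉ ({x, y, z} : Finset G) → False := by
      intro x hx y hy z hz' hxy hxz hyz p hp q hq hpq s hs t ht hst hne1 hm1 hm2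
      have := hg (insert (p + q) (insert (s + t) {x, y, z})) (by
        intro c hc
        simp only [Finset.mem_insert, Finset.mem_singleton] at hc
        rcases hc with rfl | rfl | rfl | rfl | rfl
        · simpa using hf {p, q} (hpair p hp q hq hpq) (by simp) (by simp)
        · simpa using hf {s, t} (hpair s hs t ht hst) (by simp) (by simp)
        · simpa using hf {c} (by simpa using hx) (by simp) (by simp)
        · simpa using hf {c} (by simpa using hy) (by simp) (by simp)
        · simpa using hf {c} (by simpa using hz') (by simp) (by simp))
      rw [Finset.card_insert_of_notMem (by
          rw [Finset.mem_insert]; push Not; exact ⟨hne1, hm1⟩),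
        Finset.card_insert_of_notMem hm2,
        Finset.card_eq_three.2 ⟨x, y, z, hxy, hxz, hyz, rfl⟩] at this
      omega
    obtain ⟨x, y, z, hxy, hxz, hyz, hAe⟩ := Finset.card_eq_three.1 hA3
    have hx : x ∈ A := by simp [hAe]
    have hy : y ∈ A := by simp [hAe]
    have hz' : z ∈ A := by simp [hAe]
    have nx := hne x hx
    have ny := hne y hy
    have nz := hne z hz'
    have dx := (hAT x hx).2
    have dy := (hAT y hy).2
    have dz := (hAT z hz').2
    have G1 := gen x hx y hy z hz' hxy hxz hyz
    by_cases c1 : x + y = z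
    · refine G1 x hx z hz' hxz y hy z hz' hyz (by simpa using hxy) ?_ ?_
      · simp only [Finset.mem_insert, Finset.mem_singleton]
        rintro (h | h | h)
        · exact nz (by simpa using h)
        · apply dx; rw [← c1, ← add_assoc] at h; simpa using h
        · exact nx (by simpa using h)
      · simp only [Finset.mem_insert, Finset.mem_singleton]
        rintro (h | h | h)
        · apply dy; rw [← c1, add_left_comm] at h; simpa using h
        · exact nz (by simpa using h)
        · exact ny (by simpa using h)
    · have m1 : x + y ∉ ({x, y, z} : Finset G) := by
        simp only [Finset.mem_insert, Finset.mem_singleton]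
        rintro (h | h | h)
        · exact ny (by simpa using h)
        · exact nx (by simpa using h)
        · exact c1 h
      by_cases c2 : x + z = y
      · refine G1 x hx y hy hxy y hy z hz' hyz (by
          intro h; apply hxz; rw [add_comm x y] at h; simpa using h) m1 ?_
        simp only [Finset.mem_insert, Finset.mem_singleton]
        rintro (h | h | h)
        · apply dz; rw [← c2, add_assoc] at h; simpa using h
        · exact nz (by simpa using h)
        · exact ny (by simpa using h)
      · refine G1 x hx y hy hxy x hx z hz' hxz (by simpa using hyz) m1 ?_
        simp only [Finset.mem_insert, Finset.mem_singleton]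
        rintro (h | h | h)
        · exact nz (by simpa using h)
        · exact c2 h
        · exact nx (by simpa using h)
  · have hMle : M.val ≤ T := val_le_of hMT
    have hg := gain_le T hT r hz M hMle (hcnt M subset_rfl)
    have hf := hforb M hMle
    set M' := M.filter (fun x => (r + 2) • x ≠ 0) with hM'
    have hM'M : M' ⊆ M := Finset.filter_subset _ _
    have hcard : M.card ≤ M'.card + 1 := by
      have : (M.filter (fun x => ¬ (r + 2) • x ≠ 0)).card ≤ 1 := by
        rw [Finset.card_le_one]
        intro x hx y hy
        by_contra hxy
        simp only [Finset.mem_filter, not_not] at hx hy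
        have hxs : ∀ j, 1 ≤ j → j ≤ r + 1 → j • x ≠ 0 := by
          intro j h1 h2
          have := hz (Multiset.replicate j x) (Multiset.le_count_iff_replicate_le.1
            (by rw [hMc x hx.1]; omega)) (by simpa using h1) (by simp; omega)
          simpa using this
        have hinj : Set.InjOn (fun j : ℕ => j • x) (Finset.range (r + 2)) := by
          have key : ∀ i j : ℕ, i < j → j < r + 2 → i • x ≠ j • x := by
            intro i j hij hj h
            apply hxs (j - i) (by omega) (by omega)
            have : (j - i) • x + i • x = j • x := by rw [← add_nsmul]; congr 1; omega
            rw [h] at this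
            simpa using this
          intro i hi j hj hij
          simp only [Finset.coe_range, Set.mem_Iio] at hi hj
          rcases lt_trichotomy i j with h | h | h
          · exact absurd hij (key i j h hj)
          · exact h
          · exact absurd hij.symm (key j i h hi)
        have h1 := IsAddCyclic.card_nsmul_eq_zero_le (α := G) (n := r + 2) (by omega)
        have h2 : (Finset.range (r + 2)).image (fun j : ℕ => j • x) ⊆
            Finset.univ.filter (fun a : G => (r + 2) • a = 0) := by
          intro z hz
          obtain ⟨j, _, rfl⟩ := Finset.mem_image.1 hz
          simp only [Finset.mem_filter, Finset.mem_univ, true_and]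
          rw [smul_comm, hx.2, smul_zero]
        have h3 := Finset.eq_of_subset_of_card_le h2 (by
          rw [Finset.card_image_of_injOn hinj]; simpa using h1)
        have h4 : y ∈ (Finset.range (r + 2)).image (fun j : ℕ => j • x) := by
          rw [h3]; simpa using hy.2
        obtain ⟨j, hj, hjy⟩ := Finset.mem_image.1 h4
        simp only [Finset.mem_range] at hj
        have hj0 : j ≠ 0 := by
          rintro rfl
          apply h0; rw [zero_smul] at hjy; rw [hjy]; exact hMT y hy.1
        have hj1 : j ≠ 1 := by
          rintro rfl
          exact hxy (by simpa using hjy)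
        refine hz (Multiset.replicate (r + 2 - j) x + {y}) ?_ (by simp) (by simp; omega) ?_
        · rw [Multiset.le_iff_count]
          intro w
          rw [Multiset.count_add, Multiset.count_replicate, Multiset.count_singleton]
          have e1 := hMc x hx.1
          have e2 := hMc y hy.1
          split_ifs with w1 w2 w2
          · exact absurd (w1.trans w2) hxy
          · subst w1; omega
          · subst w2; omega
          · omega
        · rw [Multiset.sum_add, Multiset.sum_replicate, Multiset.sum_singleton, ← hjy, ← add_nsmul]
          rw [show r + 2 - j + j = r + 2 by omega]; exact hx.2
      have h2 : M'.card + (M.filter (fun x => ¬ (r + 2) • x ≠ 0)).card = M.card :=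
        Finset.card_filter_add_card_filter_not _
      omega
    have h0M : (0 : G) ∉ M' := fun h => h0 (hMT 0 (hM'M h))
    have hpair : ∀ x ∈ M, ∀ y ∈ M, ({x, y} : Multiset G) ≤ T := by
      intro x hx y hy
      rw [Multiset.le_iff_count]
      intro w
      have e1 := hMc x hx
      have e2 := hMc y hy
      rw [show ({x, y} : Multiset G) = {x} + {y} from rfl, Multiset.count_add,
        Multiset.count_singleton, Multiset.count_singleton]
      split_ifs with w1 w2 w2
      · subst w1; omega
      · subst w1; omega
      · subst w2; omega
      · omega
    have hks := ks (insert 0 M') (insert 0 M') (by simp) (by simp) (by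
      intro a ha b hb hab
      by_contra hb0
      have hb : b ∈ M' := by simpa [hb0] using hb
      rcases Finset.mem_insert.1 ha with rfl | ha
      · exact hb0 (by simpa using hab)
      · exact hz {a, b} (hpair a (hM'M ha) b (hM'M hb)) (by simp) (by simp) (by simpa using hab))
    rw [Finset.card_insert_of_notMem h0M] at hks
    have hfin := hg ((insert 0 M' + insert 0 M').erase 0) (by
      intro c hc
      obtain ⟨hc0, hc⟩ := Finset.mem_erase.1 hc
      obtain ⟨a, ha, b, hb, rfl⟩ := Finset.mem_add.1 hc
      rcases Finset.mem_insert.1 ha with rfl | ha <;> rcases Finset.mem_insert.1 hb with rfl | hb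
      · simp at hc0
      · simpa using hf {b} (by simpa using hM'M hb) (by simp) (by simp)
      · simpa using hf {a} (by simpa using hM'M ha) (by simp) (by simp)
      · by_cases hab : a = b
        · subst hab
          intro hmem
          obtain ⟨W, hW, hWc, hs⟩ := mem_bsums.1 hmem
          have haM := hM'M ha
          by_cases hWa : r ≤ W.count a
          · have hWe : Multiset.replicate r a = W :=
              Multiset.eq_of_le_of_card_le (Multiset.le_count_iff_replicate_le.1 hWa)
                (by simpa using hWc)
            apply (Finset.mem_filter.1 ha).2
            rw [← hWe, Multiset.sum_replicate] at hs
            rw [add_nsmul, hs, two_nsmul]; simp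
          · refine hz (W + {a, a}) ?_ (by simp) (by simpa using hWc) ?_
            · rw [Multiset.le_iff_count]
              intro w
              rw [Multiset.count_add, show ({a, a} : Multiset G) = {a} + {a} from rfl,
                Multiset.count_add, Multiset.count_singleton]
              by_cases w1 : w = a
              · subst w1
                have := hMc w haM
                simp; omega
              · have := Multiset.le_iff_count.1 (hW.trans (Multiset.sub_le_self _ _)) w
                simpa [w1] using this
            · rw [Multiset.sum_add, hs]; simp
        · have hpr : ({a, b} : Multiset G) ≤ M.val := by
            have : ({a, b} : Finset G).val ≤ M.val := Finset.val_le_iff.2 (by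
              intro z hz; simp only [Finset.mem_insert, Finset.mem_singleton] at hz
              rcases hz with rfl | rfl
              · exact hM'M ha
              · exact hM'M hb)
            rwa [Finset.insert_val_of_notMem (by simpa using hab)] at this
          simpa using hf {a, b} hpr (by simp) (by simp))
    rw [Finset.card_erase_of_mem (Finset.mem_add.2 ⟨0, by simp, 0, by simp, by simp⟩)] at hfin
    omega


theorem bsums_add {r s : ℕ} (T₁ T₂ : Multiset G)
    (hz : ∀ W ≤ T₁ + T₂, 1 ≤ W.card → W.sum ≠ 0) :
    (bsums r T₁).card + (bsums s T₂).card ≤ (bsums (r + s) (T₁ + T₂)).card + 1 := by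
  have h := ks (bsums r T₁) (bsums s T₂) zero_mem_bsums zero_mem_bsums (by
    intro a ha b hb hab
    obtain ⟨W, hW, hWc, rfl⟩ := mem_bsums.1 ha
    obtain ⟨W', hW', hWc', rfl⟩ := mem_bsums.1 hb
    by_contra hne
    refine hz (W + W') (add_le_add hW hW') ?_ (by simpa using hab)
    have : W' ≠ 0 := by rintro rfl; simp at hne
    have := Multiset.card_pos.2 this
    rw [Multiset.card_add]; omega)
  have h2 : bsums r T₁ + bsums s T₂ ⊆ bsums (r + s) (T₁ + T₂) := by
    intro x hx
    obtain ⟨a, ha, b, hb, rfl⟩ := Finset.mem_add.1 hx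
    obtain ⟨W, hW, hWc, rfl⟩ := mem_bsums.1 ha
    obtain ⟨W', hW', hWc', rfl⟩ := mem_bsums.1 hb
    exact mem_bsums.2 ⟨W + W', add_le_add hW hW', by rw [Multiset.card_add]; omega, by simp⟩
  have := Finset.card_le_card h2
  omega

theorem bsums_pair {x y : G} (hxy : x ≠ y)
    (hz : ∀ W ≤ ({x, y} : Multiset G), 1 ≤ W.card → W.sum ≠ 0) :
    4 ≤ (bsums 2 ({x, y} : Multiset G)).card := by
  have lx : ({x} : Multiset G) ≤ {x, y} := by simp
  have ly : ({y} : Multiset G) ≤ {x, y} := by simp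
  have hx : x ≠ 0 := by simpa using hz {x} lx (by simp)
  have hy : y ≠ 0 := by simpa using hz {y} ly (by simp)
  have hs : x + y ≠ 0 := by simpa using hz {x, y} le_rfl (by simp)
  have hsub : (insert (x + y) {0, x, y} : Finset G) ⊆ bsums 2 ({x, y} : Multiset G) := by
    intro z hz
    simp only [Finset.mem_insert, Finset.mem_singleton] at hz
    rcases hz with rfl | rfl | rfl | rfl
    · exact mem_bsums.2 ⟨{x, y}, le_rfl, by simp, by simp⟩
    · exact zero_mem_bsums
    · exact mem_bsums.2 ⟨{z}, lx, by simp, by simp⟩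
    · exact mem_bsums.2 ⟨{z}, ly, by simp, by simp⟩
  have := Finset.card_le_card hsub
  rw [Finset.card_insert_of_notMem (by
    simp only [Finset.mem_insert, Finset.mem_singleton]
    rintro (h | h | h)
    · exact hs h
    · exact hy (by simpa using h)
    · exact hx (by simpa using h)),
    Finset.card_eq_three.2 ⟨0, x, y, hx.symm, hy.symm, hxy, rfl⟩] at this
  omega

theorem two_pairs (T R : Multiset G) (hT : T.card + 2 = Fintype.card G)
    (hz : ∀ W ≤ T, 1 ≤ W.card → W.sum ≠ 0) {x y z w : G} (hxy : x ≠ y) (hzw : z ≠ w)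
    (hR : T = R + ({x, y} + {z, w})) : False := by
  subst hR
  have h1 := bsums_add (r := R.card) (s := 2 + 2) R ({x, y} + {z, w}) hz
  have h2 := bsums_add (r := 2) (s := 2) ({x, y} : Multiset G) {z, w}
    (fun W hW => hz W (hW.trans (Multiset.le_add_left _ _)))
  have h3 := bsums_pair hxy (fun W hW => hz W (hW.trans
    ((Multiset.le_add_right _ _).trans (Multiset.le_add_left _ _))))
  have h4 := bsums_pair hzw (fun W hW => hz W (hW.trans
    ((Multiset.le_add_left _ _).trans (Multiset.le_add_left _ _))))
  have h5 := card_bsums R.card R (fun x => Multiset.count_le_card _ _)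
    (fun W hW h1 _ => hz W (hW.trans (Multiset.le_add_right _ _)) h1)
  have h6 := Finset.card_le_univ (bsums (R.card + (2 + 2)) (R + ({x, y} + {z, w})))
  simp only [Multiset.card_add, Multiset.card_pair] at hT
  omega

theorem exists_nsmul_eq {g : G} (hg : addOrderOf g = Fintype.card G) (y : G) :
    ∃ j < Fintype.card G, j • g = y := by
  have : y ∈ AddSubgroup.zmultiples g := by
    have : AddSubgroup.zmultiples g = ⊤ := by
      apply AddSubgroup.eq_top_of_card_eq
      rw [Nat.card_zmultiples, hg, Nat.card_eq_fintype_card]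
    rw [this]; trivial
  rw [mem_zmultiples_iff_mem_range_addOrderOf] at this
  obtain ⟨j, hj, hjy⟩ := Finset.mem_image.1 this
  exact ⟨j, by simpa [hg] using hj, hjy⟩

theorem order_of_no_zero {x : G} {m : ℕ} (hm : ∀ j, 1 ≤ j → j ≤ m → j • x ≠ 0)
    (h : Fintype.card G ≤ m + 3) (h4 : 4 ≤ Fintype.card G) :
    addOrderOf x = Fintype.card G ∨ (Fintype.card G = 4 ∧ m = 1 ∧ x + x = 0) := by
  obtain ⟨c, hc⟩ := addOrderOf_dvd_card (x := x)
  have hpos : 1 ≤ addOrderOf x := addOrderOf_pos x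
  have hlt : m < addOrderOf x := by
    by_contra hle
    exact hm _ hpos (by omega) (addOrderOf_nsmul_eq_zero x)
  rcases Nat.lt_or_ge c 2 with h2 | h2
  · interval_cases c
    · omega
    · left; omega
  · right
    have h3 : addOrderOf x * 2 ≤ Fintype.card G := by rw [hc]; exact Nat.mul_le_mul_left _ h2
    have h5 : addOrderOf x = 2 := by omega
    refine ⟨by omega, by omega, ?_⟩
    rw [← two_nsmul, ← h5]; exact addOrderOf_nsmul_eq_zero x

theorem zero_free_structure [IsAddCyclic G] (T : Multiset G) (hT : T.card + 2 = Fintype.card G)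
    (h4 : 4 ≤ Fintype.card G) (hz : ∀ W ≤ T, 1 ≤ W.card → W.sum ≠ 0) :
    ∃ g : G, addOrderOf g = Fintype.card G ∧
      (T = Multiset.replicate (Fintype.card G - 2) g ∨
       T = Multiset.replicate (Fintype.card G - 3) g + {2 • g}) := by
  set n := Fintype.card G with hn
  have hne : T.toFinset.Nonempty := by
    rw [Multiset.toFinset_nonempty]
    rintro rfl; simp at hT; omega
  obtain ⟨x, hxT, hmax⟩ := Finset.exists_max_image T.toFinset (fun x => T.count x) hne
  rw [Multiset.mem_toFinset] at hxT
  set a := T.count x with ha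
  have ha1 : 1 ≤ a := Multiset.one_le_count_iff_mem.2 hxT
  set R := T.filter (fun y => ¬ y = x) with hR
  have hTR : T = Multiset.replicate a x + R := by
    conv_lhs => rw [← Multiset.filter_add_not (fun y => y = x) T]
    rw [Multiset.filter_eq']
  have hcard : a + R.card = T.card := by
    conv_rhs => rw [hTR]
    simp
  have hRx : ∀ y ∈ R, y ≠ x := fun y hy => (Multiset.mem_filter.1 hy).2
  have h0 : (0 : G) ∉ T := by
    intro h0
    exact hz {0} (by simpa using h0) (by simp) (by simp)
  have hxs : ∀ j, 1 ≤ j → j ≤ a → j • x ≠ 0 := by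
    intro j h1 h2
    have := hz (Multiset.replicate j x) (Multiset.le_count_iff_replicate_le.1 h2) (by simpa using h1)
    simpa using this
  have hRle : R.card ≤ 1 := by
    by_contra hR2
    by_cases ha2 : 2 ≤ a
    · obtain ⟨y, hy⟩ := Multiset.card_pos_iff_exists_mem.1 (show 0 < R.card by omega)
      obtain ⟨R', hR'⟩ := Multiset.exists_cons_of_mem hy
      have hc' : R.card = R'.card + 1 := by rw [hR']; simp
      obtain ⟨z, hz'⟩ := Multiset.card_pos_iff_exists_mem.1 (show 0 < R'.card by omega)
      obtain ⟨R'', hR''⟩ := Multiset.exists_cons_of_mem hz'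
      have hzR : z ∈ R := by rw [hR']; exact Multiset.mem_cons_of_mem hz'
      refine two_pairs T (Multiset.replicate (a - 2) x + R'') hT hz (hRx y hy).symm
        (hRx z hzR).symm ?_
      rw [hTR, hR', hR'']
      obtain ⟨b, hb⟩ := Nat.exists_eq_add_of_le ha2
      rw [hb, show 2 + b - 2 = b by omega, Multiset.replicate_add]
      ext w
      simp only [Multiset.count_add, Multiset.count_cons, Multiset.count_replicate,
        Multiset.insert_eq_cons, Multiset.count_singleton]
      by_cases hw : w = x
      · subst hw; simp; omega
      · have hw' : ¬ x = w := fun h => hw h.symm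
        simp [hw, hw']; omega
    · have hnd : T.Nodup := by
        rw [Multiset.nodup_iff_count_le_one]
        intro y
        by_cases hy : y ∈ T
        · have := hmax y (by simpa using hy)
          omega
        · rw [Multiset.count_eq_zero_of_notMem hy]; omega
      by_cases hc4 : 4 ≤ T.card
      · obtain ⟨l, rfl⟩ := Quot.exists_rep T
        change (l : Multiset G).card + 2 = n at hT
        change (l : Multiset G).Nodup at hnd
        change 4 ≤ (l : Multiset G).card at hc4
        match l, hc4, hnd, hT, hz with
        | p :: q :: s :: t :: l', _, hnd, hT, hz =>
          simp only [Multiset.coe_nodup, List.nodup_cons, List.mem_cons, not_or] at hnd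
          refine two_pairs _ (l' : Multiset G) hT hz hnd.1.1 hnd.2.2.1.1 ?_
          change ((p :: q :: s :: t :: l' : List G) : Multiset G) = _
          rw [add_comm]
          rfl
        | [], h, _, _, _ => simp at h
        | [_], h, _, _, _ => simp at h
        | [_, _], h, _, _, _ => simp at h
        | [_, _, _], h, _, _, _ => simp at h
      · refine three_values T hT 1 le_rfl (fun x => (Multiset.nodup_iff_count_le_one.1 hnd x).trans
          (by norm_num)) (fun W hW h1 _ => hz W hW h1) T.toFinset ?_ ?_
        · intro y hy
          rw [Multiset.mem_toFinset] at hy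
          refine ⟨hy, fun h2 => h0 ?_⟩
          have h5 : 5 • y = 0 := by
            have : n = 5 := by omega
            rw [← this]; exact card_nsmul_eq_zero
          have : y = 0 := by
            have e : 5 • y = (y + y) + (y + y) + y := by abel
            rw [e, h2] at h5; simpa using h5
          rwa [this] at hy
        · rw [Multiset.toFinset_card_of_nodup hnd]; omega
  rcases Nat.lt_or_ge R.card 1 with hR0 | hR1
  · have hR0' : R = 0 := Multiset.card_eq_zero.1 (by omega)
    rcases order_of_no_zero hxs (by omega) h4 with ho | ho
    · refine ⟨x, ho, Or.inl ?_⟩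
      rw [hTR, hR0', add_zero]; congr 1; omega
    · omega
  · obtain ⟨y, hy⟩ := Multiset.card_eq_one.1 (show R.card = 1 by omega)
    have hyx : y ≠ x := hRx y (by rw [hy]; simp)
    have hyT : y ∈ T := by rw [hTR, hy]; simp
    have hy0 : y ≠ 0 := fun h => h0 (h ▸ hyT)
    have hx0 : x ≠ 0 := fun h => h0 (h ▸ hxT)
    rcases order_of_no_zero hxs (by omega) h4 with ho | ⟨hn4, ha', hxx⟩
    · refine ⟨x, ho, Or.inr ?_⟩
      obtain ⟨j, hj, hjy⟩ := exists_nsmul_eq ho y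
      have hj0 : j ≠ 0 := by rintro rfl; exact hy0 (by simpa using hjy.symm)
      have hj1 : j ≠ 1 := by rintro rfl; exact hyx (by simpa using hjy.symm)
      have hj2 : j = 2 := by
        by_contra hj2
        refine hz (Multiset.replicate (n - j) x + {y}) ?_ (by simp) ?_
        · rw [hTR, hy]
          refine add_le_add_left ?_ _
          rw [Multiset.replicate_le_replicate]; omega
        · rw [Multiset.sum_add, Multiset.sum_replicate, Multiset.sum_singleton, ← hjy, ← add_nsmul,
            show n - j + j = n by omega, hn, ← ho, addOrderOf_nsmul_eq_zero]
      rw [hTR, hy, ← hjy, hj2]; congr 2; omega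
    · have hyy : y + y ≠ 0 := fun h => hyx (invol_unique hy0 hx0 h hxx)
      have h4y : (y + y) + (y + y) = 0 := by
        have : n • y = 0 := card_nsmul_eq_zero
        rw [hn, hn4] at this
        rw [← this]; abel
      have hx2 : y + y = x := invol_unique hyy hx0 h4y hxx
      refine ⟨y, ?_, Or.inr ?_⟩
      · rcases order_of_no_zero (x := y) (m := 2) (by
          intro j h1 h2
          interval_cases j
          · simpa using hy0
          · simpa [two_nsmul] using hyy) (by omega) h4 with h | h
        · exact h
        · omega
      · rw [hTR, hy, ha', hn, hn4, two_nsmul, hx2]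
        simp [add_comm]


theorem add_structure_zero [IsAddCyclic G] (n : ℕ) (hn : Fintype.card G = n) (h4 : 4 ≤ n)
    (S : Multiset G) (hS : S.card = 2 * n - 3)
    (hno : ∀ W ≤ S, W.card = n → W.sum ≠ 0) (hmax : ∀ x, S.count x ≤ S.count 0) :
    ∃ g : G, addOrderOf g = n ∧
      (S = Multiset.replicate (n - 1) 0 + Multiset.replicate (n - 2) g ∨
       S = Multiset.replicate (n - 1) 0 + Multiset.replicate (n - 3) g + {2 • g}) := by
  set h := S.count 0 with hh
  set N := S.filter (fun y => ¬ y = 0) with hN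
  have hSN : S = Multiset.replicate h 0 + N := by
    conv_lhs => rw [← Multiset.filter_add_not (fun y => y = 0) S]
    rw [Multiset.filter_eq']
  have hcard : h + N.card = S.card := by
    conv_rhs => rw [hSN]
    simp
  have hN0 : (0 : G) ∉ N := fun h => (Multiset.mem_filter.1 h).2 rfl
  have hNS : N ≤ S := Multiset.filter_le _ _
  have hNc : ∀ x, N.count x ≤ h := fun x => (Multiset.count_le_of_le x hNS).trans (hmax x)
  have hhn : h < n := by
    by_contra hge
    exact hno (Multiset.replicate n 0) (Multiset.le_count_iff_replicate_le.1 (by omega))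
      (by simp) (by simp)
  have hban : ∀ W ≤ N, W.sum = 0 → n - h ≤ W.card → W.card ≤ n → False := by
    intro W hW h0 h1 h2
    refine hno (Multiset.replicate (n - W.card) 0 + W) ?_ (by simp; omega) (by simp [h0])
    rw [hSN]
    refine add_le_add ?_ hW
    rw [Multiset.replicate_le_replicate]; omega
  have hh2 : 2 ≤ h := by
    by_contra hlt
    have h1 := Multiset.toFinset_sum_count_eq S
    have h2 : ∑ a ∈ S.toFinset, S.count a ≤ S.toFinset.card • 1 :=
      Finset.sum_le_card_nsmul _ _ _ (fun x _ => (hmax x).trans (by omega))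
    have h3 := Finset.card_le_univ S.toFinset
    rw [smul_eq_mul, mul_one] at h2
    omega
  -- the maximal zero-sum part
  obtain ⟨U, ⟨hUN, hU0, hUc⟩, hUmax⟩ : ∃ U : Multiset G, (U ≤ N ∧ U.sum = 0 ∧ U.card + h + 1 ≤ n) ∧
      ∀ V : Multiset G, (V ≤ N ∧ V.sum = 0 ∧ V.card + h + 1 ≤ n) → V.card ≤ U.card := by
    let P : ℕ → Prop := fun k => ∃ U : Multiset G, (U ≤ N ∧ U.sum = 0 ∧ U.card + h + 1 ≤ n) ∧
      U.card = k
    classical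
    have hP0 : P 0 := ⟨0, ⟨Multiset.zero_le _, by simp, by simp; omega⟩, by simp⟩
    obtain ⟨U, hU, hUk⟩ := Nat.findGreatest_spec (P := P) (Nat.zero_le n) hP0
    refine ⟨U, hU, fun V hV => ?_⟩
    rw [hUk]
    exact Nat.le_findGreatest (by omega) ⟨V, hV, rfl⟩
  have hUT : (N - U) + U = N := tsub_add_cancel_of_le hUN
  have hTc : (N - U).card + U.card = N.card := by rw [← Multiset.card_add, hUT]
  obtain ⟨T, hT'⟩ := Multiset.card_pos_iff_exists_mem.1
    (show 0 < (Multiset.powersetCard (n - 2) (N - U)).card by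
      rw [Multiset.card_powersetCard]; exact Nat.choose_pos (by omega))
  obtain ⟨hTle, hTcard⟩ := Multiset.mem_powersetCard.1 hT'
  have hTN : T ≤ N := hTle.trans (Multiset.sub_le_self _ _)
  have hTz : ∀ W ≤ T, 1 ≤ W.card → W.card ≤ h + 1 → W.sum ≠ 0 := by
    intro W hW h1 h2 h0
    have hle : W + U ≤ N := by
      rw [← hUT]; exact add_le_add_left (hW.trans hTle) _
    have hs : (W + U).sum = 0 := by rw [Multiset.sum_add, h0, hU0, add_zero]
    by_cases hb : n - h ≤ (W + U).card
    · exact hban _ hle hs hb (by rw [Multiset.card_add]; omega)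
    · have := hUmax (W + U) ⟨hle, hs, by omega⟩
      rw [Multiset.card_add] at this; omega
  have hTn : T.card + 2 = Fintype.card G := by omega
  have hTcount : ∀ x, T.count x ≤ h := fun x => (Multiset.count_le_of_le x hTN).trans (hNc x)
  have hnh : n ≤ 2 * h + 2 := by
    set P := T.filter (fun x => ¬ x + x = 0) with hP
    set Q := T.filter (fun x => x + x = 0) with hQ
    have hPQ : Q.card + P.card = T.card := by
      rw [← Multiset.card_add, Multiset.filter_add_not]
    have hP2 : P.toFinset.card ≤ 2 := by
      by_contra h3
      refine three_values T hTn (h - 1) (by omega) (fun x => (hTcount x).trans (by omega))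
        (fun W hW h1 h2 => hTz W hW h1 (by omega)) P.toFinset ?_ (by omega)
      intro x hx
      exact Multiset.mem_filter.1 (Multiset.mem_toFinset.1 hx)
    have hPc : P.card ≤ 2 * h := by
      rw [← Multiset.toFinset_sum_count_eq P]
      have h2 : ∑ a ∈ P.toFinset, P.count a ≤ P.toFinset.card • h :=
        Finset.sum_le_card_nsmul _ _ _ (fun x _ =>
          (Multiset.count_le_of_le x (Multiset.filter_le _ _)).trans (hTcount x))
      rw [smul_eq_mul] at h2
      exact h2.trans (Nat.mul_le_mul_right _ hP2)
    have hQ1 : Q.card ≤ 1 := by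
      by_contra hQ2
      obtain ⟨x, hx⟩ := Multiset.card_pos_iff_exists_mem.1 (show 0 < Q.card by omega)
      obtain ⟨Q', hQ'⟩ := Multiset.exists_cons_of_mem hx
      have hc' : Q.card = Q'.card + 1 := by rw [hQ']; simp
      obtain ⟨y, hy⟩ := Multiset.card_pos_iff_exists_mem.1 (show 0 < Q'.card by omega)
      have hyQ : y ∈ Q := by rw [hQ']; exact Multiset.mem_cons_of_mem hy
      obtain ⟨hxT, hxx⟩ := Multiset.mem_filter.1 hx
      obtain ⟨hyT, hyy⟩ := Multiset.mem_filter.1 hyQ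
      have hx0 : x ≠ 0 := fun e => hN0 (e ▸ Multiset.mem_of_le hTN hxT)
      have hy0 : y ≠ 0 := fun e => hN0 (e ▸ Multiset.mem_of_le hTN hyT)
      have hxy := invol_unique hx0 hy0 hxx hyy
      have hle : ({x, y} : Multiset G) ≤ Q := by
        rw [hQ', Multiset.insert_eq_cons, Multiset.cons_le_cons_iff]
        simpa using hy
      exact hTz {x, y} (hle.trans (Multiset.filter_le _ _)) (by simp) (by simp; omega)
        (by simp [← hxy, hxx])
    rcases Nat.eq_zero_or_pos Q.card with hq | hq
    · omega
    · obtain ⟨x, hx⟩ := Multiset.card_pos_iff_exists_mem.1 hq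
      obtain ⟨hxT, hxx⟩ := Multiset.mem_filter.1 hx
      have hx0 : x ≠ 0 := fun e => hN0 (e ▸ Multiset.mem_of_le hTN hxT)
      have h2 : addOrderOf x = 2 :=
        addOrderOf_eq_prime (by rw [two_nsmul]; exact hxx) hx0
      have hd : 2 ∣ n := by rw [← h2, ← hn]; exact addOrderOf_dvd_card
      omega
  obtain ⟨g, hg, hgT⟩ := zero_free_structure T hTn (by omega) (by
    intro W hW h1 h0
    by_cases hb : W.card ≤ h + 1
    · exact hTz W hW h1 hb h0
    · have := Multiset.card_le_card hW
      exact hban W (hW.trans hTN) h0 (by omega) (by omega))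
  rw [hn] at hg hgT
  have hng : n • g = 0 := by rw [← hg]; exact addOrderOf_nsmul_eq_zero g
  have hTg : n - 3 ≤ T.count g := by
    rcases hgT with e | e <;> rw [e] <;> simp [Multiset.count_replicate]
    omega
  have hh3 : n - 3 ≤ h := hTg.trans (hTcount g)
  obtain ⟨X, hX⟩ := Multiset.le_iff_exists_add.1 hTN
  have hXc : T.card + X.card = N.card := by rw [hX, Multiset.card_add]
  have hX0 : ∀ x ∈ X, x ≠ 0 := by
    rintro x hx rfl
    exact hN0 (by rw [hX]; exact Multiset.mem_add.2 (Or.inr hx))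
  have hXle : ∀ x ∈ X, T + {x} ≤ N := by
    intro x hx
    rw [hX]; exact add_le_add_right (by simpa using hx) _
  -- the zero-sum with a single additional term
  have hone : ∀ x ∈ X, ∀ j, j < n → j • g = x → 3 ≤ j → n - h ≤ n - j + 1 → False := by
    intro x hx j hj hjx h3 hc
    refine hban (Multiset.replicate (n - j) g + {x}) ?_ ?_ (by simpa using hc) (by simp; omega)
    · refine le_trans ?_ (hXle x hx)
      refine add_le_add_left (Multiset.le_count_iff_replicate_le.1 ?_) _
      omega
    · rw [Multiset.sum_add, Multiset.sum_replicate, Multiset.sum_singleton, ← hjx, ← add_nsmul,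
        show n - j + j = n by omega, hng]
  have htwo : ∀ x ∈ X, 2 • g = x → T = Multiset.replicate (n - 3) g + {2 • g} →
      n - h ≤ n - 2 → False := by
    intro x hx hjx hTe hc
    refine hban (Multiset.replicate (n - 4) g + {2 • g} + {x}) ?_ ?_ (by simp; omega)
      (by simp; omega)
    · refine le_trans ?_ (hXle x hx)
      rw [hTe]
      refine add_le_add_left (add_le_add_left ?_ _) _
      rw [Multiset.replicate_le_replicate]; omega
    · rw [Multiset.sum_add, Multiset.sum_add, Multiset.sum_replicate, Multiset.sum_singleton,
        Multiset.sum_singleton, ← hjx, ← add_nsmul, ← add_nsmul,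
        show n - 4 + 2 + 2 = n by omega, hng]
  have hcg : T.count g + X.count g ≤ h := by
    rw [← Multiset.count_add, ← hX]; exact hNc g
  rcases (show h = n - 1 ∨ h = n - 2 ∨ h = n - 3 by omega) with hh1 | hh1 | hh1
  · have hX0 : X = 0 := Multiset.card_eq_zero.1 (by omega)
    refine ⟨g, hg, ?_⟩
    rw [hX0, add_zero] at hX
    rcases hgT with e | e
    · left; rw [hSN, hX, e, hh1]
    · right; rw [hSN, hX, e, hh1, add_assoc]
  · exfalso
    obtain ⟨x, hx⟩ := Multiset.card_pos_iff_exists_mem.1 (show 0 < X.card by omega)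
    obtain ⟨j, hj, hjx⟩ := exists_nsmul_eq (hg.trans hn.symm) x
    rw [hn] at hj
    have hj0 : j ≠ 0 := by rintro rfl; exact hX0 x hx (by simpa using hjx.symm)
    have hj3 : j < 3 := by
      by_contra h3
      exact hone x hx j hj hjx (by omega) (by omega)
    have hcx : 1 ≤ X.count x := Multiset.one_le_count_iff_mem.2 hx
    rcases hgT with e | e
    · have hTg' : T.count g = n - 2 := by rw [e]; simp
      have hj1 : j ≠ 1 := by
        rintro rfl
        rw [one_nsmul] at hjx
        rw [← hjx] at hcx; omega
      have hj2 : j = 2 := by omega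
      refine hban (Multiset.replicate (n - 2) g + {x}) ?_ ?_ (by simp; omega) (by simp; omega)
      · rw [← e]; exact hXle x hx
      · rw [Multiset.sum_add, Multiset.sum_replicate, Multiset.sum_singleton, ← hjx, ← add_nsmul,
          hj2, show n - 2 + 2 = n by omega, hng]
    · by_cases hj1 : j = 1
      · refine hban (T + {x}) (hXle x hx) ?_ (by simp; omega) (by simp; omega)
        rw [e, Multiset.sum_add, Multiset.sum_add, Multiset.sum_replicate, Multiset.sum_singleton,
          Multiset.sum_singleton, ← hjx, ← add_nsmul, ← add_nsmul, hj1,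
          show n - 3 + 2 + 1 = n by omega, hng]
      · exact htwo x hx (by rw [← hjx]; congr 1; omega) e (by omega)
  · exfalso
    rcases hgT with e | e
    · have hTg' : T.count g = n - 2 := by rw [e]; simp
      omega
    · have hall : ∀ x ∈ X, x = (n - 1) • g := by
        intro x hx
        obtain ⟨j, hj, hjx⟩ := exists_nsmul_eq (hg.trans hn.symm) x
        rw [hn] at hj
        have hj0 : j ≠ 0 := by rintro rfl; exact hX0 x hx (by simpa using hjx.symm)
        have hcx : 1 ≤ X.count x := Multiset.one_le_count_iff_mem.2 hx
        have hj1 : j ≠ 1 := by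
          rintro rfl
          rw [one_nsmul] at hjx
          rw [← hjx] at hcx; omega
        have hj2 : j ≠ 2 := by
          rintro rfl
          exact htwo x hx hjx e (by omega)
        by_contra hne
        have : j ≠ n - 1 := by
          rintro rfl; exact hne hjx.symm
        exact hone x hx j hj hjx (by omega) (by omega)
      have hXr : X = Multiset.replicate 2 ((n - 1) • g) :=
        Multiset.eq_replicate.2 ⟨by omega, hall⟩
      refine hban ({2 • g} + X) ?_ ?_ ?_ ?_
      · rw [hX, e]
        exact add_le_add_left (Multiset.le_add_left _ _) _
      · rw [hXr, Multiset.sum_add, Multiset.sum_replicate, Multiset.sum_singleton, ← mul_nsmul,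
          ← add_nsmul, show 2 + (n - 1) * 2 = n * 2 by omega, mul_nsmul, hng, smul_zero]
      · rw [Multiset.card_add, Multiset.card_singleton]; omega
      · rw [Multiset.card_add, Multiset.card_singleton]; omega

theorem add_structure [IsAddCyclic G] (n : ℕ) (hn : Fintype.card G = n) (h4 : 4 ≤ n)
    (S : Multiset G) (hS : S.card = 2 * n - 3)
    (hno : ∀ W ≤ S, W.card = n → W.sum ≠ 0) :
    ∃ a b : G, addOrderOf (a - b) = n ∧
      (S = Multiset.replicate (n - 1) a + Multiset.replicate (n - 2) b ∨
       S = Multiset.replicate (n - 1) a + Multiset.replicate (n - 3) b + {2 • b - a}) := by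
  obtain ⟨a, _, hmax⟩ := Finset.exists_max_image Finset.univ (fun x => S.count x)
    ⟨(0 : G), Finset.mem_univ _⟩
  have hcount : ∀ x, (S.map (fun y => y - a)).count x = S.count (x + a) := by
    intro x
    have := Multiset.count_map_eq_count' (fun y => y - a) S (sub_left_injective) (x + a)
    simpa using this
  have hback : ∀ W : Multiset G, (W.map (fun y => y - a)).map (fun y => y + a) = W := by
    intro W; simp
  obtain ⟨g, hg, h⟩ := add_structure_zero n hn h4 (S.map (fun y => y - a)) (by simpa using hS) (by
      intro W hW hWc h0
      refine hno (W.map (fun y => y + a)) ?_ (by simpa using hWc) ?_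
      · rw [← hback S]; exact Multiset.map_le_map hW
      · rw [Multiset.sum_map_add, Multiset.map_const', Multiset.sum_replicate, hWc, ← hn,
          card_nsmul_eq_zero, Multiset.map_id', h0, add_zero])
    (by intro x; rw [hcount, hcount, zero_add]; exact hmax _ (Finset.mem_univ _))
  refine ⟨a, g + a, ?_, ?_⟩
  · rw [show a - (g + a) = -g by abel, addOrderOf_neg, hg]
  · rw [← hback S]
    rcases h with h | h
    · left; rw [h]; simp
    · right; rw [h]
      have : 2 • (g + a) - a = 2 • g + a := by abel
      rw [this]; simp

end cyc


theorem mul_structure {G : Type*} [CommGroup G] [Fintype G] [IsCyclic G] (n : ℕ)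
    (hn : Fintype.card G = n) (h4 : 4 ≤ n)
    (S : Multiset G) (hS : S.card = 2 * n - 3)
    (hno : ∀ W ≤ S, W.card = n → W.prod ≠ 1) :
    ∃ a b : G, orderOf (a * b⁻¹) = n ∧
      (S = Multiset.replicate (n - 1) a + Multiset.replicate (n - 2) b ∨
       S = Multiset.replicate (n - 1) a + Multiset.replicate (n - 3) b +
            {b ^ 2 * a⁻¹}) := by
  classical
  have hcard' : Fintype.card (Additive G) = n :=
    (Fintype.card_congr Additive.toMul).trans hn
  have hback : ∀ W : Multiset (Additive G), Additive.toMul W.sum =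
      (W.map (Additive.toMul : Additive G → G)).prod := by
    intro W
    induction W using Multiset.induction_on with
    | empty => simp
    | cons x W ih => simp [ih]
  have hid : (S.map (Additive.ofMul : G → Additive G)).map
      (Additive.toMul : Additive G → G) = S := by
    rw [Multiset.map_map]
    exact (Multiset.map_congr rfl (fun x _ => rfl)).trans (Multiset.map_id S)
  obtain ⟨a, b, hab, h⟩ := add_structure (G := Additive G) n hcard' h4
    (S.map (Additive.ofMul : G → Additive G)) (by simpa using hS) (by
      intro W hW hWc h0
      refine hno (W.map (Additive.toMul : Additive G → G)) ?_ (by simpa using hWc) ?_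
      · rw [← hid]
        exact Multiset.map_le_map hW
      · rw [← hback, h0]
        rfl)
  refine ⟨Additive.toMul a, Additive.toMul b, ?_, ?_⟩
  · rw [← hab, ← addOrderOf_ofMul_eq_orderOf, ← div_eq_mul_inv]
    rfl
  · rw [← div_eq_mul_inv]
    rcases h with h | h
    · left
      rw [← hid, h]
      simp
    · right
      rw [← hid, h]
      simp

/-- If `G` is cyclic of order `n ≥ 4` and `S` is a sequence of length `2n - 3`
over `G` with no product-one subsequence of length `n`, then
`S = a^[n-1] · b^[n-2]` or `S = a^[n-1] · b^[n-3] · (b²a⁻¹)`, where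
`ord(ab⁻¹) = n`. -/
theorem inverse_two_n_sub_three (G : Type*) [Group G] [Fintype G]
    (hG : IsCyclic G) (n : ℕ) (hn : 4 ≤ n) (hcard : Fintype.card G = n)
    (S : Multiset G) (hS : Multiset.card S = 2 * n - 3)
    (hno : ¬ HasProdOneSubseqOfLen S n) :
    ∃ a b : G, orderOf (a * b⁻¹) = n ∧
      (S = Multiset.replicate (n - 1) a + Multiset.replicate (n - 2) b ∨
       S = Multiset.replicate (n - 1) a + Multiset.replicate (n - 3) b +
            {b ^ 2 * a⁻¹}) := by
  classical
  letI : CommGroup G := IsCyclic.commGroup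
  refine mul_structure n hcard hn S hS ?_
  intro W hW hWc h0
  apply hno
  refine ⟨W, hW, hWc, W.toList, Multiset.coe_toList _, ?_⟩
  exact (Multiset.prod_toList W).trans h0
end

section
/- Let G be cyclic of order n ≥ 2 and S a sequence over G of length 2n−2 with no product-one subsequence of length n. Then S = a^{[n-1]} · b^{[n-1]} for some a, b ∈ G with ord(a b^{-1}) = n. -/
namespace InvEGZ

theorem exists_le_of_le_map {α β : Type*} (f : α → β) (S : Multiset α) (T : Multiset β)
    (h : T ≤ S.map f) : ∃ U ≤ S, U.map f = T := by
  have h1 : T ∈ (S.map f).powersetCard (Multiset.card T) := by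
    simp [Multiset.mem_powersetCard, h]
  rw [Multiset.powersetCard_map, Multiset.mem_map] at h1
  obtain ⟨U, hU, rfl⟩ := h1
  exact ⟨U, (Multiset.mem_powersetCard.1 hU).1, rfl⟩

/-- set of sums of `k`-element submultisets -/
noncomputable def sums {p : ℕ} (k : ℕ) (M : Multiset (ZMod p)) : Finset (ZMod p) :=
  ((M.powersetCard k).map Multiset.sum).toFinset

theorem mem_sums {p : ℕ} {k : ℕ} {M : Multiset (ZMod p)} {s : ZMod p} :
    s ∈ sums k M ↔ ∃ T ≤ M, Multiset.card T = k ∧ T.sum = s := by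
  simp [sums, Multiset.mem_powersetCard, and_assoc]

open scoped Pointwise in
theorem sums_add {p : ℕ} (k l : ℕ) (M N : Multiset (ZMod p)) :
    sums k M + sums l N ⊆ sums (k + l) (M + N) := by
  intro s hs
  obtain ⟨a, ha, b, hb, rfl⟩ := Finset.mem_add.1 hs
  obtain ⟨T, hT, h1, rfl⟩ := mem_sums.1 ha
  obtain ⟨U, hU, h2, rfl⟩ := mem_sums.1 hb
  exact mem_sums.2 ⟨T + U, add_le_add hT hU, by simp [h1, h2], by simp⟩

/-- all entries of a multiset of pairs -/
def flat {α : Type*} (D : Multiset (α × α)) : Multiset α := D.map Prod.fst + D.map Prod.snd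

theorem flat_cons {α : Type*} (q : α × α) (D : Multiset (α × α)) :
    flat (q ::ₘ D) = {q.1, q.2} + flat D := by
  simp only [flat, Multiset.insert_eq_cons, ← Multiset.singleton_add, Multiset.map_add,
    Multiset.map_singleton]
  abel

theorem sums_grow {p : ℕ} (hp : p.Prime) (D : Multiset (ZMod p × ZMod p))
    (hD : ∀ q ∈ D, q.1 ≠ q.2) (k c : ℕ) (M : Multiset (ZMod p)) (hc : 1 ≤ c)
    (hM : min p c ≤ (sums k M).card) :
    min p (c + Multiset.card D) ≤ (sums (k + Multiset.card D) (flat D + M)).card := by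
  induction D using Multiset.induction with
  | empty => simpa [flat] using hM
  | cons q D ih =>
    have ih := ih (fun r hr => hD r (Multiset.mem_cons_of_mem hr))
    have hq := hD q (Multiset.mem_cons_self _ _)
    have hpp := hp.two_le
    have h2 : ({q.1, q.2} : Finset (ZMod p)) ⊆ sums 1 ({q.1, q.2} : Multiset (ZMod p)) := by
      intro s hs
      simp only [Finset.mem_insert, Finset.mem_singleton] at hs
      rw [mem_sums]
      rcases hs with rfl | rfl
      · exact ⟨{q.1}, by simp, by simp, by simp⟩
      · exact ⟨{q.2}, by simp, by simp, by simp⟩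
    have h3 := Finset.card_le_card h2
    rw [Finset.card_pair hq] at h3
    have hne : (sums (k + Multiset.card D) (flat D + M)).Nonempty := by
      rw [← Finset.card_pos]; omega
    have h4 := ZMod.cauchy_davenport hp (s := sums 1 ({q.1, q.2} : Multiset (ZMod p)))
      (by rw [← Finset.card_pos]; omega) hne
    have h5 := Finset.card_le_card (sums_add 1 (k + Multiset.card D)
      ({q.1, q.2} : Multiset (ZMod p)) (flat D + M))
    rw [flat_cons, Multiset.card_cons, add_assoc,
      show k + (Multiset.card D + 1) = 1 + (k + Multiset.card D) by ring]
    omega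

theorem hammer {p : ℕ} (hp : p.Prime) (M : Multiset (ZMod p))
    (hM : ∀ T ≤ M, Multiset.card T = p → T.sum ≠ 0)
    (F : Multiset (ZMod p × ZMod p)) (hF : ∀ q ∈ F, q.1 ≠ q.2) (hc : Multiset.card F + 4 = p)
    (x y u v e f : ZMod p) (hxy : x ≠ y) (huv : u ≠ v)
    (hEq : M = flat F + {x, y, u, v} + {e, f}) :
    x - y = u - v ∨ x - y = -(u - v) := by
  by_contra! hcon
  obtain ⟨h1, h2⟩ := hcon
  have hsub : ({x + u, x + v, y + u, y + v} : Finset (ZMod p)) ⊆ sums 2 {x, y, u, v} := by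
    intro s hs
    simp only [Finset.mem_insert, Finset.mem_singleton] at hs
    rw [mem_sums]
    rcases hs with rfl | rfl | rfl | rfl
    · refine ⟨{x, u}, ?_, by simp, by simp⟩
      rw [show ({x, y, u, v} : Multiset (ZMod p)) = {x, u} + {y, v} by
        simp only [Multiset.insert_eq_cons, ← Multiset.singleton_add]; abel]
      exact Multiset.le_add_right _ _
    · refine ⟨{x, v}, ?_, by simp, by simp⟩
      rw [show ({x, y, u, v} : Multiset (ZMod p)) = {x, v} + {y, u} by
        simp only [Multiset.insert_eq_cons, ← Multiset.singleton_add]; abel]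
      exact Multiset.le_add_right _ _
    · refine ⟨{y, u}, ?_, by simp, by simp⟩
      rw [show ({x, y, u, v} : Multiset (ZMod p)) = {y, u} + {x, v} by
        simp only [Multiset.insert_eq_cons, ← Multiset.singleton_add]; abel]
      exact Multiset.le_add_right _ _
    · refine ⟨{y, v}, ?_, by simp, by simp⟩
      rw [show ({x, y, u, v} : Multiset (ZMod p)) = {y, v} + {x, u} by
        simp only [Multiset.insert_eq_cons, ← Multiset.singleton_add]; abel]
      exact Multiset.le_add_right _ _
  have hcard : ({x + u, x + v, y + u, y + v} : Finset (ZMod p)).card = 4 := by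
    rw [Finset.card_insert_of_notMem, Finset.card_insert_of_notMem, Finset.card_pair]
    · grind
    · simp only [Finset.mem_insert, Finset.mem_singleton]; grind
    · simp only [Finset.mem_insert, Finset.mem_singleton]; grind
  have h4 := Finset.card_le_card hsub
  have h5 := sums_grow hp F hF 2 4 {x, y, u, v} (by norm_num) (by omega)
  have : NeZero p := ⟨hp.ne_zero⟩
  have h6 : sums (2 + Multiset.card F) (flat F + {x, y, u, v}) = Finset.univ := by
    rw [← Finset.card_eq_iff_eq_univ, ZMod.card]
    have := Finset.card_le_univ (sums (2 + Multiset.card F) (flat F + {x, y, u, v}))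
    rw [ZMod.card] at this
    omega
  have h7 : -(e + f) ∈ sums (2 + Multiset.card F) (flat F + {x, y, u, v}) := by
    rw [h6]; exact Finset.mem_univ _
  obtain ⟨T, hT, hTc, hTs⟩ := mem_sums.1 h7
  refine hM (T + {e, f}) ?_ ?_ ?_
  · rw [hEq]; exact add_le_add hT le_rfl
  · simp [hTc]; omega
  · simp [hTs]

theorem pairing {α : Type*} [DecidableEq α] (k : ℕ) : ∀ (M : Multiset α),
    Multiset.card M = 2 * k → (∀ a, M.count a ≤ k) →
    ∃ D : Multiset (α × α), Multiset.card D = k ∧ (∀ q ∈ D, q.1 ≠ q.2) ∧ M = flat D := by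
  induction k with
  | zero =>
    intro M hM _
    refine ⟨0, rfl, by simp, ?_⟩
    simpa [flat] using hM
  | succ k ih =>
    intro M hM hcnt
    have hne : M.toFinset.Nonempty := by
      rw [Multiset.toFinset_nonempty]
      rintro rfl
      simp at hM
    obtain ⟨x, hx, hxm⟩ := Finset.exists_max_image M.toFinset (fun a => M.count a) hne
    have hne2 : (M.toFinset.erase x).Nonempty := by
      by_contra hcon
      rw [Finset.not_nonempty_iff_eq_empty] at hcon
      have : ∀ b ∈ M, b = x := by
        intro b hb
        by_contra hbx
        have : b ∈ M.toFinset.erase x := by simp [hb, hbx]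
        rw [hcon] at this
        simp at this
      rw [Multiset.eq_replicate_card.2 this] at hcnt
      have := hcnt x
      rw [Multiset.count_replicate_self] at this
      omega
    obtain ⟨y, hy, hym⟩ := Finset.exists_max_image (M.toFinset.erase x) (fun a => M.count a) hne2
    have hyx : y ≠ x := (Finset.mem_erase.1 hy).1
    have hxM : x ∈ M := Multiset.mem_toFinset.1 hx
    have hyM : y ∈ M := Multiset.mem_toFinset.1 (Finset.mem_erase.1 hy).2
    have hyM' : y ∈ M.erase x := (Multiset.mem_erase_of_ne hyx).2 hyM
    have hMeq : M = x ::ₘ y ::ₘ (M.erase x).erase y := by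
      rw [Multiset.cons_erase hyM', Multiset.cons_erase hxM]
    set N := (M.erase x).erase y with hN
    obtain ⟨D, hDc, hD, hND⟩ := ih N (by
      have := congrArg Multiset.card hMeq
      simp at this; omega) (by
      intro z
      by_contra! hz
      have hz1 := hcnt z
      have hx1 := hcnt x
      have hy1 := hcnt y
      have hzM : z ∈ M := by
        rw [hMeq]
        exact Multiset.mem_cons_of_mem (Multiset.mem_cons_of_mem
          (Multiset.count_pos.1 (by omega)))
      rw [hMeq] at hz1 hx1 hy1
      simp only [Multiset.count_cons] at hz1 hx1 hy1
      have hzx : z ≠ x := by rintro rfl; simp at hz1; omega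
      have hzy : z ≠ y := by rintro rfl; simp at hz1; omega
      have e1 := hxm z (Multiset.mem_toFinset.2 hzM)
      have e2 := hym z (Finset.mem_erase.2 ⟨hzx, Multiset.mem_toFinset.2 hzM⟩)
      have hcz : M.count z = N.count z := by
        rw [hMeq]; simp [Multiset.count_cons, hzx, hzy]
      simp only [hcz] at e1 e2
      have : ∑ a ∈ ({x, y, z} : Finset α), M.count a ≤ Multiset.card M := by
        rw [← Multiset.toFinset_sum_count_eq M]
        apply Finset.sum_le_sum_of_subset
        intro a ha
        simp only [Finset.mem_insert, Finset.mem_singleton] at ha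
        rcases ha with rfl | rfl | rfl <;> simpa
      rw [Finset.sum_insert (by simp [hyx.symm, hzx.symm]), Finset.sum_pair hzy.symm] at this
      omega)
    refine ⟨(x, y) ::ₘ D, by simp [hDc], ?_, ?_⟩
    · intro q hq
      rcases Multiset.mem_cons.1 hq with rfl | hq
      · exact hyx.symm
      · exact hD q hq
    · rw [flat_cons, ← hND]
      simpa using hMeq

theorem flat_const {α : Type*} (x y : α) (D : Multiset (α × α))
    (h : ∀ q ∈ D, q = (x, y) ∨ q = (y, x)) :
    flat D = Multiset.replicate (Multiset.card D) x + Multiset.replicate (Multiset.card D) y := by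
  induction D using Multiset.induction with
  | empty => simp [flat]
  | cons q D ih =>
    rw [flat_cons, ih (fun r hr => h r (Multiset.mem_cons_of_mem hr)), Multiset.card_cons,
      Multiset.replicate_succ, Multiset.replicate_succ]
    rcases h q (Multiset.mem_cons_self _ _) with rfl | rfl <;>
    · simp only [Multiset.insert_eq_cons, ← Multiset.singleton_add]; abel

theorem count_le_of_no {n : ℕ} (M : Multiset (ZMod n))
    (hM : ∀ T ≤ M, Multiset.card T = n → T.sum ≠ 0) (a : ZMod n) : M.count a < n := by
  by_contra! h
  refine hM (Multiset.replicate n a) (Multiset.le_count_iff_replicate_le.1 h) (by simp) (by simp)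

theorem three (a b c d : ZMod 3) (h1 : a + b + c ≠ 0) (h2 : a + b + d ≠ 0) (h3 : a + c + d ≠ 0)
    (h4 : b + c + d ≠ 0) : ∃ x y, ({a, b, c, d} : Multiset (ZMod 3)) =
      Multiset.replicate 2 x + Multiset.replicate 2 y := by
  revert a b c d
  decide

theorem prime_case {p : ℕ} (hp : p.Prime) (M : Multiset (ZMod p))
    (hMc : Multiset.card M = 2 * p - 2)
    (hM : ∀ T ≤ M, Multiset.card T = p → T.sum ≠ 0) :
    ∃ a b, M = Multiset.replicate (p - 1) a + Multiset.replicate (p - 1) b := by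
  have hp2 := hp.two_le
  rcases (by omega : p = 2 ∨ p = 3 ∨ 4 ≤ p) with rfl | rfl | hp4
  · obtain ⟨a, b, rfl⟩ := Multiset.card_eq_two.1 hMc
    exact ⟨a, b, by simp [Multiset.insert_eq_cons, ← Multiset.singleton_add]⟩
  · obtain ⟨a, b, c, d, rfl⟩ := Multiset.card_eq_four.1 hMc
    refine three a b c d ?_ ?_ ?_ ?_
    · have := hM {a, b, c} (by
        rw [show ({a, b, c, d} : Multiset (ZMod 3)) = {a, b, c} + {d} by
          simp only [Multiset.insert_eq_cons, ← Multiset.singleton_add]; abel]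
        exact Multiset.le_add_right _ _) (by simp)
      simpa [add_assoc] using this
    · have := hM {a, b, d} (by
        rw [show ({a, b, c, d} : Multiset (ZMod 3)) = {a, b, d} + {c} by
          simp only [Multiset.insert_eq_cons, ← Multiset.singleton_add]; abel]
        exact Multiset.le_add_right _ _) (by simp)
      simpa [add_assoc] using this
    · have := hM {a, c, d} (by
        rw [show ({a, b, c, d} : Multiset (ZMod 3)) = {a, c, d} + {b} by
          simp only [Multiset.insert_eq_cons, ← Multiset.singleton_add]; abel]
        exact Multiset.le_add_right _ _) (by simp)
      simpa [add_assoc] using this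
    · have := hM {b, c, d} (by
        rw [show ({a, b, c, d} : Multiset (ZMod 3)) = {b, c, d} + {a} by
          simp only [Multiset.insert_eq_cons, ← Multiset.singleton_add]; abel]
        exact Multiset.le_add_right _ _) (by simp)
      simpa [add_assoc] using this
  · obtain ⟨D, hDc, hD, hMD⟩ := pairing (p - 1) M (by omega)
      (fun a => by have := count_le_of_no M hM a; omega)
    have : Fact p.Prime := ⟨hp⟩
    have h2ne : (2 : ZMod p) ≠ 0 := by
      intro h
      have := (ZMod.natCast_eq_zero_iff 2 p).1 (by exact_mod_cast h)
      have := Nat.le_of_dvd (by norm_num) this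
      omega
    have h3ne : (3 : ZMod p) ≠ 0 := by
      intro h
      have := (ZMod.natCast_eq_zero_iff 3 p).1 (by exact_mod_cast h)
      have := Nat.le_of_dvd (by norm_num) this
      omega
    obtain ⟨q, hq⟩ := Multiset.card_pos_iff_exists_mem.1 (by omega : 0 < Multiset.card D)
    refine ⟨q.1, q.2, ?_⟩
    rw [hMD, ← hDc]
    apply flat_const
    intro q' hq'
    obtain ⟨D1, rfl⟩ := Multiset.exists_cons_of_mem hq
    rcases Multiset.mem_cons.1 hq' with rfl | hq'
    · exact Or.inl rfl
    obtain ⟨R, rfl⟩ := Multiset.exists_cons_of_mem hq'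
    simp only [Multiset.card_cons] at hDc
    obtain ⟨r, hr⟩ := Multiset.card_pos_iff_exists_mem.1 (by omega : 0 < Multiset.card R)
    obtain ⟨F, rfl⟩ := Multiset.exists_cons_of_mem hr
    simp only [Multiset.card_cons] at hDc
    obtain ⟨x, y⟩ := q
    obtain ⟨u, v⟩ := q'
    obtain ⟨r, s⟩ := r
    have hxy : x ≠ y := hD (x, y) (by simp)
    have huv : u ≠ v := hD (u, v) (by simp)
    have hrs : r ≠ s := hD (r, s) (by simp)
    have hF : ∀ q ∈ F, q.1 ≠ q.2 := fun q hq => hD q (by simp [hq])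
    have key : ∀ a b c d : ZMod p, ({x, y, u, v} : Multiset (ZMod p)) = {a, b, c, d} → a ≠ b →
        a - b = r - s ∨ a - b = -(r - s) := by
      intro a b c d h hab
      refine hammer hp M hM F hF (by omega) a b r s c d hab hrs ?_
      rw [hMD]
      simp only [flat_cons]
      have e1 : ({x, y} + ({u, v} + ({r, s} + flat F)) : Multiset (ZMod p)) =
        flat F + {r, s} + {x, y, u, v} := by
        simp only [Multiset.insert_eq_cons, ← Multiset.singleton_add]; abel
      rw [e1, h]
      simp only [Multiset.insert_eq_cons, ← Multiset.singleton_add]; abel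
    have k1 := key x y u v rfl hxy
    have k2 := key u v x y
      (by simp only [Multiset.insert_eq_cons, ← Multiset.singleton_add]; abel) huv
    have k3 := key x u y v
      (by simp only [Multiset.insert_eq_cons, ← Multiset.singleton_add]; abel)
    have k4 := key x v y u
      (by simp only [Multiset.insert_eq_cons, ← Multiset.singleton_add]; abel)
    have k5 := key y u x v
      (by simp only [Multiset.insert_eq_cons, ← Multiset.singleton_add]; abel)
    have k6 := key y v x u
      (by simp only [Multiset.insert_eq_cons, ← Multiset.singleton_add]; abel)
    have hd : r - s ≠ 0 := sub_ne_zero.2 hrs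
    generalize r - s = d at *
    have d2 : (2 : ZMod p) * d ≠ 0 := mul_ne_zero h2ne hd
    have d3 : (3 : ZMod p) * d ≠ 0 := mul_ne_zero h3ne hd
    clear key hM hMD hD hMc
    simp only [Prod.mk.injEq]
    have tri : ∀ w : ZMod p, (x ≠ w → x - w = d ∨ x - w = -d) → (y ≠ w → y - w = d ∨ y - w = -d) →
        w = x ∨ w = y := by
      intro w h1 h2
      by_contra! hcon
      have h1 := h1 hcon.1.symm
      have h2 := h2 hcon.2.symm
      rcases k1 with k1 | k1 <;> rcases h1 with h1 | h1 <;> rcases h2 with h2 | h2 <;>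
        first
        | exact hd (by linear_combination k1 - h1 + h2)
        | exact hd (by linear_combination -k1 + h1 - h2)
        | exact d3 (by linear_combination k1 - h1 + h2)
        | exact d3 (by linear_combination -k1 + h1 - h2)
    have t1 := tri u k3 k5
    have t2 := tri v k4 k6
    grind

/-- a block: `p` integers with sum divisible by `p` -/
def Blk (p : ℕ) (B : Multiset ℤ) : Prop := Multiset.card B = p ∧ (p : ℤ) ∣ B.sum

/-- no `j` disjoint blocks in `S` -/
def NoBlocks (p : ℕ) (S : Multiset ℤ) (j : ℕ) : Prop :=
  ∀ Bs : Multiset (Multiset ℤ), Multiset.card Bs = j → (∀ B ∈ Bs, Blk p B) → ¬ Bs.sum ≤ S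

/-- no block of size `n` in `S` -/
def NoZ (n : ℕ) (S : Multiset ℤ) : Prop :=
  ∀ T ≤ S, Multiset.card T = n → ¬ (n : ℤ) ∣ T.sum

/-- reduction modulo `n` -/
def red (n : ℕ) (S : Multiset ℤ) : Multiset (ZMod n) := S.map (fun x : ℤ => (x : ZMod n))

/-- the inverse theorem for `n` -/
def P (n : ℕ) : Prop := ∀ S : Multiset ℤ, Multiset.card S = 2 * n - 2 → NoZ n S →
  ∃ a b : ZMod n, red n S = Multiset.replicate (n - 1) a + Multiset.replicate (n - 1) b

theorem red_sum (n : ℕ) (S : Multiset ℤ) : (red n S).sum = ((S.sum : ℤ) : ZMod n) := by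
  rw [red]
  exact (map_multiset_sum (Int.castRingHom (ZMod n)) S).symm

theorem NoZ.red {n : ℕ} {S : Multiset ℤ} (h : NoZ n S) :
    ∀ T ≤ red n S, Multiset.card T = n → T.sum ≠ 0 := by
  intro T hT hc hs
  obtain ⟨U, hU, rfl⟩ := exists_le_of_le_map _ S T hT
  refine h U hU (by simpa using hc) ?_
  have := red_sum n U
  rw [InvEGZ.red, hs] at this
  exact (ZMod.intCast_zmod_eq_zero_iff_dvd _ _).1 this.symm

theorem P_prime {p : ℕ} (hp : p.Prime) : P p := fun S hS hno =>
  prime_case hp (red p S) (by simpa [red] using hS) hno.red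

theorem merge_aux (p : ℕ) (Cs : Multiset (Multiset ℤ)) (h : ∀ B ∈ Cs, Blk p B) :
    Multiset.card Cs.sum = p * Multiset.card Cs ∧
      Cs.sum.sum = p * (Cs.map (fun B => B.sum / (p : ℤ))).sum := by
  induction Cs using Multiset.induction with
  | empty => simp
  | cons B Cs ih =>
    obtain ⟨h1, h2⟩ := ih (fun r hr => h r (Multiset.mem_cons_of_mem hr))
    obtain ⟨h3, h4⟩ := h B (Multiset.mem_cons_self _ _)
    constructor
    · simp [h1, h3]; ring
    · simp [h2, mul_add, Int.mul_ediv_cancel' h4]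

theorem merge {p m : ℕ} {S : Multiset ℤ} (Bs : Multiset (Multiset ℤ)) (h : ∀ B ∈ Bs, Blk p B)
    (hle : Bs.sum ≤ S) (hno : NoZ (p * m) S) :
    NoZ m (Bs.map (fun B => B.sum / (p : ℤ))) := by
  intro T hT hc hd
  obtain ⟨Cs, hCs, rfl⟩ := exists_le_of_le_map _ Bs T hT
  obtain ⟨h1, h2⟩ := merge_aux p Cs (fun B hB => h B (Multiset.mem_of_le hCs hB))
  obtain ⟨Ds, rfl⟩ := Multiset.le_iff_exists_add.1 hCs
  refine hno Cs.sum (le_trans ?_ hle) ?_ ?_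
  · rw [Multiset.sum_add]; exact Multiset.le_add_right _ _
  · rw [h1]; simp at hc; rw [hc]
  · rw [h2]; push_cast; exact mul_dvd_mul_left _ hd

theorem noBlocks_of_noZ {p m : ℕ} {S : Multiset ℤ} (hno : NoZ (p * m) S) :
    NoBlocks p S (2 * m - 1) := by
  intro Bs hc hB hle
  obtain ⟨T, hT, h1, h2⟩ := Int.erdos_ginzburg_ziv_multiset (n := m)
    (Bs.map (fun B => B.sum / (p : ℤ))) (by simp [hc])
  exact merge Bs hB hle hno T hT h1 h2

/-- extract one block avoiding `K` -/
theorem extract_one {p : ℕ} (S K : Multiset ℤ) (hK : K ≤ S)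
    (hc : Multiset.card K + (2 * p - 1) ≤ Multiset.card S) :
    ∃ B R, Blk p B ∧ S = B + R ∧ K ≤ R := by
  obtain ⟨R, rfl⟩ := Multiset.le_iff_exists_add.1 hK
  obtain ⟨B, hB, h1, h2⟩ := Int.erdos_ginzburg_ziv_multiset (n := p) R (by simp at hc; omega)
  obtain ⟨R', rfl⟩ := Multiset.le_iff_exists_add.1 hB
  refine ⟨B, K + R', ⟨h1, h2⟩, by abel, Multiset.le_add_right _ _⟩

theorem extract_many {p : ℕ} (hp : 1 ≤ p) (j : ℕ) : ∀ (S K : Multiset ℤ), K ≤ S →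
    Multiset.card K + 1 ≤ p → 2 * p - 2 + j * p ≤ Multiset.card S →
    ∃ Bs : Multiset (Multiset ℤ), Multiset.card Bs = j ∧ (∀ B ∈ Bs, Blk p B) ∧
      Bs.sum + K ≤ S := by
  induction j with
  | zero => intro S K hK _ _; exact ⟨0, by simp, by simp, by simpa using hK⟩
  | succ j ih =>
    intro S K hK hKc hS
    rw [add_mul j 1 p, one_mul] at hS
    obtain ⟨B, R, hB, rfl, hKR⟩ := extract_one (p := p) S K hK (by omega)
    have hBc := hB.1
    obtain ⟨Bs, h1, h2, h3⟩ := ih R K hKR hKc (by simp at hS; omega)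
    refine ⟨B ::ₘ Bs, by simp [h1], ?_, ?_⟩
    · intro C hC
      rcases Multiset.mem_cons.1 hC with rfl | hC
      · exact hB
      · exact h2 C hC
    · rw [Multiset.sum_cons, add_assoc]
      exact add_le_add le_rfl h3

theorem noBlocks_sub {p j : ℕ} {B R : Multiset ℤ} (hB : Blk p B)
    (h : NoBlocks p (B + R) (j + 1)) : NoBlocks p R j := by
  intro Bs hc hBs hle
  refine h (B ::ₘ Bs) (by simp [hc]) ?_ ?_
  · intro C hC
    rcases Multiset.mem_cons.1 hC with rfl | hC
    · exact hB
    · exact hBs C hC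
  · rw [Multiset.sum_cons]
    exact add_le_add le_rfl hle

theorem noZ_of_noBlocks {p : ℕ} {S : Multiset ℤ} (h : NoBlocks p S 1) : NoZ p S := by
  intro T hT hc hd
  refine h {T} (by simp) ?_ (by simpa using hT)
  intro B hB
  rw [Multiset.mem_singleton.1 hB]
  exact ⟨hc, hd⟩

/-- the conclusion about residues -/
def Two (p : ℕ) (S : Multiset ℤ) : Prop := ∃ a b : ZMod p, a ≠ b ∧
  p - 1 ≤ (red p S).count a ∧ p - 1 ≤ (red p S).count b ∧
    ∀ x ∈ S, (x : ZMod p) = a ∨ (x : ZMod p) = b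

theorem count_red_le {n : ℕ} {R S : Multiset ℤ} (h : R ≤ S) (a : ZMod n) :
    (red n R).count a ≤ (red n S).count a :=
  Multiset.count_le_of_le a (Multiset.map_le_map h)

theorem ne_of_P {n : ℕ} (hn : 2 ≤ n) {S : Multiset ℤ} (h : NoZ n S) {a b : ZMod n}
    (hab : red n S = Multiset.replicate (n - 1) a + Multiset.replicate (n - 1) b) : a ≠ b := by
  rintro rfl
  have := count_le_of_no _ h.red a
  rw [hab, Multiset.count_add, Multiset.count_replicate_self] at this
  omega

theorem mem_red {n : ℕ} {S : Multiset ℤ} {x : ℤ} (hx : x ∈ S) : (x : ZMod n) ∈ red n S :=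
  Multiset.mem_map_of_mem _ hx

theorem exists_of_count {n : ℕ} {S : Multiset ℤ} {a : ZMod n} (h : 1 ≤ (red n S).count a) :
    ∃ x ∈ S, (x : ZMod n) = a := Multiset.mem_map.1 (Multiset.count_pos.1 h)

theorem two_values {p : ℕ} (hp : p.Prime) (j : ℕ) : ∀ S : Multiset ℤ,
    Multiset.card S = 2 * p - 2 + j * p → NoBlocks p S (j + 1) → Two p S := by
  have hp2 := hp.two_le
  induction j with
  | zero =>
    intro S hS hno
    have hz := noZ_of_noBlocks hno
    obtain ⟨a, b, hab⟩ := P_prime hp S (by omega) hz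
    refine ⟨a, b, ne_of_P hp2 hz hab, ?_, ?_, ?_⟩
    · rw [hab]; simp
    · rw [hab]; simp
    · intro x hx
      have := mem_red (n := p) hx
      rw [hab, Multiset.mem_add] at this
      rcases this with h | h
      · exact Or.inl (Multiset.eq_of_mem_replicate h)
      · exact Or.inr (Multiset.eq_of_mem_replicate h)
  | succ j ih =>
    intro S hS hno
    rw [add_mul j 1 p, one_mul] at hS
    have step : ∀ K ≤ S, Multiset.card K + 1 ≤ p → ∃ R ≤ S, K ≤ R ∧ Two p R := by
      intro K hK hKc
      obtain ⟨B, R, hB, rfl, hKR⟩ := extract_one (p := p) S K hK (by omega)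
      refine ⟨R, Multiset.le_add_left _ _, hKR, ih R ?_ (noBlocks_sub hB hno)⟩
      have := hB.1
      simp at hS; omega
    have nothree : ∀ x y z : ℤ, ({x, y, z} : Multiset ℤ) ≤ S → (x : ZMod p) ≠ y →
        (x : ZMod p) ≠ z → (y : ZMod p) ≠ z → False := by
      intro x y z hle hxy hxz hyz
      have two_abs : ∀ R, Two p R → (∃ x' ∈ R, (x' : ZMod p) = x) → (∃ y' ∈ R, (y' : ZMod p) = y) →
          (∃ z' ∈ R, (z' : ZMod p) = z) → False := by
        rintro R ⟨a, b, hab, -, -, h⟩ ⟨x', hx, ex⟩ ⟨y', hy, ey⟩ ⟨z', hz, ez⟩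
        have h1 := h x' hx
        have h2 := h y' hy
        have h3 := h z' hz
        rw [ex] at h1
        rw [ey] at h2
        rw [ez] at h3
        grind
      rcases (by omega : p = 2 ∨ p = 3 ∨ 4 ≤ p) with rfl | rfl | hp4
      · generalize (x : ZMod 2) = x at *
        generalize (y : ZMod 2) = y at *
        generalize (z : ZMod 2) = z at *
        clear two_abs
        revert x y z
        decide
      · have cnt : ∀ u v : ℤ, ({u, v} : Multiset ℤ) ≤ S → (u : ZMod 3) ≠ v →
            2 ≤ (red 3 S).count (u : ZMod 3) ∧ 2 ≤ (red 3 S).count (v : ZMod 3) := by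
          intro u v huv hne
          obtain ⟨R, hR, hKR, a, b, hab, ha, hb, h⟩ := step {u, v} huv (by simp)
          have h1 := h u (Multiset.mem_of_le hKR (by simp))
          have h2 := h v (Multiset.mem_of_le hKR (by simp))
          have c1 := count_red_le hR a
          have c2 := count_red_le hR b
          rcases h1 with h1 | h1 <;> rcases h2 with h2 | h2
          · exact absurd (h1.trans h2.symm) hne
          · rw [h1, h2]; omega
          · rw [h1, h2]; omega
          · exact absurd (h1.trans h2.symm) hne
        obtain ⟨R, rfl⟩ := Multiset.le_iff_exists_add.1 hle
        have cxy := cnt x y (by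
          rw [show ({x, y, z} + R : Multiset ℤ) = {x, y} + ({z} + R) by
            simp only [Multiset.insert_eq_cons, ← Multiset.singleton_add]; abel]
          exact Multiset.le_add_right _ _) hxy
        have cxz := cnt x z (by
          rw [show ({x, y, z} + R : Multiset ℤ) = {x, z} + ({y} + R) by
            simp only [Multiset.insert_eq_cons, ← Multiset.singleton_add]; abel]
          exact Multiset.le_add_right _ _) hxz
        have hB : Blk 3 ({x, y, z} : Multiset ℤ) := by
          refine ⟨by simp, (ZMod.intCast_zmod_eq_zero_iff_dvd _ 3).1 ?_⟩
          have : ∀ x y z : ZMod 3, x ≠ y → x ≠ z → y ≠ z → x + (y + z) = 0 := by decide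
          simpa using this _ _ _ hxy hxz hyz
        have hT := ih R (by simp at hS; omega) (noBlocks_sub hB hno)
        have hred : red 3 ({x, y, z} + R) =
            {(x : ZMod 3), (y : ZMod 3), (z : ZMod 3)} + red 3 R := by simp [red]
        rw [hred] at cxy cxz
        simp only [Multiset.count_add, Multiset.insert_eq_cons, Multiset.count_cons,
          Multiset.count_singleton, hxy, hxz, hyz, hxy.symm, hxz.symm, hyz.symm, if_true,
          if_false] at cxy cxz
        exact two_abs R hT (exists_of_count (by omega)) (exists_of_count (by omega))
          (exists_of_count (by omega))
      · obtain ⟨R, -, hKR, hT⟩ := step {x, y, z} hle (by simp; omega)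
        exact two_abs R hT ⟨x, Multiset.mem_of_le hKR (by simp), rfl⟩
          ⟨y, Multiset.mem_of_le hKR (by simp), rfl⟩ ⟨z, Multiset.mem_of_le hKR (by simp), rfl⟩
    obtain ⟨R, hR, -, a, b, hab, ha, hb, -⟩ := step 0 (Multiset.zero_le _) (by simp; omega)
    have hrr : red p R ≤ red p S := Multiset.map_le_map hR
    have ha' := ha.trans (Multiset.count_le_of_le a hrr)
    have hb' := hb.trans (Multiset.count_le_of_le b hrr)
    refine ⟨a, b, hab, ha', hb', ?_⟩
    intro x hx
    by_contra! hcon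
    obtain ⟨y, hy, rfl⟩ := exists_of_count (show 1 ≤ (red p S).count a by omega)
    obtain ⟨z, hz, rfl⟩ := exists_of_count (show 1 ≤ (red p S).count b by omega)
    refine nothree x y z ?_ hcon.1 hcon.2 hab
    rw [Multiset.le_iff_subset]
    · intro w hw
      simp only [Multiset.insert_eq_cons, Multiset.mem_cons, Multiset.mem_singleton] at hw
      rcases hw with rfl | rfl | rfl <;> assumption
    · have h1 : x ≠ y := fun h => hcon.1 (by rw [h])
      have h2 : x ≠ z := fun h => hcon.2 (by rw [h])
      have h3 : y ≠ z := fun h => hab (by rw [h])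
      simp [h1, h2, h3]

/-- changing one entry of an extremal sequence -/
theorem change_one {m : ℕ} (hm : 2 ≤ m) (hP : P m) (c e : ℤ) (N : Multiset ℤ)
    (hc : Multiset.card N + 1 = 2 * m - 2) (h1 : NoZ m (c ::ₘ N)) (h2 : NoZ m (e ::ₘ N)) :
    (c : ZMod m) = (e : ZMod m) := by
  by_contra hce
  obtain ⟨a, b, hab⟩ := hP _ (by simpa using hc) h1
  obtain ⟨a', b', hab'⟩ := hP _ (by simpa using hc) h2
  have hne := ne_of_P hm h1 hab
  have hne' := ne_of_P hm h2 hab'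
  have r1 : red m (c ::ₘ N) = (c : ZMod m) ::ₘ red m N := by simp [red]
  have r2 : red m (e ::ₘ N) = (e : ZMod m) ::ₘ red m N := by simp [red]
  rw [r1] at hab
  rw [r2] at hab'
  have c1 := congrArg (Multiset.count (c : ZMod m)) hab
  have c2 := congrArg (Multiset.count (c : ZMod m)) hab'
  have cm : (c : ZMod m) ∈ Multiset.replicate (m - 1) a + Multiset.replicate (m - 1) b := by
    rw [← hab]; simp
  rw [Multiset.mem_add, Multiset.mem_replicate, Multiset.mem_replicate] at cm
  simp only [Multiset.count_cons_self, Multiset.count_cons_of_ne hce, Multiset.count_add,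
    Multiset.count_replicate] at c1 c2
  have hm2 : m = 2 := by
    split_ifs at c1 c2 <;> omega
  subst hm2
  have hN : Multiset.card N = 1 := by omega
  obtain ⟨d, rfl⟩ := Multiset.card_eq_one.1 hN
  have q1 : (c : ZMod 2) ≠ d := by
    intro h
    have := count_le_of_no _ h1.red (d : ZMod 2)
    rw [r1, h] at this
    simp [red] at this
  have q2 : (e : ZMod 2) ≠ d := by
    intro h
    have := count_le_of_no _ h2.red (d : ZMod 2)
    rw [r2, h] at this
    simp [red] at this
  have : ∀ c d e : ZMod 2, c ≠ d → e ≠ d → c = e := by decide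
  exact hce (this _ _ _ q1 q2)

/-- a residue class mod `p` with more than `p` terms is constant mod `p * m` -/
theorem fibre {p m : ℕ} (hp : p.Prime) (hm : 2 ≤ m) (hP : P m) (S : Multiset ℤ)
    (hS : Multiset.card S = 2 * (p * m) - 2) (hno : NoZ (p * m) S) (a : ZMod p)
    (ha : p + 1 ≤ (red p S).count a) (x y : ℤ) (hx : x ∈ S) (hy : y ∈ S)
    (hxa : (x : ZMod p) = a) (hya : (y : ZMod p) = a) :
    (x : ZMod (p * m)) = (y : ZMod (p * m)) := by
  by_cases hxy : x = y
  · rw [hxy]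
  have hp2 := hp.two_le
  obtain ⟨S1, rfl⟩ := Multiset.exists_cons_of_mem hx
  have hy1 : y ∈ S1 := by
    rcases Multiset.mem_cons.1 hy with h | h
    · exact absurd h.symm hxy
    · exact h
  obtain ⟨S2, rfl⟩ := Multiset.exists_cons_of_mem hy1
  have r : red p (x ::ₘ y ::ₘ S2) = a ::ₘ a ::ₘ red p S2 := by simp [red, hxa, hya]
  rw [r, Multiset.count_cons_self, Multiset.count_cons_self] at ha
  obtain ⟨B, hB, hBr⟩ := exists_le_of_le_map _ S2 (Multiset.replicate (p - 1) a)
    (Multiset.le_count_iff_replicate_le.1 (by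
      change p - 1 ≤ (red p S2).count a
      omega))
  have hBc : Multiset.card B = p - 1 := by
    have := congrArg Multiset.card hBr
    simpa using this
  have hBs : ((B.sum : ℤ) : ZMod p) = (p - 1 : ℕ) • a := by
    rw [← red_sum, red, hBr, Multiset.sum_replicate]
  have blk : ∀ w : ℤ, (w : ZMod p) = a → Blk p (w ::ₘ B) := by
    intro w hw
    refine ⟨by simp [hBc]; omega, (ZMod.intCast_zmod_eq_zero_iff_dvd _ _).1 ?_⟩
    rw [Multiset.sum_cons, Int.cast_add, hw, hBs, ← succ_nsmul', Nat.sub_add_cancel (by omega)]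
    simp
  obtain ⟨R, rfl⟩ := Multiset.le_iff_exists_add.1 hB
  have hmul : 2 * (p * m) = (2 * m - 3) * p + 3 * p := by
    rw [← add_mul, show 2 * m - 3 + 3 = 2 * m by omega]; ring
  obtain ⟨Bs, h1, h2, h3⟩ := extract_many (p := p) (by omega) (2 * m - 3) (y ::ₘ R) {y} (by simp)
    (by simp; omega) (by simp at hS ⊢; omega)
  have h4 : Bs.sum ≤ R := by
    rw [add_comm, Multiset.singleton_add] at h3
    exact (Multiset.cons_le_cons_iff y).1 h3
  have bx := blk x hxa
  have bb := blk y hya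
  have n1 := merge (p := p) (m := m) ((x ::ₘ B) ::ₘ Bs) (by
    intro C hC
    rcases Multiset.mem_cons.1 hC with rfl | hC
    · exact bx
    · exact h2 C hC) (by
    rw [Multiset.sum_cons, Multiset.cons_add]
    refine Multiset.cons_le_cons _ ((add_le_add le_rfl h4).trans (Multiset.le_cons_self _ _))) hno
  have n2 := merge (p := p) (m := m) ((y ::ₘ B) ::ₘ Bs) (by
    intro C hC
    rcases Multiset.mem_cons.1 hC with rfl | hC
    · exact bb
    · exact h2 C hC) (by
    rw [Multiset.sum_cons, Multiset.cons_add]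
    refine le_trans ?_ (Multiset.le_cons_self _ _)
    exact Multiset.cons_le_cons _ (add_le_add le_rfl h4)) hno
  rw [Multiset.map_cons] at n1 n2
  have key := change_one hm hP _ _ _ (by simp [h1]; omega) n1 n2
  rw [ZMod.intCast_eq_intCast_iff_dvd_sub] at key ⊢
  obtain ⟨s, hs⟩ := bx.2
  obtain ⟨t, ht⟩ := bb.2
  have hp0 : (p : ℤ) ≠ 0 := by exact_mod_cast hp.ne_zero
  rw [hs, ht, Int.mul_ediv_cancel_left _ hp0, Int.mul_ediv_cancel_left _ hp0] at key
  rw [Multiset.sum_cons] at hs ht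
  rw [show y - x = p * (t - s) by linear_combination ht - hs]
  push_cast
  exact mul_dvd_mul_left _ key

theorem P_mul {p m : ℕ} (hp : p.Prime) (hm : 2 ≤ m) (hP : P m) : P (p * m) := by
  intro S hS hno
  have hp2 := hp.two_le
  have hpm : 2 * p ≤ p * m := by nlinarith
  have hmul : 2 * (p * m) = (2 * m - 2) * p + 2 * p := by
    rw [← add_mul, show 2 * m - 2 + 2 = 2 * m by omega]; ring
  obtain ⟨a, b, hab, -, -, hall⟩ := two_values hp (2 * m - 2) S (by omega) (by
    have := noBlocks_of_noZ hno
    rwa [show 2 * m - 1 = 2 * m - 2 + 1 by omega] at this)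
  classical
  set A := S.filter (fun x : ℤ => (x : ZMod p) = a) with hA
  set B := S.filter (fun x : ℤ => ¬ (x : ZMod p) = a) with hB
  have hSAB : A + B = S := Multiset.filter_add_not _ S
  have hAc : (red p S).count a = Multiset.card A := by
    rw [red, Multiset.count_map, hA]
    simp only [eq_comm]
  have hBc : (red p S).count b = Multiset.card B := by
    rw [red, Multiset.count_map, hB]
    congr 1
    apply Multiset.filter_congr
    intro x hx
    rcases hall x hx with h | h
    · rw [h]; simp [hab, hab.symm]
    · rw [h]; simp [hab, hab.symm]
  have hcard : Multiset.card A + Multiset.card B = 2 * (p * m) - 2 := by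
    rw [← hS, ← hSAB, Multiset.card_add]
  have const : ∀ (d : ZMod p) (C : Multiset ℤ), C ≤ S → (∀ x ∈ C, (x : ZMod p) = d) →
      (red p S).count d = Multiset.card C → p + 1 ≤ Multiset.card C →
      Multiset.card C ≤ p * m - 1 ∧
        ∃ e, red (p * m) C = Multiset.replicate (Multiset.card C) e := by
    intro d C hC hd hcnt hge
    obtain ⟨y, hy⟩ := Multiset.card_pos_iff_exists_mem.1 (by omega : 0 < Multiset.card C)
    have e1 : red (p * m) C = Multiset.replicate (Multiset.card C) (y : ZMod (p * m)) := by
      rw [Multiset.eq_replicate]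
      refine ⟨by simp [red], ?_⟩
      intro w hw
      obtain ⟨x, hx, rfl⟩ := Multiset.mem_map.1 hw
      exact fibre hp hm hP S hS hno d (by omega) x y (Multiset.mem_of_le hC hx)
        (Multiset.mem_of_le hC hy) (hd x hx) (hd y hy)
    refine ⟨?_, _, e1⟩
    have l1 := count_le_of_no _ hno.red (y : ZMod (p * m))
    have l2 := count_red_le hC (y : ZMod (p * m))
    rw [e1, Multiset.count_replicate_self] at l2
    omega
  have hA1 := const a A (Multiset.filter_le _ _) (fun x hx => (Multiset.mem_filter.1 hx).2) hAc
  have hB1 := const b B (Multiset.filter_le _ _) (fun x hx => by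
    obtain ⟨h1, h2⟩ := Multiset.mem_filter.1 hx
    exact (hall x h1).resolve_left h2) hBc
  have gA : p + 1 ≤ Multiset.card A := by
    by_contra! hcon
    have := (hB1 (by omega)).1
    omega
  have gB : p + 1 ≤ Multiset.card B := by
    by_contra! hcon
    have := (hA1 (by omega)).1
    omega
  obtain ⟨lA, e, he⟩ := hA1 gA
  obtain ⟨lB, f, hf⟩ := hB1 gB
  refine ⟨e, f, ?_⟩
  rw [← hSAB]
  have : red (p * m) (A + B) = red (p * m) A + red (p * m) B := Multiset.map_add _ _ _
  rw [this, he, hf, show Multiset.card A = p * m - 1 by omega,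
    show Multiset.card B = p * m - 1 by omega]

theorem P_all (n : ℕ) (hn : 2 ≤ n) : P n := by
  induction n using Nat.strong_induction_on with
  | _ n ih =>
    have hp := Nat.minFac_prime (show n ≠ 1 by omega)
    obtain ⟨m, hm⟩ := Nat.minFac_dvd n
    have hp2 := hp.two_le
    generalize n.minFac = p at *
    subst hm
    rcases (by omega : m = 0 ∨ m = 1 ∨ 2 ≤ m) with rfl | rfl | hm
    · simp at hn
    · rw [mul_one]; exact P_prime hp
    · exact P_mul hp hm (ih m (by nlinarith) hm)

end InvEGZ

theorem inverse_two_n_sub_two (G : Type*) [Group G] [Fintype G]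
    (hG : IsCyclic G) (n : ℕ) (hn : 2 ≤ n) (hcard : Fintype.card G = n)
    (S : Multiset G) (hS : Multiset.card S = 2 * n - 2)
    (hno : ¬ HasProdOneSubseqOfLen S n) :
    ∃ a b : G, orderOf (a * b⁻¹) = n ∧
      S = Multiset.replicate (n - 1) a + Multiset.replicate (n - 1) b := by
  have hNc : Nat.card G = n := by rw [Nat.card_eq_fintype_card, hcard]
  have e : Multiplicative (ZMod n) ≃* G := hNc ▸ zmodCyclicMulEquiv hG
  have : NeZero n := ⟨by omega⟩
  set f : G → ℤ := fun g => ((e.symm g).toAdd.val : ℤ) with hf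
  have hfc : ∀ g, ((f g : ℤ) : ZMod n) = (e.symm g).toAdd := by
    intro g; simp [hf]
  have hZ : InvEGZ.NoZ n (S.map f) := by
    intro T hT hc hd
    obtain ⟨U, hU, rfl⟩ := InvEGZ.exists_le_of_le_map _ S T hT
    refine hno ⟨U, hU, by simpa using hc, U.toList, by simp, ?_⟩
    apply e.symm.injective
    have h1 := (ZMod.intCast_zmod_eq_zero_iff_dvd _ _).2 hd
    rw [← InvEGZ.red_sum, InvEGZ.red, Multiset.map_map] at h1
    have h2 : ∀ l : List G, e.symm l.prod =
        Multiplicative.ofAdd ((l.map (fun g => ((f g : ℤ) : ZMod n))).sum) := by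
      intro l
      induction l with
      | nil => simp
      | cons g l ih =>
        rw [List.prod_cons, map_mul, ih, List.map_cons, List.sum_cons, ofAdd_add, hfc]
        rfl
    rw [h2, map_one, ← Multiset.sum_coe, ← Multiset.map_coe, Multiset.coe_toList]
    rw [show (Multiset.map (fun g => ((f g : ℤ) : ZMod n)) U).sum = 0 from h1]
    rfl
  obtain ⟨a', b', hab⟩ := InvEGZ.P_all n hn (S.map f) (by simpa using hS) hZ
  have hSeq : S = Multiset.replicate (n - 1) (e (Multiplicative.ofAdd a')) +
      Multiset.replicate (n - 1) (e (Multiplicative.ofAdd b')) := by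
    have h := congrArg (Multiset.map (fun z : ZMod n => e (Multiplicative.ofAdd z))) hab
    rw [InvEGZ.red, Multiset.map_map, Multiset.map_map, Multiset.map_add,
      Multiset.map_replicate, Multiset.map_replicate] at h
    rw [← h]
    conv_lhs => rw [← Multiset.map_id S]
    apply Multiset.map_congr rfl
    intro g _
    simp [hfc]
  generalize e (Multiplicative.ofAdd a') = a at hSeq
  generalize e (Multiplicative.ofAdd b') = b at hSeq
  refine ⟨a, b, ?_, hSeq⟩
  have hle : orderOf (a * b⁻¹) ≤ n := by rw [← hcard]; exact orderOf_le_card_univ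
  by_contra hne
  have hlt : orderOf (a * b⁻¹) < n := lt_of_le_of_ne hle hne
  have hpos : 0 < orderOf (a * b⁻¹) := orderOf_pos _
  set t := orderOf (a * b⁻¹) with ht
  refine hno ⟨Multiset.replicate t a + Multiset.replicate (n - t) b, ?_, by simp; omega,
    List.replicate t a ++ List.replicate (n - t) b, by
      rw [← Multiset.coe_add, Multiset.coe_replicate, Multiset.coe_replicate], ?_⟩
  · rw [hSeq]
    exact add_le_add ((Multiset.replicate_le_replicate a).2 (by omega))
      ((Multiset.replicate_le_replicate b).2 (by omega))
  · have hcomm : Commute a b⁻¹ := by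
      letI := hG.commGroup
      exact mul_comm _ _
    have h1 : (a * b⁻¹) ^ t = 1 := pow_orderOf_eq_one _
    rw [hcomm.mul_pow] at h1
    have h2 : b ^ n = 1 := by rw [← hcard]; exact pow_card_eq_one
    rw [List.prod_append, List.prod_replicate, List.prod_replicate]
    have h3 : a ^ t = b ^ t := by
      rw [inv_pow] at h1
      exact mul_inv_eq_one.1 h1
    rw [h3, ← pow_add, Nat.add_sub_cancel' hle, h2]
end

section
/- For the dihedral group D_{2m} of order 2m (m ≥ 2), E(D_{2m}) = 3m, where E(G) is the smallest integer t such that every sequence of t elements of G has a product-one subsequence of length |G|. -/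
open Pointwise

lemma exists_sub_card {α : Type*} (S : Multiset α) (n : ℕ) (h : n ≤ Multiset.card S) :
    ∃ T ≤ S, Multiset.card T = n := by
  induction S using Quotient.inductionOn with
  | h l =>
    refine ⟨(l.take n : List α), ?_, ?_⟩
    · exact Multiset.coe_le.2 (List.take_sublist n l).subperm
    · simpa using h

/-- The signed sums. -/
def Bal {m : ℕ} (T : Multiset (DihedralGroup m)) (v : ZMod m) : Prop :=
  ∃ U V B B' : Multiset (ZMod m), Multiset.card B = Multiset.card B' ∧
    T = U.map DihedralGroup.r + V.map DihedralGroup.r + B.map DihedralGroup.sr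
      + B'.map DihedralGroup.sr ∧
    v = U.sum - V.sum + B'.sum - B.sum

lemma Bal.add {m : ℕ} {T T' : Multiset (DihedralGroup m)} {v v' : ZMod m}
    (h : Bal T v) (h' : Bal T' v') : Bal (T + T') (v + v') := by
  obtain ⟨U, V, B, B', hc, rfl, rfl⟩ := h
  obtain ⟨U1, V1, B1, B1', hc1, rfl, rfl⟩ := h'
  refine ⟨U + U1, V + V1, B + B1, B' + B1', by simp [hc, hc1], ?_, ?_⟩
  · simp only [Multiset.map_add]; abel
  · simp only [Multiset.sum_add]; abel

lemma prod_r {m : ℕ} (l : List (ZMod m)) :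
    (l.map DihedralGroup.r).prod = DihedralGroup.r l.sum := by
  induction l with
  | nil => rfl
  | cons a l ih => simp [ih]

lemma prod_sr {m : ℕ} (l l' : List (ZMod m)) (h : l.length = l'.length) :
    ∃ L : List (DihedralGroup m), (L : Multiset (DihedralGroup m)) =
      (l : Multiset (ZMod m)).map DihedralGroup.sr + (l' : Multiset (ZMod m)).map DihedralGroup.sr ∧
      L.prod = DihedralGroup.r (l'.sum - l.sum) := by
  induction l generalizing l' with
  | nil =>
    have : l' = [] := by simpa using h.symm
    subst this
    exact ⟨[], by simp, by simp⟩
  | cons a l ih =>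
    cases l' with
    | nil => simp at h
    | cons b l' =>
      obtain ⟨L, h1, h2⟩ := ih l' (by simpa using h)
      refine ⟨DihedralGroup.sr a :: DihedralGroup.sr b :: L, ?_, ?_⟩
      · rw [← Multiset.cons_coe, ← Multiset.cons_coe, h1]
        rw [← Multiset.cons_coe a l, ← Multiset.cons_coe b l']
        simp only [Multiset.map_cons]
        simp only [← Multiset.singleton_add]
        abel
      · simp only [List.prod_cons, h2, List.sum_cons, DihedralGroup.sr_mul_r, DihedralGroup.sr_mul_sr]
        congr 1; ring

lemma Bal.prodOne {m : ℕ} {T : Multiset (DihedralGroup m)} (h : Bal T 0)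
    (hs : ∃ b, DihedralGroup.sr b ∈ T) : IsProdOne T := by
  obtain ⟨U, V, B, B', hc, rfl, hv⟩ := h
  have hB : ∃ b, b ∈ B := by
    obtain ⟨b, hb⟩ := hs
    have : B ≠ 0 := by
      rintro rfl
      have : B' = 0 := by simpa using hc.symm
      subst this
      simp at hb
    exact Multiset.exists_mem_of_ne_zero this
  have hB' : ∃ b, b ∈ B' := by
    have : B' ≠ 0 := by
      rintro rfl
      have : B = 0 := by simpa using hc
      subst this
      simp at hB
    exact Multiset.exists_mem_of_ne_zero this
  obtain ⟨b, hb⟩ := hB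
  obtain ⟨b', hb'⟩ := hB'
  obtain ⟨C, rfl⟩ := Multiset.exists_cons_of_mem hb
  obtain ⟨C', rfl⟩ := Multiset.exists_cons_of_mem hb'
  clear hb hb' hs
  induction C using Quotient.inductionOn with | h c => ?_
  induction C' using Quotient.inductionOn with | h c' => ?_
  induction U using Quotient.inductionOn with | h u => ?_
  induction V using Quotient.inductionOn with | h w => ?_
  simp only [Multiset.quot_mk_to_coe, Multiset.card_cons, Multiset.coe_card] at *
  obtain ⟨L, h1, h2⟩ := prod_sr c c' (by omega)
  refine ⟨u.map DihedralGroup.r ++ DihedralGroup.sr b :: (w.map DihedralGroup.r ++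
    DihedralGroup.sr b' :: L), ?_, ?_⟩
  · simp only [← Multiset.coe_add, ← Multiset.cons_coe, h1, Multiset.map_cons,
      ← Multiset.map_coe]
    simp only [← Multiset.singleton_add]
    abel
  · simp only [List.prod_append, List.prod_cons, prod_r, h2, DihedralGroup.sr_mul_r,
      DihedralGroup.r_mul_sr, DihedralGroup.r_mul_r, DihedralGroup.sr_mul_sr]
    rw [DihedralGroup.one_def]
    congr 1
    simp only [Multiset.sum_cons, Multiset.sum_coe] at hv
    rw [hv]; ring

lemma decomp {m : ℕ} (S : Multiset (DihedralGroup m)) :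
    ∃ R F : Multiset (ZMod m), S = R.map DihedralGroup.r + F.map DihedralGroup.sr := by
  induction S using Multiset.induction with
  | empty => exact ⟨0, 0, by simp⟩
  | cons a S ih =>
    obtain ⟨R, F, rfl⟩ := ih
    cases a with
    | r i => exact ⟨i ::ₘ R, F, by simp⟩
    | sr i => exact ⟨R, i ::ₘ F, by simp⟩

lemma prodOne_rot {m : ℕ} (T : Multiset (ZMod m)) (h : T.sum = 0) :
    IsProdOne (T.map (DihedralGroup.r : ZMod m → DihedralGroup m)) := by
  induction T using Quotient.inductionOn with | h l => ?_
  simp only [Multiset.quot_mk_to_coe, Multiset.sum_coe] at *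
  exact ⟨l.map DihedralGroup.r, by simp, by rw [prod_r, h]; rfl⟩

/-- parity of a dihedral element -/
def dsign {m : ℕ} : DihedralGroup m →* ℤˣ where
  toFun g := match g with
    | DihedralGroup.r _ => 1
    | DihedralGroup.sr _ => -1
  map_one' := rfl
  map_mul' := by rintro (a | a) (b | b) <;> simp

lemma lower (m : ℕ) (hm : 2 ≤ m) :
    ¬ HasProdOneSubseqOfLen (Multiset.replicate (2 * m - 1) (1 : DihedralGroup m) +
      Multiset.replicate (m - 1) (DihedralGroup.r 1) + {DihedralGroup.sr 0}) (2 * m) := by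
  rintro ⟨T, hT, hc, l, rfl, hl⟩
  have hns : DihedralGroup.sr 0 ∉ (l : Multiset (DihedralGroup m)) := by
    intro hmem
    obtain ⟨T', hT'⟩ := Multiset.exists_cons_of_mem hmem
    rw [hT', add_comm, Multiset.singleton_add, Multiset.cons_le_cons_iff] at hT
    have h1 : ((l : Multiset (DihedralGroup m)).map dsign).prod = 1 := by
      rw [Multiset.map_coe, Multiset.prod_coe, ← map_list_prod, hl, map_one]
    rw [hT', Multiset.map_cons, Multiset.prod_cons] at h1
    have h2 : (T'.map dsign).prod = 1 := by
      apply Multiset.prod_eq_one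
      intro x hx
      obtain ⟨y, hy, rfl⟩ := Multiset.mem_map.1 hx
      have := Multiset.mem_of_le hT hy
      rw [Multiset.mem_add, Multiset.mem_replicate, Multiset.mem_replicate] at this
      rcases this with ⟨-, rfl⟩ | ⟨-, rfl⟩
      · rfl
      · rfl
    rw [h2] at h1
    have h3 : dsign (DihedralGroup.sr 0 : DihedralGroup m) = -1 := rfl
    rw [h3] at h1
    revert h1; decide
  have hT2 : (l : Multiset (DihedralGroup m)) ≤ Multiset.replicate (2 * m - 1) (1 : DihedralGroup m) +
      Multiset.replicate (m - 1) (DihedralGroup.r 1) := by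
    rw [add_comm, Multiset.singleton_add] at hT
    exact (Multiset.le_cons_of_notMem hns).1 hT
  obtain ⟨R, F, hRF⟩ := decomp (l : Multiset (DihedralGroup m))
  have hF : F = 0 := by
    by_contra hF
    obtain ⟨x, hx⟩ := Multiset.exists_mem_of_ne_zero hF
    have : DihedralGroup.sr x ∈ (l : Multiset (DihedralGroup m)) := by
      rw [hRF]; simp [hx]
    have := Multiset.mem_of_le hT2 this
    rw [Multiset.mem_add, Multiset.mem_replicate, Multiset.mem_replicate] at this
    rcases this with ⟨-, h⟩ | ⟨-, h⟩
    · rw [DihedralGroup.one_def] at h; cases h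
    · cases h
  subst hF
  rw [Multiset.map_zero, add_zero] at hRF
  have hle : R ≤ Multiset.replicate (2 * m - 1) (0 : ZMod m) + Multiset.replicate (m - 1) 1 := by
    have : Multiset.replicate (2 * m - 1) (1 : DihedralGroup m) +
      Multiset.replicate (m - 1) (DihedralGroup.r 1) =
      (Multiset.replicate (2 * m - 1) (0 : ZMod m) + Multiset.replicate (m - 1) 1).map
        DihedralGroup.r := by
      simp
    rw [this, hRF] at hT2
    exact (Multiset.map_le_map_iff (fun a b h => by simpa using h)).1 hT2
  have hsum : R.sum = 0 := by
    induction R using Quotient.inductionOn with | h k => ?_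
    simp only [Multiset.quot_mk_to_coe, Multiset.sum_coe] at *
    have : l.Perm (k.map DihedralGroup.r) := by simpa using hRF
    have h1 : ((k.map DihedralGroup.r).map id).prod = (1 : DihedralGroup m) := by
      have hcomm : l.prod = (k.map DihedralGroup.r).prod := by
        apply this.prod_eq'
        refine List.pairwise_of_forall_mem_list ?_
        intro x hx y hy
        have hx' := this.mem_iff.1 hx
        have hy' := this.mem_iff.1 hy
        obtain ⟨a, -, rfl⟩ := List.mem_map.1 hx'
        obtain ⟨b, -, rfl⟩ := List.mem_map.1 hy'
        simp [commute_iff_eq, add_comm]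
      rw [List.map_id, ← hcomm, hl]
    rw [List.map_id, prod_r, DihedralGroup.one_def] at h1
    exact DihedralGroup.r.inj h1
  have hcR : Multiset.card R = 2 * m := by
    rw [hRF] at hc; simpa using hc
  haveI : Fact (1 < m) := ⟨by omega⟩
  have hall : ∀ x ∈ R, x = 0 ∨ x = 1 := by
    intro x hx
    have := Multiset.mem_of_le hle hx
    rw [Multiset.mem_add, Multiset.mem_replicate, Multiset.mem_replicate] at this
    tauto
  have hs2 : R.sum = (R.count 1 : ZMod m) := by
    clear * - hall
    induction R using Multiset.induction with
    | empty => simp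
    | cons a R ih =>
      rw [Multiset.sum_cons, ih (fun x hx => hall x (Multiset.mem_cons_of_mem hx))]
      rcases hall a (Multiset.mem_cons_self a R) with rfl | rfl
      · simp [Multiset.count_cons]
      · simp [Multiset.count_cons, add_comm]
  have h1c : R.count 1 ≤ m - 1 := by
    have := Multiset.count_le_of_le 1 hle
    simpa [Multiset.count_replicate] using this
  have h0c : R.count 0 ≤ 2 * m - 1 := by
    have := Multiset.count_le_of_le 0 hle
    simpa [Multiset.count_replicate] using this
  have hcc : Multiset.card R = R.count 0 + R.count 1 := by
    clear * - hall this
    induction R using Multiset.induction with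
    | empty => simp
    | cons a R ih =>
      rw [Multiset.card_cons, ih (fun x hx => hall x (Multiset.mem_cons_of_mem hx))]
      rcases hall a (Multiset.mem_cons_self a R) with rfl | rfl
      · simp [Multiset.count_cons]; omega
      · simp [Multiset.count_cons]; omega
  rw [hs2, ZMod.natCast_eq_zero_iff] at hsum
  have : R.count 1 = 0 := Nat.eq_zero_of_dvd_of_lt hsum (by omega)
  omega

/-- EGZ in a coset of a subgroup, one step. -/
lemma egz_coset {m : ℕ} [NeZero m] (K : AddSubgroup (ZMod m)) (c : ZMod m)
    (R : Multiset (ZMod m)) (hR : ∀ x ∈ R, x - c ∈ K)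
    (hc : 2 * Nat.card K ≤ Multiset.card R + 1) :
    ∃ T ≤ R, Multiset.card T = Nat.card K ∧ (T.map (· - c)).sum = 0 := by
  obtain ⟨R', hR'⟩ : ∃ R' : Multiset K, R = R'.map (fun y : K => (y : ZMod m) + c) := by
    clear hc
    induction R using Multiset.induction with
    | empty => exact ⟨0, by simp⟩
    | cons a R ih =>
      obtain ⟨R', h⟩ := ih (fun x hx => hR x (Multiset.mem_cons_of_mem hx))
      exact ⟨⟨a - c, hR a (Multiset.mem_cons_self a R)⟩ ::ₘ R', by simp [h]⟩
  have hcyc : IsAddCyclic K := inferInstance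
  let e : ZMod (Nat.card K) ≃+ K := zmodAddCyclicAddEquiv hcyc
  obtain ⟨t, ht, htc, hts⟩ := ZMod.erdos_ginzburg_ziv_multiset (R'.map e.symm) (by
    rw [hR', Multiset.card_map] at hc
    rw [Multiset.card_map]; omega)
  refine ⟨(t.map e).map (fun y : K => (y : ZMod m) + c), ?_, by simp [htc], ?_⟩
  · rw [hR']
    apply Multiset.map_le_map
    have := Multiset.map_le_map (f := e) ht
    simpa [Multiset.map_map] using this
  · rw [Multiset.map_map]
    have h1 : ((t.map e).map ((fun x => x - c) ∘ fun y : K => (y : ZMod m) + c))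
        = (t.map e).map (K.subtype) := by
      apply Multiset.map_congr rfl
      intro x _
      simp
    rw [h1, ← map_multiset_sum, ← map_multiset_sum, hts]
    simp

lemma egz_coset_iter {m : ℕ} [NeZero m] (K : AddSubgroup (ZMod m)) (c : ZMod m) (t : ℕ) :
    ∀ (R : Multiset (ZMod m)), (∀ x ∈ R, x - c ∈ K) →
    ((t + 1) * Nat.card K ≤ Multiset.card R + 1) →
    ∃ T ≤ R, Multiset.card T = t * Nat.card K ∧ (T.map (· - c)).sum = 0 := by
  induction t with
  | zero => intro R _ _; exact ⟨0, by simp, by simp, by simp⟩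
  | succ t ih =>
    intro R hR hc
    have hexp : (t + 1 + 1) * Nat.card K = t * Nat.card K + 2 * Nat.card K := by ring
    obtain ⟨T, hT, hTc, hTs⟩ := egz_coset K c R hR (by rw [hexp] at hc; omega)
    have hc2 := Multiset.card_sub hT
    obtain ⟨T', hT', hTc', hTs'⟩ := ih (R - T)
      (fun x hx => hR x (Multiset.mem_of_le (Multiset.sub_le_self R T) hx)) (by
        rw [hc2, hTc]
        have : (t + 1) * Nat.card K = t * Nat.card K + Nat.card K := by ring
        rw [hexp] at hc; omega)
    refine ⟨T + T', ?_, ?_, ?_⟩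
    · calc T + T' ≤ T + (R - T) := by gcongr
        _ = R := add_tsub_cancel_of_le hT
    · rw [Multiset.card_add, hTc, hTc']; ring
    · rw [Multiset.map_add, Multiset.sum_add, hTs, hTs', add_zero]

lemma sum_map_sub_const {m : ℕ} (T : Multiset (ZMod m)) (c : ZMod m) :
    (T.map (· - c)).sum = T.sum - (Multiset.card T : ZMod m) * c := by
  induction T using Multiset.induction with
  | empty => simp
  | cons a T ih => simp [ih]; ring

lemma egz_coset_full {m : ℕ} [NeZero m] (K : AddSubgroup (ZMod m)) (c : ZMod m)
    (R : Multiset (ZMod m)) (hR : ∀ x ∈ R, x - c ∈ K)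
    (hc : 2 * m + Nat.card K ≤ Multiset.card R + 1) :
    ∃ T ≤ R, Multiset.card T = 2 * m ∧ T.sum = 0 := by
  have hd : Nat.card K ∣ m := by
    have := K.card_addSubgroup_dvd_card
    simpa using this
  obtain ⟨u, hu⟩ := hd
  have hu' : (2 * u) * Nat.card K = 2 * m := by
    conv_rhs => rw [hu]
    ring
  obtain ⟨T, hT, hTc, hTs⟩ := egz_coset_iter K c (2 * u) R hR (by
    rw [add_mul, hu']; omega)
  rw [hu'] at hTc
  refine ⟨T, hT, hTc, ?_⟩
  rw [sum_map_sub_const, hTc] at hTs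
  simpa using hTs

/-- all sums picking one from each pair -/
def PX {m : ℕ} : List (ZMod m × ZMod m) → Finset (ZMod m)
  | [] => {0}
  | p :: P => (PX P).image (p.1 + ·) ∪ (PX P).image (p.2 + ·)

/-- all elements of the pairs -/
def els {m : ℕ} : List (ZMod m × ZMod m) → Multiset (ZMod m)
  | [] => 0
  | p :: P => p.1 ::ₘ p.2 ::ₘ els P

/-- stabilizer of a finset -/
def stab {m : ℕ} (X : Finset (ZMod m)) : AddSubgroup (ZMod m) where
  carrier := {g | ∀ v, v ∈ X ↔ v + g ∈ X}
  zero_mem' := by simp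
  add_mem' := by
    intro a b ha hb v
    rw [ha v, hb (v + a), add_assoc]
  neg_mem' := by
    intro a ha v
    rw [ha (v + -a)]; simp

lemma mem_stab {m : ℕ} {X : Finset (ZMod m)} {g : ZMod m} :
    g ∈ stab X ↔ ∀ v, v ∈ X ↔ v + g ∈ X := Iff.rfl

lemma card_els {m : ℕ} (P : List (ZMod m × ZMod m)) :
    Multiset.card (els P) = 2 * P.length := by
  induction P with
  | nil => rfl
  | cons p P ih => simp [els, ih]; ring

lemma els_append {m : ℕ} (P Q : List (ZMod m × ZMod m)) :
    els (P ++ Q) = els P + els Q := by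
  induction P with
  | nil => simp [els]
  | cons p P ih => simp [els, ih]

lemma PX_nonempty {m : ℕ} (P : List (ZMod m × ZMod m)) : (PX P).Nonempty := by
  induction P with
  | nil => exact ⟨0, by simp [PX]⟩
  | cons p P ih => obtain ⟨v, hv⟩ := ih; exact ⟨p.1 + v, by simp [PX, hv]⟩

lemma exists_of_mem_PX {m : ℕ} (P : List (ZMod m × ZMod m)) :
    ∀ v ∈ PX P, ∃ A ≤ els P, Multiset.card A = P.length ∧ A.sum = v := by
  induction P with
  | nil => intro v hv; exact ⟨0, by simp, by simp, by simpa [PX, eq_comm] using hv⟩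
  | cons p P ih =>
    intro v hv
    simp only [PX, Finset.mem_union, Finset.mem_image] at hv
    rcases hv with ⟨w, hw, rfl⟩ | ⟨w, hw, rfl⟩
    · obtain ⟨A, hA, hc, hs⟩ := ih w hw
      refine ⟨p.1 ::ₘ A, ?_, by simp [hc], by simp [hs]⟩
      exact Multiset.cons_le_cons _ (hA.trans (Multiset.le_cons_self _ _))
    · obtain ⟨A, hA, hc, hs⟩ := ih w hw
      refine ⟨p.2 ::ₘ A, ?_, by simp [hc], by simp [hs]⟩
      rw [els]
      exact (Multiset.cons_le_cons _ hA).trans (Multiset.le_cons_self _ _)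

lemma snd_sum_mem_PX {m : ℕ} (P : List (ZMod m × ZMod m)) : (P.map Prod.snd).sum ∈ PX P := by
  induction P with
  | nil => simp [PX]
  | cons p P ih =>
    simp only [PX, Finset.mem_union, Finset.mem_image, List.map_cons, List.sum_cons]
    right; exact ⟨_, ih, rfl⟩

/-- If a pair does not grow the sumset, its difference stabilizes. -/
lemma grow_or_stab {m : ℕ} (P : List (ZMod m × ZMod m)) (x y : ZMod m)
    (h : (PX ((x, y) :: P)).card ≤ (PX P).card) : x - y ∈ stab (PX P) := by
  simp only [PX] at h
  set X := PX P
  have c1 : (X.image (x + ·)).card = X.card :=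
    Finset.card_image_of_injective _ (add_right_injective x)
  have c2 : (X.image (y + ·)).card = X.card :=
    Finset.card_image_of_injective _ (add_right_injective y)
  have e1 : X.image (x + ·) = X.image (x + ·) ∪ X.image (y + ·) :=
    Finset.eq_of_subset_of_card_le Finset.subset_union_left (by rw [c1]; exact h)
  have e2 : X.image (y + ·) = X.image (x + ·) ∪ X.image (y + ·) :=
    Finset.eq_of_subset_of_card_le Finset.subset_union_right (by rw [c2]; exact h)
  have e3 : X.image (x + ·) = X.image (y + ·) := e1.trans e2.symm
  rw [mem_stab]
  intro v
  have a1 : v ∈ X ↔ x + v ∈ X.image (x + ·) := by simp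
  have a2 : v + (x - y) ∈ X ↔ x + v ∈ X.image (y + ·) := by
    simp only [Finset.mem_image]
    constructor
    · intro h; exact ⟨_, h, by ring⟩
    · rintro ⟨w, hw, h⟩
      have : v + (x - y) = w := by linear_combination -h
      rwa [this]
  rw [a1, a2, e3]

lemma stab_cons {m : ℕ} (P : List (ZMod m × ZMod m)) (p : ZMod m × ZMod m) :
    stab (PX P) ≤ stab (PX (p :: P)) := by
  intro g hg
  rw [mem_stab] at *
  intro v
  simp only [PX, Finset.mem_union, Finset.mem_image]
  have key : ∀ a : ZMod m, (∃ w ∈ PX P, a + w = v) ↔ (∃ w ∈ PX P, a + w = v + g) := by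
    intro a
    constructor
    · rintro ⟨w, hw, rfl⟩
      exact ⟨w + g, (hg w).1 hw, by ring⟩
    · rintro ⟨w, hw, h⟩
      refine ⟨w - g, ?_, by linear_combination h⟩
      rw [hg (w - g)]; simpa using hw
  rw [key, key]

lemma stab_append {m : ℕ} (Q P : List (ZMod m × ZMod m)) :
    stab (PX P) ≤ stab (PX (Q ++ P)) := by
  induction Q with
  | nil => exact le_rfl
  | cons q Q ih => exact ih.trans (stab_cons _ _)

lemma exists_max_list {α : Type*} (p : List α → Prop) (N : ℕ) (hN : ∀ P, p P → P.length ≤ N)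
    (h0 : ∃ P, p P) : ∃ P, p P ∧ ∀ Q, p Q → Q.length ≤ P.length := by
  classical
  have hex : ∃ k, ∃ P, p P ∧ N - P.length = k := by
    obtain ⟨P, hP⟩ := h0; exact ⟨_, P, hP, rfl⟩
  obtain ⟨P, hP, hk⟩ := Nat.find_spec hex
  refine ⟨P, hP, fun Q hQ => ?_⟩
  have := Nat.find_min' hex ⟨Q, hQ, rfl⟩
  have h1 := hN P hP
  have h2 := hN Q hQ
  omega

lemma cons2_le {α : Type*} [DecidableEq α] {A B : Multiset α} {x y : α} (hB : B ≤ A)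
    (hx : x ∈ A - B) (hy : y ∈ A - B) (hxy : x ≠ y) : x ::ₘ y ::ₘ B ≤ A := by
  rw [Multiset.le_iff_count]
  intro a
  have h0 := Multiset.count_le_of_le a hB
  have hx' := Multiset.count_pos.2 hx
  have hy' := Multiset.count_pos.2 hy
  rw [Multiset.count_sub] at hx' hy'
  rw [Multiset.count_cons, Multiset.count_cons]
  by_cases h1 : a = x
  · subst h1; rw [if_neg hxy, if_pos rfl]; omega
  · rw [if_neg h1]
    by_cases h2 : a = y
    · subst h2; rw [if_pos rfl]; omega
    · rw [if_neg h2]; omega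

lemma PX_coset {m : ℕ} (K : AddSubgroup (ZMod m)) (c : ZMod m) (P : List (ZMod m × ZMod m))
    (h : ∀ x ∈ els P, x - c ∈ K) : ∀ v ∈ PX P, v - (P.length : ZMod m) * c ∈ K := by
  induction P with
  | nil => intro v hv; have : v = 0 := by simpa [PX] using hv
           subst this; simp
  | cons p P ih =>
    intro v hv
    have ih' := ih (fun x hx => h x (by simp [els, hx]))
    have k1 := h p.1 (by simp [els])
    have k2 := h p.2 (by simp [els])
    simp only [PX, Finset.mem_union, Finset.mem_image] at hv
    rcases hv with ⟨w, hw, rfl⟩ | ⟨w, hw, rfl⟩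
    · have := K.add_mem k1 (ih' w hw)
      convert this using 1
      simp only [List.length_cons]; push_cast; ring
    · have := K.add_mem k2 (ih' w hw)
      convert this using 1
      simp only [List.length_cons]; push_cast; ring

open Classical in
lemma exists_finset {m : ℕ} [NeZero m] (K : AddSubgroup (ZMod m)) :
    ∃ s : Finset (ZMod m), (∀ x, x ∈ s ↔ x ∈ K) ∧ s.card = Nat.card K := by
  refine ⟨Finset.univ.filter (· ∈ K), by simp, ?_⟩
  rw [Nat.card_eq_fintype_card, Fintype.card_subtype]

open Classical in
lemma phase1 {m : ℕ} [NeZero m] (R : Multiset (ZMod m)) (n : ℕ)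
    (hR : 2 * m + n ≤ Multiset.card R) :
    ∃ (K : AddSubgroup (ZMod m)) (c : ZMod m) (P : List (ZMod m × ZMod m)),
      els P ≤ R.filter (fun x => x - c ∈ K) ∧ P.length + 1 ≤ (PX P).card ∧ P.length ≤ n + 2 ∧
      (P.length = n + 2 ∨ (K ≤ stab (PX P) ∧ P.length + 1 ≤ Nat.card K ∧
        2 * Nat.card K + n ≤ Multiset.card (R.filter (fun x => x - c ∈ K)))) := by
  have hex : ∃ k, ∃ (K : AddSubgroup (ZMod m)) (c : ZMod m), Nat.card K = k ∧
      2 * Nat.card K + n ≤ Multiset.card (R.filter (fun x => x - c ∈ K)) := by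
    refine ⟨m, ⊤, 0, by simp, ?_⟩
    have : R.filter (fun x => x - 0 ∈ (⊤ : AddSubgroup (ZMod m))) = R := by simp
    rw [this]; simpa using hR
  obtain ⟨K, c, hk, hK⟩ := Nat.find_spec hex
  have hmin : ∀ (K1 : AddSubgroup (ZMod m)) (c1 : ZMod m), Nat.card K1 < Nat.card K →
      ¬ 2 * Nat.card K1 + n ≤ Multiset.card (R.filter (fun x => x - c1 ∈ K1)) := by
    intro K1 c1 hlt hle
    exact Nat.find_min hex (hk ▸ hlt) ⟨K1, c1, rfl, hle⟩
  clear hk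
  set filt := R.filter (fun x => x - c ∈ K) with hfilt
  obtain ⟨P, ⟨hP1, hP2, hP3⟩, hmax⟩ := exists_max_list
    (fun P : List (ZMod m × ZMod m) => els P ≤ filt ∧ P.length + 1 ≤ (PX P).card ∧
      P.length ≤ n + 2) (n + 2) (fun P h => h.2.2) ⟨[], by simp [els], by simp [PX], by simp⟩
  refine ⟨K, c, P, hP1, hP2, hP3, ?_⟩
  by_cases hlen : P.length = n + 2
  · exact Or.inl hlen
  right
  have hst : ∀ x ∈ filt - els P, ∀ y ∈ filt - els P, x - y ∈ stab (PX P) := by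
    intro x hx y hy
    by_cases hxy : x = y
    · subst hxy; rw [sub_self]; exact zero_mem _
    apply grow_or_stab
    by_contra hgt
    have := hmax ((x, y) :: P) ⟨cons2_le hP1 hx hy hxy, by simp only [List.length_cons]; omega,
      by simp only [List.length_cons]; omega⟩
    simp at this
  have hcos := PX_coset K c P (fun x hx => by
    have := Multiset.mem_of_le hP1 hx
    rw [hfilt, Multiset.mem_filter] at this
    exact this.2)
  obtain ⟨v0, hv0⟩ := PX_nonempty P
  obtain ⟨s, hs, hsc⟩ := exists_finset K
  set a := (P.length : ZMod m) * c with ha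
  have hXs : PX P ⊆ s.image (a + ·) := by
    intro v hv
    exact Finset.mem_image.2 ⟨v - a, (hs _).2 (hcos v hv), by ring⟩
  have hsi : (s.image (a + ·)).card = Nat.card K := by
    rw [Finset.card_image_of_injective _ (add_right_injective a), hsc]
  have hle := Finset.card_le_card hXs
  rw [hsi] at hle
  by_cases hKs : K ≤ stab (PX P)
  · exact ⟨hKs, by omega, hK⟩
  exfalso
  have hsK : stab (PX P) ≤ K := by
    intro g hg
    have h1 := (hg v0).1 hv0
    have := K.sub_mem (hcos _ h1) (hcos _ hv0)
    convert this using 1; ring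
  obtain ⟨w, hwK, hw⟩ : ∃ w ∈ K, a + w ∉ PX P := by
    by_contra hcon
    push Not at hcon
    apply hKs
    intro g hg v
    constructor
    · intro hv
      have := hcon (v - a + g) (K.add_mem (hcos v hv) hg)
      convert this using 1; ring
    · intro hv
      have := hcon (v + g - a - g) (K.sub_mem (hcos _ hv) hg)
      convert this using 1; ring
  obtain ⟨s1, hs1, hsc1⟩ := exists_finset (stab (PX P))
  have hdisj : Disjoint (PX P) (s1.image (a + w + ·)) := by
    rw [Finset.disjoint_left]
    intro v hv hv'
    obtain ⟨g, hg, rfl⟩ := Finset.mem_image.1 hv'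
    exact hw (((hs1 g).1 hg (a + w)).2 hv)
  have hsub : PX P ∪ s1.image (a + w + ·) ⊆ s.image (a + ·) := by
    apply Finset.union_subset hXs
    intro v hv
    obtain ⟨g, hg, rfl⟩ := Finset.mem_image.1 hv
    refine Finset.mem_image.2 ⟨w + g, (hs _).2 (K.add_mem hwK (hsK ((hs1 g).1 hg))), ?_⟩
    ring
  have hcc := Finset.card_le_card hsub
  rw [Finset.card_union_of_disjoint hdisj, hsi,
    Finset.card_image_of_injective _ (add_right_injective (a + w)), hsc1] at hcc
  have hrest := Multiset.card_sub hP1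
  rw [card_els] at hrest
  obtain ⟨x0, hx0⟩ : ∃ x, x ∈ filt - els P := by
    apply Multiset.card_pos_iff_exists_mem.1
    omega
  apply hmin (stab (PX P)) x0 (by omega)
  have hle2 : filt - els P ≤ R.filter (fun x => x - x0 ∈ stab (PX P)) := by
    rw [Multiset.le_filter]
    refine ⟨(Multiset.sub_le_self _ _).trans (Multiset.filter_le _ _), ?_⟩
    intro x hx
    exact hst x hx x0 hx0
  have := Multiset.card_le_card hle2
  omega

/-- counting translates of `F` against `X` -/
lemma final_count {m : ℕ} [NeZero m] (X F : Finset (ZMod m)) (e : ZMod m)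
    (K : AddSubgroup (ZMod m)) (hK : K ≤ stab X) (hF : F.Nonempty)
    (hd : ∀ b ∈ F, ∀ b' ∈ F, b ≠ b' → b - b' ∉ K)
    (hno : ∀ b ∈ F, ∀ b' ∈ F, b ≠ b' → b - b' - e ∉ X) :
    X.card + (F.card - 1) * Nat.card K ≤ m := by
  obtain ⟨b1, hb1⟩ := hF
  obtain ⟨s, hs, hsc⟩ := exists_finset K
  set Y := ((F.erase b1) ×ˢ s).image (fun p => p.1 - b1 - e + p.2) with hY
  have hYc : Y.card = (F.card - 1) * Nat.card K := by
    rw [hY, Finset.card_image_of_injOn, Finset.card_product, Finset.card_erase_of_mem hb1, hsc]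
    rintro ⟨b, g⟩ hbg ⟨b', g'⟩ hbg' h
    simp only [Finset.coe_product, Set.mem_prod, Finset.mem_coe, Finset.mem_erase] at hbg hbg' h
    have h1 : b - b' = g' - g := by linear_combination h
    by_cases hbb : b = b'
    · subst hbb
      have : g = g' := by linear_combination h
      subst this; rfl
    · exfalso
      apply hd b hbg.1.2 b' hbg'.1.2 hbb
      rw [h1]
      exact K.sub_mem ((hs _).1 hbg'.2) ((hs _).1 hbg.2)
  have hdisj : Disjoint X Y := by
    rw [Finset.disjoint_left]
    intro v hv hv'
    obtain ⟨⟨b, g⟩, hbg, rfl⟩ := Finset.mem_image.1 hv'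
    simp only [Finset.mem_product, Finset.mem_erase] at hbg
    apply hno b hbg.1.2 b1 hb1 hbg.1.1
    exact ((hK ((hs g).1 hbg.2)) _).2 hv
  have := Finset.card_le_univ (X ∪ Y)
  rw [Finset.card_union_of_disjoint hdisj, hYc, ZMod.card] at this
  exact this

lemma sum_coset {m : ℕ} (K : AddSubgroup (ZMod m)) (c : ZMod m) (A : Multiset (ZMod m))
    (h : ∀ x ∈ A, x - c ∈ K) : A.sum - (Multiset.card A : ZMod m) * c ∈ K := by
  rw [← sum_map_sub_const]
  apply AddSubgroup.multiset_sum_mem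
  intro x hx
  obtain ⟨y, hy, rfl⟩ := Multiset.mem_map.1 hx
  exact h y hy

/-- Fill up the choice of one element from each pair by a fixed filler. -/
lemma filler {m : ℕ} [NeZero m] (R : Multiset (ZMod m)) (n : ℕ)
    (hR : Multiset.card R = 2 * m + n) (P : List (ZMod m × ZMod m)) (hP : els P ≤ R)
    (hl : P.length ≤ n + 2) (hX : P.length + 1 ≤ (PX P).card) :
    ∃ W V : Multiset (ZMod m), W + V ≤ R - els P ∧ Multiset.card W + P.length = m - 1 ∧
      Multiset.card V = m - 1 ∧ ∀ v ∈ PX P, ∃ U, U + V ≤ R ∧ Multiset.card U = m - 1 ∧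
        U.sum - V.sum = v + (W.sum - V.sum) := by
  have hm : 0 < m := Nat.pos_of_ne_zero (NeZero.ne m)
  have h1 : (PX P).card ≤ m := by
    have := Finset.card_le_univ (PX P); rwa [ZMod.card] at this
  have h2 := Multiset.card_sub hP
  rw [card_els, hR] at h2
  obtain ⟨Z, hZ, hZc⟩ := exists_sub_card (R - els P) (m - 1 - P.length + (m - 1)) (by omega)
  obtain ⟨W, hW, hWc⟩ := exists_sub_card Z (m - 1 - P.length) (by omega)
  have hWV : W + (Z - W) = Z := add_tsub_cancel_of_le hW
  have hVc := Multiset.card_sub hW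
  refine ⟨W, Z - W, by rw [hWV]; exact hZ, by omega, by omega, ?_⟩
  intro v hv
  obtain ⟨A, hA, hAc, rfl⟩ := exists_of_mem_PX P v hv
  refine ⟨A + W, ?_, by rw [Multiset.card_add]; omega, by rw [Multiset.sum_add]; ring⟩
  rw [add_assoc, hWV]
  calc A + Z ≤ els P + (R - els P) := add_le_add hA hZ
    _ = R := add_tsub_cancel_of_le hP

open Classical in
lemma rot_lemma {m : ℕ} [NeZero m] (R : Multiset (ZMod m)) (n : ℕ)
    (hR : Multiset.card R = 2 * m + n) (F : Finset (ZMod m)) (hF : F.card + n = m)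
    (hF2 : 2 ≤ F.card) :
    (∃ T ≤ R, Multiset.card T = 2 * m ∧ T.sum = 0) ∨
    ∃ U V : Multiset (ZMod m), U + V ≤ R ∧ Multiset.card U = m - 1 ∧ Multiset.card V = m - 1 ∧
      ∃ b ∈ F, ∃ b' ∈ F, b ≠ b' ∧ U.sum - V.sum = b - b' := by
  by_contra hcon
  push Not at hcon
  obtain ⟨hz, hcon⟩ := hcon
  have hm : 0 < m := Nat.pos_of_ne_zero (NeZero.ne m)
  have hFne : F.Nonempty := Finset.card_pos.1 (by omega)
  -- the size case
  have size : ∀ P : List (ZMod m × ZMod m), els P ≤ R → P.length = n + 2 →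
      P.length + 1 ≤ (PX P).card → False := by
    intro P hP hl hX
    obtain ⟨W, V, -, -, hVc, hUV⟩ := filler R n hR P hP hl.le hX
    have := final_count (PX P) F (W.sum - V.sum) ⊥ bot_le hFne
      (by intro b _ b' _ hbb; simpa [sub_eq_zero] using hbb)
      (by
        intro b hb b' hb' hbb hmem
        obtain ⟨U, hU1, hU2, hU3⟩ := hUV _ hmem
        exact hcon U V hU1 hU2 hVc b hb b' hb' hbb (by rw [hU3]; ring))
    simp at this
    omega
  obtain ⟨K, c, P1, hP1, hX1, hl1, hor⟩ := phase1 R n (by omega)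
  have hP1R : els P1 ≤ R := hP1.trans (Multiset.filter_le _ _)
  rcases hor with hl | ⟨hKs, hlk, hcf⟩
  · exact size P1 hP1R hl hX1
  obtain ⟨Q, ⟨hQ1, hQ2, hQ3, hQ4⟩, hmax⟩ := exists_max_list
    (fun Q : List (ZMod m × ZMod m) => els (Q ++ P1) ≤ R ∧
      (∀ p ∈ Q, p.1 - c ∉ K ∧ p.2 - c ∈ K) ∧ (Q ++ P1).length + 1 ≤ (PX (Q ++ P1)).card ∧
      (Q ++ P1).length ≤ n + 2) (n + 2)
    (fun Q h => by have := h.2.2.2; rw [List.length_append] at this; omega)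
    ⟨[], by simpa using hP1R, by simp, by simpa using hX1, by simpa using hl1⟩
  by_cases hl : (Q ++ P1).length = n + 2
  · exact size _ hQ1 hl hQ3
  have hlen : (Q ++ P1).length = Q.length + P1.length := List.length_append
  set P := Q ++ P1 with hPdef
  set K' := stab (PX P) with hK'
  have hKK' : K ≤ K' := hKs.trans (stab_append Q P1)
  -- K-partners in the rest
  have hcountQ : ∀ Q : List (ZMod m × ZMod m), (∀ p ∈ Q, p.1 - c ∉ K ∧ p.2 - c ∈ K) →
      Multiset.card ((els Q).filter (fun x => x - c ∈ K)) = Q.length ∧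
      Multiset.card ((els Q).filter (fun x => ¬ x - c ∈ K)) = Q.length := by
    intro Q
    induction Q with
    | nil => intro _; simp [els]
    | cons p Q ih =>
      intro h
      obtain ⟨i1, i2⟩ := ih (fun p hp => h p (List.mem_cons_of_mem _ hp))
      obtain ⟨j1, j2⟩ := h p List.mem_cons_self
      constructor
      · simp [els, Multiset.filter_cons, j1, j2, i1]
      · simp [els, Multiset.filter_cons, j1, j2, i2]
  obtain ⟨hq1, hq2⟩ := hcountQ Q hQ2
  have hels : els P = els Q + els P1 := els_append Q P1
  have hP1f : ∀ x ∈ els P1, x - c ∈ K := by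
    intro x hx
    have := Multiset.mem_of_le hP1 hx
    rw [Multiset.mem_filter] at this
    exact this.2
  obtain ⟨z, hz0, hzK⟩ : ∃ z, z ∈ R - els P ∧ z - c ∈ K := by
    have h1 : Multiset.card ((els P).filter (fun x => x - c ∈ K)) = Q.length + 2 * P1.length := by
      rw [hels, Multiset.filter_add, Multiset.card_add, hq1, Multiset.filter_eq_self.2 hP1f,
        card_els]
    have h2 : Multiset.card (R.filter (fun x => x - c ∈ K)) =
        Multiset.card ((R - els P).filter (fun x => x - c ∈ K)) +
        Multiset.card ((els P).filter (fun x => x - c ∈ K)) := by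
      rw [← Multiset.card_add, ← Multiset.filter_add, tsub_add_cancel_of_le hQ1]
    have h3 : 0 < Multiset.card ((R - els P).filter (fun x => x - c ∈ K)) := by omega
    obtain ⟨z, hz⟩ := Multiset.card_pos_iff_exists_mem.1 h3
    exact ⟨z, Multiset.mem_filter.1 hz⟩
  have hrest : ∀ x ∈ R - els P, x - c ∈ K' := by
    intro x hx
    by_cases hxK : x - c ∈ K
    · exact hKK' hxK
    have hxz : x ≠ z := by rintro rfl; exact hxK hzK
    have : x - z ∈ K' := by
      apply grow_or_stab
      by_contra hgt
      have := hmax ((x, z) :: Q) ⟨cons2_le hQ1 hx hz0 hxz, by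
          intro p hp
          rcases List.mem_cons.1 hp with rfl | hp
          · exact ⟨hxK, hzK⟩
          · exact hQ2 p hp,
        by rw [List.cons_append, ← hPdef, List.length_cons]; omega,
        by rw [List.cons_append, ← hPdef, List.length_cons]; omega⟩
      simp at this
    have := K'.add_mem this (hKK' hzK)
    convert this using 1; ring
  -- few elements are outside c + K'
  have hout : Multiset.card (R.filter (fun x => ¬ x - c ∈ K')) ≤ Q.length := by
    have hR' : R = (R - els P) + (els Q + els P1) := by
      rw [← hels, tsub_add_cancel_of_le hQ1]
    have f1 : (R - els P).filter (fun x => ¬ x - c ∈ K') = 0 :=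
      Multiset.filter_eq_nil.2 (fun x hx => by simpa using hrest x hx)
    have f2 : (els P1).filter (fun x => ¬ x - c ∈ K') = 0 :=
      Multiset.filter_eq_nil.2 (fun x hx => by simpa using hKK' (hP1f x hx))
    rw [hR', Multiset.filter_add, Multiset.filter_add, f1, f2, zero_add, add_zero, ← hq2]
    apply Multiset.card_le_card
    apply Multiset.monotone_filter_right
    intro x hx hx'
    exact hx (hKK' hx')
  have hin : Multiset.card (R.filter (fun x => x - c ∈ K')) +
      Multiset.card (R.filter (fun x => ¬ x - c ∈ K')) = 2 * m + n := by
    rw [← Multiset.card_add, Multiset.filter_add_not, hR]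
  have hQbig : n + 2 ≤ Q.length + Nat.card K' := by
    by_contra hlt
    obtain ⟨T, hT, hTc, hTs⟩ := egz_coset_full K' c (R.filter (fun x => x - c ∈ K'))
      (fun x hx => (Multiset.mem_filter.1 hx).2) (by omega)
    exact hz T (hT.trans (Multiset.filter_le _ _)) hTc hTs
  obtain ⟨W, V, hWV, hWc, hVc, hUV⟩ := filler R n hR P hQ1 hQ4 hQ3
  have hno : ∀ b ∈ F, ∀ b' ∈ F, b ≠ b' → b - b' - (W.sum - V.sum) ∉ PX P := by
    intro b hb b' hb' hbb hmem
    obtain ⟨U, hU1, hU2, hU3⟩ := hUV _ hmem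
    exact hcon U V hU1 hU2 hVc b hb b' hb' hbb (by rw [hU3]; ring)
  -- an element of X + e in K'
  have hv0 := snd_sum_mem_PX P
  set v0 := (P.map Prod.snd).sum with hv0def
  have hv0K : v0 + (W.sum - V.sum) ∈ K' := by
    have s1 := sum_coset K' c ((P.map Prod.snd : List (ZMod m)) : Multiset (ZMod m)) (by
      intro x hx
      rw [Multiset.mem_coe, List.mem_map] at hx
      obtain ⟨p, hp, rfl⟩ := hx
      apply hKK'
      rw [hPdef, List.mem_append] at hp
      rcases hp with hp | hp
      · exact (hQ2 p hp).2
      · apply hP1f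
        clear * - hp
        induction P1 with
        | nil => simp at hp
        | cons q P1 ih =>
          rcases List.mem_cons.1 hp with rfl | hp
          · simp [els]
          · simp [els, ih hp])
    have s2 := sum_coset K' c W (fun x hx => hrest x (Multiset.mem_of_le hWV (by simp [hx])))
    have s3 := sum_coset K' c V (fun x hx => hrest x (Multiset.mem_of_le hWV (by simp [hx])))
    have s4 := K'.sub_mem (K'.add_mem s1 s2) s3
    convert s4 using 1
    rw [hVc, ← hWc, Multiset.sum_coe, Multiset.coe_card, List.length_map]
    push_cast; ring
  have hd : ∀ b ∈ F, ∀ b' ∈ F, b ≠ b' → b - b' ∉ K' := by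
    intro b hb b' hb' hbb hmem
    apply hno b hb b' hb' hbb
    have h1 := K'.sub_mem hmem hv0K
    have := (h1 v0).1 hv0
    convert this using 1; ring
  have hfin := final_count (PX P) F (W.sum - V.sum) K' le_rfl hFne hd hno
  have hkpos : 1 ≤ Nat.card K' := Nat.card_pos
  obtain ⟨g, hg⟩ : ∃ g, F.card = g + 2 := ⟨F.card - 2, by omega⟩
  have e1 : (F.card - 1) * Nat.card K' = g * Nat.card K' + Nat.card K' := by
    rw [hg]; simp; ring
  rw [e1] at hfin
  have e2 : g ≤ g * Nat.card K' := Nat.le_mul_of_pos_right g hkpos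
  omega

lemma pair0 {m : ℕ} (hm : 2 ≤ m) (O : Finset (ZMod m)) (c : ZMod m) (N : ℕ)
    (h : ∀ x ∈ O, (x - c).val / 2 < N) :
    ∃ J : Multiset (ZMod m), J + J.map (· + 1) ≤ O.val ∧ O.card ≤ Multiset.card J + N := by
  have : NeZero m := ⟨by omega⟩
  have : Fact (1 < m) := ⟨by omega⟩
  have hsucc : ∀ x : ZMod m, (x - c).val + 1 < m → (x + 1 - c).val = (x - c).val + 1 := by
    intro x hx
    have : x + 1 - c = (x - c) + 1 := by ring
    rw [this, ZMod.val_add_of_lt, ZMod.val_one]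
    rwa [ZMod.val_one]
  set J : Finset (ZMod m) := O.filter (fun x => (x - c).val % 2 = 0 ∧ (x - c).val + 1 < m ∧
    x + 1 ∈ O) with hJ
  set J1 := J.image (· + 1) with hJ1
  have hJc : J1.card = J.card := Finset.card_image_of_injective _ (add_left_injective 1)
  refine ⟨J.val, ?_, ?_⟩
  · have e : J.val.map (· + 1) = J1.val := by
      rw [hJ1, Finset.image_val_of_injOn]
      exact (add_left_injective 1).injOn
    rw [e, Multiset.le_iff_subset]
    · intro x hx
      rcases Multiset.mem_add.1 hx with hx | hx
      · exact (Finset.mem_filter.1 (Finset.mem_def.2 hx)).1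
      · obtain ⟨y, hy, rfl⟩ := Finset.mem_image.1 (Finset.mem_def.2 hx)
        exact (Finset.mem_filter.1 hy).2.2.2
    · rw [Multiset.nodup_add]
      refine ⟨J.nodup, J1.nodup, ?_⟩
      rw [Multiset.disjoint_left]
      intro x hx hx'
      obtain ⟨y, hy, rfl⟩ := Finset.mem_image.1 (Finset.mem_def.2 hx')
      have h1 := (Finset.mem_filter.1 (Finset.mem_def.2 hx)).2.1
      have h2 := (Finset.mem_filter.1 hy).2
      rw [hsucc y h2.2.1] at h1
      omega
  · have hinj : Set.InjOn (fun x : ZMod m => (x - c).val / 2) (O \ J1 : Finset (ZMod m)) := by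
      have key : ∀ x ∈ O \ J1, ∀ y ∈ O \ J1, (x - c).val / 2 = (y - c).val / 2 →
          (x - c).val < (y - c).val → False := by
        intro x hx y hy hxy hlt
        have hyl := ZMod.val_lt (y - c)
        have h3 : (x + 1 - c).val = (y - c).val := by rw [hsucc x (by omega)]; omega
        have h4 : x + 1 = y := by
          have := ZMod.val_injective m h3
          linear_combination this
        rw [Finset.mem_sdiff] at hx hy
        apply hy.2
        rw [hJ1, Finset.mem_image]
        refine ⟨x, ?_, h4⟩
        rw [hJ, Finset.mem_filter]
        exact ⟨hx.1, by omega, by omega, h4 ▸ hy.1⟩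
      intro x hx y hy hxy
      simp only [Finset.mem_coe] at hx hy hxy
      rcases lt_trichotomy (x - c).val (y - c).val with hlt | heq | hlt
      · exact (key x hx y hy hxy hlt).elim
      · have := ZMod.val_injective m heq
        linear_combination this
      · exact (key y hy x hx hxy.symm hlt).elim
    have hle := Finset.card_le_card_of_injOn (t := Finset.range N) _ (by
      intro x hx
      simp only [Finset.mem_coe, Finset.mem_sdiff, Finset.mem_range] at hx ⊢
      exact h x hx.1) hinj
    rw [Finset.card_range] at hle
    have := Finset.le_card_sdiff J1 O
    have hh : Multiset.card J.val = J.card := rfl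
    omega

lemma pairing {m : ℕ} (hm : 2 ≤ m) (O : Finset (ZMod m)) :
    ∃ J : Multiset (ZMod m), J + J.map (· + 1) ≤ O.val ∧
      (O.card ≤ Multiset.card J + m / 2 ∨
        (O.card = m ∧ m % 2 = 1 ∧ O.card ≤ Multiset.card J + m / 2 + 1)) := by
  have : NeZero m := ⟨by omega⟩
  have : Fact (1 < m) := ⟨by omega⟩
  by_cases hev : m % 2 = 0
  · obtain ⟨J, h1, h2⟩ := pair0 hm O 0 (m / 2) (by
      intro x _
      have := ZMod.val_lt (x - 0)
      omega)
    exact ⟨J, h1, Or.inl h2⟩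
  by_cases hO : O = Finset.univ
  · obtain ⟨J, h1, h2⟩ := pair0 hm O 0 (m / 2 + 1) (by
      intro x _
      have := ZMod.val_lt (x - 0)
      omega)
    exact ⟨J, h1, Or.inr ⟨by rw [hO, Finset.card_univ, ZMod.card], by omega, by omega⟩⟩
  obtain ⟨a, ha⟩ : ∃ a, a ∉ O := by
    by_contra hc
    push Not at hc
    exact hO (Finset.eq_univ_iff_forall.2 hc)
  obtain ⟨J, h1, h2⟩ := pair0 hm O (a + 1) (m / 2) (by
    intro x hx
    have h3 := ZMod.val_lt (x - (a + 1))
    have h4 : (x - (a + 1)).val ≠ m - 1 := by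
      intro h5
      have h6 : ((m - 1 : ℕ) : ZMod m) = -1 := by
        rw [Nat.cast_sub (by omega)]; simp
      have h7 : x - (a + 1) = -1 := by
        rw [← h6, ← h5, ZMod.natCast_zmod_val]
      have : x = a := by linear_combination h7
      exact ha (this ▸ hx)
    omega)
  exact ⟨J, h1, Or.inl h2⟩

lemma halving {α : Type*} [DecidableEq α] (S : Multiset α) :
    ∃ (A : Multiset α) (O : Finset α), S = A + A + O.val := by
  induction S using Multiset.induction with
  | empty => exact ⟨0, ∅, by simp⟩
  | cons a S ih =>
    obtain ⟨A, O, rfl⟩ := ih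
    by_cases ha : a ∈ O
    · refine ⟨a ::ₘ A, O.erase a, ?_⟩
      have : O.val = a ::ₘ (O.erase a).val := by
        rw [Finset.erase_val, Multiset.cons_erase (show a ∈ O.val from ha)]
      rw [this]
      simp only [← Multiset.singleton_add]; abel
    · refine ⟨A, insert a O, ?_⟩
      rw [Finset.insert_val_of_notMem ha]
      simp only [← Multiset.singleton_add]; abel

lemma bal_r {m : ℕ} (U V : Multiset (ZMod m)) :
    Bal ((V + U).map DihedralGroup.r) (U.sum - V.sum) :=
  ⟨U, V, 0, 0, rfl, by simp [add_comm], by simp⟩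

lemma bal_sr {m : ℕ} (U V : Multiset (ZMod m)) (h : Multiset.card U = Multiset.card V) :
    Bal ((V + U).map DihedralGroup.sr) (U.sum - V.sum) :=
  ⟨0, 0, V, U, h.symm, by simp, by simp⟩

lemma sum_up {m : ℕ} (J : Multiset (ZMod m)) :
    (J.map (· + 1)).sum = J.sum + (Multiset.card J : ZMod m) := by
  induction J using Multiset.induction with
  | empty => simp
  | cons a J ih => simp [ih]; ring

lemma arith {m a k o1 o2 jr jf : ℕ} (hm : 2 ≤ m) (hk : 1 ≤ k) (h1 : o1 ≤ m) (h2 : o2 ≤ m)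
    (hs : 2 * a + o1 + (2 * k + o2) = 3 * m) (hjr : 2 * jr ≤ o1) (hjf : 2 * jf ≤ o2)
    (hr : o1 ≤ jr + m / 2 ∨ (o1 = m ∧ m % 2 = 1 ∧ o1 ≤ jr + m / 2 + 1))
    (hf : o2 ≤ jf + m / 2 ∨ (o2 = m ∧ m % 2 = 1 ∧ o2 ≤ jf + m / 2 + 1)) :
    ∃ j1 j2 j3 j4 a' c' : ℕ, j1 + j2 ≤ jr ∧ j3 + j4 ≤ jf ∧ j1 + j3 = j2 + j4 ∧ a' ≤ a ∧ c' ≤ k ∧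
      a' + c' + j1 + j2 + j3 + j4 = m ∧ 1 ≤ c' + j3 + j4 := by
  have hw : o1 + o2 ≤ jr + jf + m := by omega
  obtain ⟨s, hs1, hs2, hs3⟩ : ∃ s, 2 * s ≤ jr + jf ∧ m ≤ a + k + 2 * s ∧ 2 * s ≤ m := by
    by_cases ho : o1 + o2 ≤ m
    · exact ⟨0, by omega, by omega, by omega⟩
    · exact ⟨((o1 + o2 - m) / 2 + 1) / 2, by omega, by omega, by omega⟩
  obtain ⟨x, y, hx, hy, hxy⟩ : ∃ x y, x ≤ jr ∧ y ≤ jf ∧ x + y = 2 * s := by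
    by_cases h : 2 * s ≤ jr
    · exact ⟨2 * s, 0, by omega, by omega, by omega⟩
    · exact ⟨jr, 2 * s - jr, by omega, by omega, by omega⟩
  obtain ⟨a', c', ha, hc, hac, hc1⟩ : ∃ a' c', a' ≤ a ∧ c' ≤ k ∧ a' + c' + 2 * s = m ∧
      (1 ≤ c' ∨ 2 * s = m) := by
    by_cases h : m - 2 * s ≤ k
    · exact ⟨0, m - 2 * s, by omega, by omega, by omega, by omega⟩
    · exact ⟨m - 2 * s - k, k, by omega, by omega, by omega, by omega⟩
  by_cases h : x ≤ s
  · exact ⟨x, 0, s - x, s, a', c', by omega, by omega, by omega, ha, hc, by omega, by omega⟩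
  · exact ⟨s, x - s, 0, y, a', c', by omega, by omega, by omega, ha, hc, by omega, by omega⟩

lemma build {m : ℕ} (A J O : Multiset (ZMod m)) (hJ : J + J.map (· + 1) ≤ O) (a i j : ℕ)
    (ha : a ≤ Multiset.card A) (hij : i + j ≤ Multiset.card J) :
    ∃ V U : Multiset (ZMod m), V + U ≤ A + A + O ∧ Multiset.card V = a + i + j ∧
      Multiset.card U = a + i + j ∧ U.sum - V.sum = (i : ZMod m) - (j : ZMod m) := by
  obtain ⟨A', hA', hAc⟩ := exists_sub_card A a ha
  obtain ⟨J', hJ', hJc⟩ := exists_sub_card J (i + j) hij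
  obtain ⟨J1, hJ1, hJc1⟩ := exists_sub_card J' i (by omega)
  obtain ⟨J2, rfl⟩ := Multiset.le_iff_exists_add.1 hJ1
  rw [Multiset.card_add] at hJc
  have hJ2c : Multiset.card J2 = j := by omega
  refine ⟨A' + J1 + J2.map (· + 1), A' + J1.map (· + 1) + J2, ?_, ?_, ?_, ?_⟩
  · calc A' + J1 + J2.map (· + 1) + (A' + J1.map (· + 1) + J2)
        = A' + A' + ((J1 + J2) + (J1 + J2).map (· + 1)) := by
          rw [Multiset.map_add]; abel
      _ ≤ A + A + O := by
          apply add_le_add (add_le_add hA' hA')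
          exact (add_le_add hJ' (Multiset.map_le_map hJ')).trans hJ
  · simp only [Multiset.card_add, Multiset.card_map]; omega
  · simp only [Multiset.card_add, Multiset.card_map]; omega
  · simp only [Multiset.sum_add, sum_up, hJc1, hJ2c]; ring

lemma upper_dup {m : ℕ} (hm : 2 ≤ m) (R F : Multiset (ZMod m))
    (hc : Multiset.card R + Multiset.card F = 3 * m) (hF : ¬ F.Nodup) :
    HasProdOneSubseqOfLen (R.map DihedralGroup.r + F.map DihedralGroup.sr) (2 * m) := by
  have : NeZero m := ⟨by omega⟩
  obtain ⟨A, O1, rfl⟩ := halving R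
  obtain ⟨C, O2, rfl⟩ := halving F
  have hC : 1 ≤ Multiset.card C := by
    by_contra h
    have : C = 0 := Multiset.card_eq_zero.1 (by omega)
    subst this
    exact hF (by simpa using O2.nodup)
  obtain ⟨Jr, hJr, hr⟩ := pairing hm O1
  obtain ⟨Jf, hJf, hf⟩ := pairing hm O2
  have c1 := Multiset.card_le_card hJr
  have c2 := Multiset.card_le_card hJf
  simp only [Multiset.card_add, Multiset.card_map, Finset.card_val] at c1 c2 hc
  have d1 := Finset.card_le_univ O1
  have d2 := Finset.card_le_univ O2
  rw [ZMod.card] at d1 d2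
  obtain ⟨j1, j2, j3, j4, a', c', q1, q2, q3, q4, q5, q6, q7⟩ :=
    arith (a := Multiset.card A) (k := Multiset.card C) hm hC d1 d2 (by omega)
      (by omega) (by omega) hr hf
  obtain ⟨V, U, hVU, hV, hU, hs⟩ := build A Jr O1.val hJr a' j1 j2 q4 q1
  obtain ⟨V', U', hVU', hV', hU', hs'⟩ := build C Jf O2.val hJf c' j3 j4 q5 q2
  refine ⟨(V + U).map DihedralGroup.r + (V' + U').map DihedralGroup.sr,
    add_le_add (Multiset.map_le_map hVU) (Multiset.map_le_map hVU'), ?_, ?_⟩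
  · simp only [Multiset.card_add, Multiset.card_map]; omega
  · apply Bal.prodOne
    · have := (bal_r U V).add (bal_sr U' V' (by omega))
      convert this using 1
      rw [hs, hs']
      have : (j1 : ZMod m) + j3 = j2 + j4 := by exact_mod_cast congrArg (Nat.cast : ℕ → ZMod m) q3
      linear_combination -this
    · have : 0 < Multiset.card V' := by omega
      obtain ⟨b, hb⟩ := Multiset.card_pos_iff_exists_mem.1 this
      exact ⟨b, by simp [hb]⟩

lemma upper {m : ℕ} (hm : 2 ≤ m) (S : Multiset (DihedralGroup m))
    (hc : Multiset.card S = 3 * m) : HasProdOneSubseqOfLen S (2 * m) := by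
  have : NeZero m := ⟨by omega⟩
  obtain ⟨R, F, rfl⟩ := decomp S
  rw [Multiset.card_add, Multiset.card_map, Multiset.card_map] at hc
  have rot : (∃ T ≤ R, Multiset.card T = 2 * m ∧ T.sum = 0) →
      HasProdOneSubseqOfLen (R.map DihedralGroup.r + F.map DihedralGroup.sr) (2 * m) := by
    rintro ⟨T, hT, hTc, hTs⟩
    exact ⟨T.map DihedralGroup.r, (Multiset.map_le_map hT).trans (Multiset.le_add_right _ _),
      by simpa using hTc, prodOne_rot T hTs⟩
  by_cases hF1 : Multiset.card F ≤ 1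
  · apply rot
    apply egz_coset_full ⊤ 0 R (by simp)
    simp only [AddSubgroup.card_top, Nat.card_zmod]
    omega
  by_cases hF : F.Nodup
  swap
  · exact upper_dup hm R F hc hF
  have hfc : Multiset.card F ≤ m := by
    have := Finset.card_le_univ (⟨F, hF⟩ : Finset (ZMod m))
    rwa [ZMod.card] at this
  rcases rot_lemma R (m - Multiset.card F) (by omega) ⟨F, hF⟩
    (by change Multiset.card F + _ = _; omega) (by change 2 ≤ Multiset.card F; omega) with h | h
  · exact rot h
  obtain ⟨U, V, hUV, hU, hV, b, hb, b', hb', hbb, hs⟩ := h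
  refine ⟨(V + U).map DihedralGroup.r + (({b} : Multiset (ZMod m)) + {b'}).map DihedralGroup.sr,
    add_le_add (Multiset.map_le_map ?_) (Multiset.map_le_map ?_), ?_, ?_⟩
  · rwa [add_comm]
  · rw [Multiset.le_iff_subset]
    · intro x hx
      simp only [Multiset.mem_add, Multiset.mem_singleton] at hx
      rcases hx with rfl | rfl
      · exact hb
      · exact hb'
    · rw [Multiset.nodup_add]
      simp [hbb.symm]
  · simp only [Multiset.card_add, Multiset.card_map, Multiset.card_singleton]; omega
  · apply Bal.prodOne
    · have := (bal_r U V).add (bal_sr ({b'} : Multiset (ZMod m)) {b} (by simp))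
      convert this using 1
      rw [hs]; simp
    · exact ⟨b, by simp⟩

/-- For the dihedral group of order `2m` (`m ≥ 2`), `E(D_{2m}) = 3m`. -/
theorem EGZconst_dihedral (m : ℕ) (hm : 2 ≤ m) :
    EGZconst (DihedralGroup m) = 3 * m := by
  have hmem : 3 * m ∈ {t | ∀ S : Multiset (DihedralGroup m), Multiset.card S = t →
      HasProdOneSubseqOfLen S (Nat.card (DihedralGroup m))} := by
    intro S hS
    rw [DihedralGroup.nat_card]
    exact upper hm S hS
  apply le_antisymm
  · exact Nat.sInf_le hmem
  · apply le_csInf ⟨_, hmem⟩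
    intro t ht
    by_contra hlt
    push Not at hlt
    obtain ⟨S, hS, hSc⟩ := exists_sub_card
      (Multiset.replicate (2 * m - 1) (1 : DihedralGroup m) +
      Multiset.replicate (m - 1) (DihedralGroup.r 1) + {DihedralGroup.sr 0}) t (by
        simp only [Multiset.card_add, Multiset.card_replicate, Multiset.card_singleton]; omega)
    obtain ⟨T, hT, hTc, hTp⟩ := ht S hSc
    rw [DihedralGroup.nat_card] at hTc
    exact lower m hm ⟨T, hT.trans hS, hTc, hTp⟩
end
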